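/- arXiv:1406.3422 — 4 statements merged into one kernel-verified Lean document; each statement's English description precedes it below -/
import Mathlib

section
/- Let T > 0 and let E ⊆ (0,T) be a Lebesgue-measurable set with |E| > 0. Assume: (a) admissibility of B: for each τ > 0 there is a constant C(τ) > 0 such that ∫_0^τ ‖B S(t) u₀‖_U² dt ≤ C(τ) ‖u₀‖_X² for all u₀ ∈ D; and (b) observability from time intervals: there are constants d > 0 and k > 0 such that for every L ∈ (0,1] and every u₀ ∈ D, ‖S(L) u₀‖_X² ≤ e^{d / L^k} ∫_0^L ‖B S(t) u₀‖_U² dt. Then there exists a constant C > 0 (depending on E, T, d, k, b, C₀, M, α but not on u₀) such that ‖S(T) u₀‖_X ≤ C ∫_E ‖B S(t) u₀‖_U dt for all u₀ ∈ D. -/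
open MeasureTheory Set

lemma aux_nodes (δ : ℝ) (hδ : 0 < δ) : ∀ (n : ℕ) (F : Set ℝ), BddBelow F →
    ENNReal.ofReal (2 * n * δ) ≤ volume F →
    ∃ t : ℕ → ℝ, (∀ i, i < n → t i ∈ F) ∧ ∀ i, i + 1 < n → t i + δ ≤ t (i + 1) := by
  intro n
  induction n with
  | zero => intro F _ _; exact ⟨fun _ => 0, by simp, by simp⟩
  | succ n ih =>
    intro F hF hvol
    have hne : F.Nonempty := by
      by_contra h
      rw [Set.not_nonempty_iff_eq_empty] at h
      rw [h, measure_empty, nonpos_iff_eq_zero, ENNReal.ofReal_eq_zero] at hvol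
      have : 0 < 2 * ((n + 1 : ℕ) : ℝ) * δ := by positivity
      linarith
    obtain ⟨t0, ht0, ht0'⟩ : ∃ t0 ∈ F, t0 < sInf F + δ :=
      exists_lt_of_csInf_lt hne (by linarith)
    have hsub : F ⊆ (F ∩ Ici (t0 + δ)) ∪ Ico (sInf F) (sInf F + 2 * δ) := by
      intro x hx
      by_cases h : t0 + δ ≤ x
      · exact Or.inl ⟨hx, h⟩
      · exact Or.inr ⟨csInf_le hF hx, by push Not at h; linarith⟩
    have h1 : volume F ≤ volume (F ∩ Ici (t0 + δ)) + ENNReal.ofReal (2 * δ) := by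
      refine (measure_mono hsub).trans ((measure_union_le _ _).trans ?_)
      rw [Real.volume_Ico]
      gcongr
      linarith
    have h2 : ENNReal.ofReal (2 * n * δ) ≤ volume (F ∩ Ici (t0 + δ)) := by
      have h3 := hvol.trans h1
      have h4 : (2 * ((n + 1 : ℕ) : ℝ) * δ) = 2 * n * δ + 2 * δ := by push_cast; ring
      rw [h4, ENNReal.ofReal_add (by positivity) (by positivity)] at h3
      exact (ENNReal.add_le_add_iff_right ENNReal.ofReal_ne_top).1 h3
    obtain ⟨t, ht, hs⟩ := ih _ (hF.mono inter_subset_left) h2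
    refine ⟨fun i => Nat.casesOn i t0 t, ?_, ?_⟩
    · intro i hi
      cases i with
      | zero => exact ht0
      | succ i => exact (ht i (by omega)).1
    · intro i hi
      cases i with
      | zero => exact (ht 0 (by omega)).2
      | succ i => exact hs i (by omega)

lemma aux_sep (δ : ℝ) (n : ℕ) (t : ℕ → ℝ)
    (hs : ∀ i, i + 1 < n → t i + δ ≤ t (i + 1)) :
    ∀ i j, i < n → j < n → δ * |(i : ℝ) - j| ≤ |t i - t j| := by
  have key : ∀ m i, i + m < n → t i + δ * m ≤ t (i + m) := by
    intro m
    induction m with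
    | zero => intro i _; simp
    | succ m ih =>
      intro i hi
      have h1 := ih i (by omega)
      have h2 := hs (i + m) (by omega)
      rw [← add_assoc]; push_cast; linarith
  have key2 : ∀ i j, i ≤ j → j < n → δ * |(i : ℝ) - j| ≤ |t i - t j| := by
    intro i j hij hj
    obtain ⟨m, rfl⟩ := Nat.exists_eq_add_of_le hij
    have := key m i hj
    rw [abs_sub_comm (t i)]
    refine le_trans ?_ (le_abs_self _)
    push_cast
    rw [show (i : ℝ) - (i + m) = -m by ring, abs_neg, abs_of_nonneg (by positivity)]
    linarith
  intro i j hi hj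
  rcases le_total i j with h | h
  · exact key2 i j h hj
  · rw [abs_sub_comm, abs_sub_comm (t i)]; exact key2 j i h hi

lemma aux_prod (i m : ℕ) :
    ∏ j ∈ (Finset.range (i + 1 + m)).erase i, |(i : ℝ) - j| = (i.factorial : ℝ) * m.factorial := by
  induction m with
  | zero =>
    rw [add_zero, Finset.range_add_one, Finset.erase_insert (by simp)]
    simp only [Nat.factorial_zero, Nat.cast_one, mul_one]
    rw [← Finset.prod_range_reflect, ← Finset.prod_range_add_one_eq_factorial]
    push_cast
    refine Finset.prod_congr rfl fun j hj => ?_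
    rw [Finset.mem_range] at hj
    rw [Nat.cast_sub (by omega), Nat.cast_sub (by omega)]
    push_cast
    rw [show (i : ℝ) - (i - 1 - j) = j + 1 by ring, abs_of_nonneg (by positivity)]
  | succ m ih =>
    rw [← add_assoc, Finset.range_add_one, Finset.erase_insert_of_ne (by omega),
      Finset.prod_insert (by simp), ih, Nat.factorial_succ]
    push_cast
    rw [show (i : ℝ) - (i + 1 + m) = -(m + 1) by ring, abs_neg, abs_of_nonneg (by positivity)]
    ring

lemma aux_fact (n : ℕ) : ((n : ℝ) + 1) ^ (n + 1) ≤ (Real.exp 1) ^ (n + 1) * (n + 1).factorial := by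
  have := Real.pow_div_factorial_le_exp ((n : ℝ) + 1) (by positivity) (n + 1)
  rw [div_le_iff₀ (by positivity)] at this
  rw [← Real.exp_nat_mul]
  push_cast at *
  simpa using this

/-- Lagrange interpolation at `n + 1` separated nodes. -/
lemma aux_lagrange (n : ℕ) (a w : ℝ) (hw : 0 < w) (t : ℕ → ℝ)
    (ht : ∀ i, i < n + 1 → t i ∈ Icc a (a + w))
    (hs : ∀ i j, i < n + 1 → j < n + 1 → w / (8 * (n + 1)) * |(i : ℝ) - j| ≤ |t i - t j|)
    (τ : ℝ) (hτ : τ ∈ Icc a (a + w)) :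
    ∃ l : ℕ → ℝ, (∑ i ∈ Finset.range (n + 1), |l i| ≤ 100 ^ (n + 1)) ∧
      ∀ j, j < n + 1 → ∑ i ∈ Finset.range (n + 1), l i * (t i - a) ^ j = (τ - a) ^ j := by
  have hinj : Set.InjOn t (Finset.range (n + 1)) := by
    intro i hi j hj hij
    simp only [Finset.coe_range, mem_Iio] at hi hj
    have h := hs i j hi hj
    rw [hij, sub_self, abs_zero] at h
    have h0 : 0 < w / (8 * ((n : ℝ) + 1)) := by positivity
    have h1 : |(i : ℝ) - j| ≤ 0 := by
      by_contra hc
      push Not at hc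
      have := mul_pos h0 hc
      linarith
    have h2 : (i : ℝ) - j = 0 := abs_nonpos_iff.1 h1
    exact_mod_cast sub_eq_zero.1 h2
  refine ⟨fun i => (Lagrange.basis (Finset.range (n + 1)) t i).eval τ, ?_, ?_⟩
  · have hb : ∀ i ∈ Finset.range (n + 1),
        |(Lagrange.basis (Finset.range (n + 1)) t i).eval τ| ≤ 16 ^ n * Real.exp 1 ^ (n + 1) := by
      intro i hi
      rw [Finset.mem_range] at hi
      obtain ⟨m, rfl⟩ : ∃ m, n = i + m := Nat.exists_eq_add_of_le (by omega)
      have e1 : (Lagrange.basis (Finset.range (i + m + 1)) t i).eval τ =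
          ∏ j ∈ (Finset.range (i + m + 1)).erase i, ((t i - t j)⁻¹ * (τ - t j)) := by
        simp [Lagrange.basis, Lagrange.basisDivisor, Polynomial.eval_prod]
      have hcard : ((Finset.range (i + m + 1)).erase i).card = i + m := by
        rw [Finset.card_erase_of_mem (by simp)]; simp
      have hprod := aux_prod i m
      rw [show i + 1 + m = i + m + 1 by ring] at hprod
      rw [e1, Finset.abs_prod]
      have step : ∏ j ∈ (Finset.range (i + m + 1)).erase i, |(t i - t j)⁻¹ * (τ - t j)| ≤
          ∏ j ∈ (Finset.range (i + m + 1)).erase i,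
            ((8 * (((i + m : ℕ) : ℝ) + 1)) * |(i : ℝ) - j|⁻¹) := by
        refine Finset.prod_le_prod (fun _ _ => abs_nonneg _) fun j hj => ?_
        rw [Finset.mem_erase, Finset.mem_range] at hj
        have h1 := hs i j (by omega) hj.2
        have h2 : |τ - t j| ≤ w := by
          have := ht j hj.2
          rw [abs_le]; constructor <;> linarith [this.1, this.2, hτ.1, hτ.2]
        have h3 : 0 < |(i : ℝ) - j| := by
          rw [abs_pos, sub_ne_zero]; exact_mod_cast (Ne.symm hj.1)
        have h4 : 0 < w / (8 * (((i + m : ℕ) : ℝ) + 1)) * |(i : ℝ) - j| := by positivity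
        rw [abs_mul, abs_inv]
        calc |t i - t j|⁻¹ * |τ - t j|
            ≤ (w / (8 * (((i + m : ℕ) : ℝ) + 1)) * |(i : ℝ) - j|)⁻¹ * w := by gcongr
          _ = _ := by field_simp
      refine step.trans ?_
      rw [Finset.prod_mul_distrib, Finset.prod_const, hcard, Finset.prod_inv_distrib, hprod]
      have hc : ((i + m).factorial : ℝ) ≤ 2 ^ (i + m) * (i.factorial * m.factorial) := by
        have h1 := Nat.add_choose_mul_factorial_mul_factorial i m
        have h2 := Nat.choose_le_two_pow (i + m) m
        rw [← h1, mul_assoc]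
        push_cast
        gcongr
        exact_mod_cast h2
      have hf := aux_fact (i + m)
      rw [Nat.factorial_succ, pow_succ _ (i + m)] at hf
      set N := i + m
      have hN : (0 : ℝ) < (N : ℝ) + 1 := by positivity
      have hf2 : ((N : ℝ) + 1) ^ N ≤ Real.exp 1 ^ (N + 1) * N.factorial := by
        push_cast at hf
        refine le_of_mul_le_mul_right (hf.trans (le_of_eq ?_)) hN
        ring
      rw [← div_eq_mul_inv, div_le_iff₀ (by positivity), mul_pow]
      calc (8 : ℝ) ^ N * ((N : ℝ) + 1) ^ N ≤ 8 ^ N * (Real.exp 1 ^ (N + 1) * N.factorial) := by gcongr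
        _ ≤ 8 ^ N * (Real.exp 1 ^ (N + 1) * (2 ^ N * (i.factorial * m.factorial))) := by gcongr
        _ = 16 ^ N * Real.exp 1 ^ (N + 1) * (i.factorial * m.factorial) := by
          rw [show (16 : ℝ) = 8 * 2 by norm_num, mul_pow]; ring
    refine (Finset.sum_le_sum hb).trans ?_
    rw [Finset.sum_const, Finset.card_range, nsmul_eq_mul]
    have h2 : ((n + 1 : ℕ) : ℝ) ≤ 2 ^ (n + 1) := by
      exact_mod_cast (Nat.lt_two_pow_self (n := n + 1)).le
    have h16 : (16 : ℝ) ^ n ≤ 16 ^ (n + 1) := pow_le_pow_right₀ (by norm_num) (by omega)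
    calc ((n + 1 : ℕ) : ℝ) * (16 ^ n * Real.exp 1 ^ (n + 1))
        ≤ 2 ^ (n + 1) * (16 ^ (n + 1) * Real.exp 1 ^ (n + 1)) := by gcongr
      _ = (32 * Real.exp 1) ^ (n + 1) := by rw [← mul_pow, ← mul_pow]; ring
      _ ≤ 100 ^ (n + 1) := by gcongr; linarith [Real.exp_one_lt_three]
  · intro j hj
    have h := Lagrange.eq_interpolate (f := (Polynomial.X - Polynomial.C a) ^ j) hinj (by
      rw [Polynomial.degree_pow, Polynomial.degree_X_sub_C, Finset.card_range]
      simp only [nsmul_eq_mul, mul_one]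
      exact_mod_cast hj)
    have h2 := congrArg (Polynomial.eval τ) h
    rw [Lagrange.interpolate_apply, Polynomial.eval_finsetSum] at h2
    simp only [Polynomial.eval_pow, Polynomial.eval_sub, Polynomial.eval_X, Polynomial.eval_C,
      Polynomial.eval_mul] at h2
    rw [h2]
    exact Finset.sum_congr rfl fun i _ => mul_comm _ _

lemma aux_interp {X : Type*} [NormedAddCommGroup X] [NormedSpace ℝ X]
    (f : ℝ → X) (hf : ContDiffOn ℝ (⊤ : ℕ∞) f (Ioi 0)) (n : ℕ) (a w K : ℝ) (ha : 0 < a) (hw : 0 < w)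
    (hK : ∀ y ∈ Icc a (a + w), ‖iteratedDeriv (n + 1) f y‖ ≤ K) (t l : ℕ → ℝ)
    (ht : ∀ i, i < n + 1 → t i ∈ Icc a (a + w)) (τ : ℝ) (hτ : τ ∈ Icc a (a + w))
    (hl : ∑ i ∈ Finset.range (n + 1), |l i| ≤ 100 ^ (n + 1))
    (hl2 : ∀ j, j < n + 1 → ∑ i ∈ Finset.range (n + 1), l i * (t i - a) ^ j = (τ - a) ^ j) :
    ‖f τ - ∑ i ∈ Finset.range (n + 1), l i • f (t i)‖ ≤
      (1 + 100 ^ (n + 1)) * (K * w ^ (n + 1) / n.factorial) := by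
  have hsub : Icc a (a + w) ⊆ Ioi 0 := fun y hy => lt_of_lt_of_le ha hy.1
  have hK0 : 0 ≤ K := (norm_nonneg _).trans (hK τ hτ)
  set P := taylorWithinEval f n (Icc a (a + w)) a with hP
  have hrem : ∀ x ∈ Icc a (a + w), ‖f x - P x‖ ≤ K * w ^ (n + 1) / n.factorial := by
    intro x hx
    have h := taylor_mean_remainder_bound (f := f) (n := n) (C := K) (by linarith : a ≤ a + w)
      ((hf.mono hsub).of_le (by exact_mod_cast le_top)) hx (by
        intro y hy
        rw [iteratedDerivWithin_eq_iteratedDeriv (uniqueDiffOn_Icc (by linarith)) _ hy]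
        · exact hK y hy
        · exact (hf.contDiffAt (Ioi_mem_nhds (hsub hy))).of_le (by exact_mod_cast le_top))
    refine h.trans ?_
    have h1 : 0 ≤ x - a := by linarith [hx.1]
    have h2 : x - a ≤ w := by linarith [hx.2]
    gcongr
  have hPe : P τ = ∑ i ∈ Finset.range (n + 1), l i • P (t i) := by
    simp only [hP, taylor_within_apply, Finset.smul_sum, smul_smul]
    rw [Finset.sum_comm]
    refine Finset.sum_congr rfl fun j hj => ?_
    rw [← Finset.sum_smul, ← hl2 j (Finset.mem_range.1 hj), Finset.mul_sum]
    congr 1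
    exact Finset.sum_congr rfl fun i _ => by ring
  have e : f τ - ∑ i ∈ Finset.range (n + 1), l i • f (t i) =
      (f τ - P τ) - ∑ i ∈ Finset.range (n + 1), l i • (f (t i) - P (t i)) := by
    simp only [smul_sub, Finset.sum_sub_distrib]
    rw [← hPe]; abel
  rw [e]
  refine (norm_sub_le _ _).trans ?_
  rw [add_mul, one_mul]
  refine add_le_add (hrem τ hτ) ((norm_sum_le _ _).trans ?_)
  have hR : 0 ≤ K * w ^ (n + 1) / n.factorial := by positivity
  calc ∑ i ∈ Finset.range (n + 1), ‖l i • (f (t i) - P (t i))‖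
      ≤ ∑ i ∈ Finset.range (n + 1), |l i| * (K * w ^ (n + 1) / n.factorial) := by
        refine Finset.sum_le_sum fun i hi => ?_
        rw [norm_smul, Real.norm_eq_abs]
        exact mul_le_mul_of_nonneg_left (hrem _ (ht i (Finset.mem_range.1 hi))) (abs_nonneg _)
    _ = (∑ i ∈ Finset.range (n + 1), |l i|) * (K * w ^ (n + 1) / n.factorial) := by
        rw [Finset.sum_mul]
    _ ≤ _ := by gcongr

lemma aux_num1 (n : ℕ) (C₀ L c : ℝ) (hC : 1 ≤ C₀) (hL : 0 < L) (hL1 : L ≤ 1) (hc : 0 < c) :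
    (2 * C₀ * (n + 1) / L) ^ (n + 1) * (c * L) ^ (n + 1) / n.factorial ≤
      (6 * C₀ / L) * (24 * C₀ * c) ^ (n + 1) := by
  have h1 := aux_fact n
  have he : Real.exp 1 ^ (n + 1) ≤ 3 ^ (n + 1) := by
    gcongr; exact Real.exp_one_lt_three.le
  have h2 : ((n : ℝ) + 1) ≤ 2 ^ (n + 1) := by
    exact_mod_cast (Nat.lt_two_pow_self (n := n + 1)).le
  have h3 : ((n : ℝ) + 1) ^ (n + 1) ≤ 6 ^ (n + 1) * n.factorial := by
    calc ((n : ℝ) + 1) ^ (n + 1) ≤ Real.exp 1 ^ (n + 1) * (n + 1).factorial := h1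
      _ ≤ 3 ^ (n + 1) * (n + 1).factorial := by gcongr
      _ = 3 ^ (n + 1) * ((n + 1) * n.factorial) := by rw [Nat.factorial_succ]; push_cast; ring
      _ ≤ 3 ^ (n + 1) * (2 ^ (n + 1) * n.factorial) := by gcongr
      _ = 6 ^ (n + 1) * n.factorial := by
        rw [show (6 : ℝ) = 3 * 2 by norm_num, mul_pow]; ring
  rw [div_le_iff₀ (by positivity), ← mul_pow,
    show 2 * C₀ * ((n : ℝ) + 1) / L * (c * L) = (2 * C₀ * c) * (n + 1) by field_simp, mul_pow]
  have h4 : (1 : ℝ) ≤ 6 * C₀ / L := by rw [le_div_iff₀ hL]; linarith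
  calc (2 * C₀ * c) ^ (n + 1) * ((n : ℝ) + 1) ^ (n + 1)
      ≤ (2 * C₀ * c) ^ (n + 1) * (6 ^ (n + 1) * n.factorial) := by gcongr
    _ = (12 * C₀ * c) ^ (n + 1) * n.factorial := by
      rw [← mul_assoc, ← mul_pow]; ring_nf
    _ ≤ (24 * C₀ * c) ^ (n + 1) * n.factorial := by gcongr; norm_num
    _ ≤ (6 * C₀ / L) * (24 * C₀ * c) ^ (n + 1) * n.factorial := by
      have : 0 ≤ (24 * C₀ * c) ^ (n + 1) := by positivity
      have := le_mul_of_one_le_left this h4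
      gcongr

lemma aux_num2 (n : ℕ) (C₀ L c : ℝ) (hC : 1 ≤ C₀) (hL : 0 < L) (hc : 0 < c) :
    (2 * C₀ * (n + 2) / L) ^ (n + 2) * (c * L) ^ (n + 1) / n.factorial ≤
      (6 * C₀ / L) * (24 * C₀ * c) ^ (n + 1) := by
  have h1 := aux_fact (n + 1)
  have he : Real.exp 1 ^ (n + 2) ≤ 3 ^ (n + 2) := by
    gcongr; exact Real.exp_one_lt_three.le
  have h2 : ((n : ℝ) + 2) ≤ 2 ^ (n + 1) := by
    exact_mod_cast (Nat.lt_two_pow_self (n := n + 1))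
  have h2' : ((n : ℝ) + 1) ≤ 2 ^ (n + 1) := by linarith
  have h3 : ((n : ℝ) + 2) ^ (n + 2) ≤ 3 * 12 ^ (n + 1) * n.factorial := by
    calc ((n : ℝ) + 2) ^ (n + 2) = (((n + 1 : ℕ) : ℝ) + 1) ^ (n + 1 + 1) := by push_cast; ring
      _ ≤ Real.exp 1 ^ (n + 2) * (n + 2).factorial := h1
      _ ≤ 3 ^ (n + 2) * (n + 2).factorial := by gcongr
      _ = 3 ^ (n + 2) * ((n + 2) * ((n + 1) * n.factorial)) := by
        rw [Nat.factorial_succ, Nat.factorial_succ]; push_cast; ring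
      _ ≤ 3 ^ (n + 2) * (2 ^ (n + 1) * (2 ^ (n + 1) * n.factorial)) := by gcongr
      _ = 3 * 12 ^ (n + 1) * n.factorial := by
        rw [show (12 : ℝ) = 3 * 2 * 2 by norm_num, mul_pow, mul_pow]; ring
  rw [div_le_iff₀ (by positivity), pow_succ _ (n + 1), mul_right_comm, ← mul_pow,
    show 2 * C₀ * ((n : ℝ) + 2) / L * (c * L) = (2 * C₀ * c) * (n + 2) by field_simp, mul_pow]
  calc (2 * C₀ * c) ^ (n + 1) * ((n : ℝ) + 2) ^ (n + 1) * (2 * C₀ * (n + 2) / L)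
      = (2 * C₀ * c) ^ (n + 1) * (2 * C₀ / L) * ((n : ℝ) + 2) ^ (n + 2) := by ring
    _ ≤ (2 * C₀ * c) ^ (n + 1) * (2 * C₀ / L) * (3 * 12 ^ (n + 1) * n.factorial) := by gcongr
    _ = (6 * C₀ / L) * (24 * C₀ * c) ^ (n + 1) * n.factorial := by
      rw [show 24 * C₀ * c = 2 * C₀ * c * 12 by ring, mul_pow _ (12 : ℝ)]; ring

lemma aux_point {X U : Type*}
    [NormedAddCommGroup X] [InnerProductSpace ℝ X]
    [NormedAddCommGroup U] [InnerProductSpace ℝ U]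
    (S : ℝ → X →L[ℝ] X)
    (hSsmooth : ∀ x : X, ContDiffOn ℝ (⊤ : ℕ∞) (fun s => S s x) (Set.Ioi 0))
    (C₀ : ℝ) (hC₀ : 1 ≤ C₀)
    (hSderiv : ∀ (x : X) (m : ℕ) (t : ℝ), 1 ≤ m → 0 < t → t ≤ 1 →
      ‖iteratedDeriv m (fun s => S s x) t‖ ≤ (C₀ * m / t) ^ m * ‖x‖)
    (D : Submodule ℝ X) (A : X →ₗ[ℝ] X) (B : X →ₗ[ℝ] U)
    (hD : ∀ (x : X) (m : ℕ) (t : ℝ), 0 < t → iteratedDeriv m (fun s => S s x) t ∈ D)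
    (hA : ∀ (x : X) (m : ℕ) (t : ℝ), 0 < t →
      A (iteratedDeriv m (fun s => S s x) t) = iteratedDeriv (m + 1) (fun s => S s x) t)
    (b : ℝ) (hb : 0 < b)
    (hB : ∀ v ∈ D, ‖B v‖ ≤ b * (‖A v‖ + ‖v‖))
    (L c : ℝ) (hL : 0 < L) (hL1 : L ≤ 1) (hc : c = 1 / (4800 * C₀)) (x : X)
    (F : Set ℝ) (hF : F ⊆ Icc (L / 2) (L / 2 + c * L))
    (hFv : ENNReal.ofReal (c * L / 4) ≤ volume F) (θ : ℝ)
    (hθ : ∀ t ∈ F, ‖B (S t x)‖ ≤ θ) (n : ℕ) (τ : ℝ) (hτ : τ ∈ Icc (L / 2) (L / 2 + c * L)) :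
    ‖B (S τ x)‖ ≤ 100 ^ (n + 1) * θ + 24 * b * C₀ / L * (1 / 2) ^ (n + 1) * ‖x‖ := by
  have hC0 : 0 < C₀ := by linarith
  have hc0 : 0 < c := by rw [hc]; positivity
  have hc1 : c ≤ 1 / 2 := by
    rw [hc, div_le_div_iff₀ (by positivity) (by norm_num)]; linarith
  have hcC : 24 * C₀ * c * 100 = 1 / 2 := by rw [hc]; field_simp; norm_num
  have hw : 0 < c * L := by positivity
  have ha : 0 < L / 2 := by positivity
  have hcL : c * L ≤ L / 2 := by nlinarith
  set f : ℝ → X := fun s => S s x with hfdef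
  set δ := c * L / (8 * ((n : ℝ) + 1)) with hδ
  have hδ0 : 0 < δ := by positivity
  obtain ⟨t, htF, hts⟩ := aux_nodes δ hδ0 (n + 1) F ⟨L / 2, fun y hy => (hF hy).1⟩ (by
    convert hFv using 2
    rw [hδ]; push_cast; field_simp; norm_num)
  have ht : ∀ i, i < n + 1 → t i ∈ Icc (L / 2) (L / 2 + c * L) := fun i hi => hF (htF i hi)
  obtain ⟨l, hl, hl2⟩ := aux_lagrange n (L / 2) (c * L) hw t ht (aux_sep δ (n + 1) t hts) τ hτ
  have hpos : ∀ y ∈ Icc (L / 2) (L / 2 + c * L), 0 < y ∧ y ≤ 1 ∧ L / 2 ≤ y := by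
    intro y hy
    exact ⟨by linarith [hy.1], by linarith [hy.2], hy.1⟩
  have hder : ∀ m : ℕ, 1 ≤ m → ∀ y ∈ Icc (L / 2) (L / 2 + c * L),
      ‖iteratedDeriv m f y‖ ≤ (2 * C₀ * m / L) ^ m * ‖x‖ := by
    intro m hm y hy
    obtain ⟨h0, h1, h2⟩ := hpos y hy
    refine (hSderiv x m y hm h0 h1).trans ?_
    have : C₀ * m / y ≤ 2 * C₀ * m / L := by
      rw [div_le_div_iff₀ h0 hL]
      have : 0 ≤ C₀ * m := by positivity
      nlinarith
    gcongr
  have hmem : ∀ y, 0 < y → f y ∈ D := by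
    intro y hy
    simpa using hD x 0 y hy
  have hAf : ∀ y, 0 < y → A (f y) = deriv f y := by
    intro y hy
    simpa using hA x 0 y hy
  set R := f τ - ∑ i ∈ Finset.range (n + 1), l i • f (t i) with hR
  set ρ := (1 + 100 ^ (n + 1)) * ((6 * C₀ / L) * (24 * C₀ * c) ^ (n + 1) * ‖x‖) with hρ
  have hR1 : ‖R‖ ≤ ρ := by
    refine (aux_interp f (hSsmooth x) n (L / 2) (c * L) _ ha hw (hder (n + 1) (by omega)) t l ht τ
      hτ hl hl2).trans ?_
    have := aux_num1 n C₀ L c hC₀ hL hL1 hc0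
    rw [hρ]
    gcongr ?_ * ?_
    calc (2 * C₀ * ((n + 1 : ℕ) : ℝ) / L) ^ (n + 1) * ‖x‖ * (c * L) ^ (n + 1) / n.factorial
        = ((2 * C₀ * (n + 1) / L) ^ (n + 1) * (c * L) ^ (n + 1) / n.factorial) * ‖x‖ := by
          push_cast; ring
      _ ≤ _ := by gcongr
  have hAR : A R = deriv f τ - ∑ i ∈ Finset.range (n + 1), l i • deriv f (t i) := by
    rw [hR, map_sub, map_sum, hAf τ (hpos τ hτ).1]
    congr 1
    refine Finset.sum_congr rfl fun i hi => ?_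
    rw [map_smul, hAf _ (hpos _ (ht i (Finset.mem_range.1 hi))).1]
  have hR2 : ‖A R‖ ≤ ρ := by
    rw [hAR]
    refine (aux_interp (deriv f) ((hSsmooth x).deriv_of_isOpen isOpen_Ioi (by simp)) n (L / 2)
      (c * L) ((2 * C₀ * ((n + 2 : ℕ) : ℝ) / L) ^ (n + 2) * ‖x‖) ha hw ?_ t l ht τ
      hτ hl hl2).trans ?_
    · intro y hy
      rw [← iteratedDeriv_succ']
      exact hder (n + 2) (by omega) y hy
    have := aux_num2 n C₀ L c hC₀ hL hc0
    rw [hρ]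
    gcongr ?_ * ?_
    calc (2 * C₀ * ((n + 2 : ℕ) : ℝ) / L) ^ (n + 2) * ‖x‖ * (c * L) ^ (n + 1) / n.factorial
        = ((2 * C₀ * (n + 2) / L) ^ (n + 2) * (c * L) ^ (n + 1) / n.factorial) * ‖x‖ := by
          push_cast; ring
      _ ≤ _ := by gcongr
  have hRD : R ∈ D := by
    refine D.sub_mem (hmem τ (hpos τ hτ).1) (D.sum_mem fun i hi => D.smul_mem _ ?_)
    exact hmem _ (hpos _ (ht i (Finset.mem_range.1 hi))).1
  have hBR : ‖B R‖ ≤ 24 * b * C₀ / L * (1 / 2) ^ (n + 1) * ‖x‖ := by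
    have h1 : (1 : ℝ) ≤ 100 ^ (n + 1) := one_le_pow₀ (by norm_num)
    calc ‖B R‖ ≤ b * (‖A R‖ + ‖R‖) := hB R hRD
      _ ≤ b * (ρ + ρ) := by gcongr
      _ ≤ b * (2 * ((2 * 100 ^ (n + 1)) * ((6 * C₀ / L) * (24 * C₀ * c) ^ (n + 1) * ‖x‖))) := by
        rw [hρ, ← two_mul]; gcongr; linarith
      _ = 24 * b * C₀ / L * (24 * C₀ * c * 100) ^ (n + 1) * ‖x‖ := by
        rw [mul_pow _ (100 : ℝ)]; ring
      _ = _ := by rw [hcC]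
  have hdec : B (f τ) = ∑ i ∈ Finset.range (n + 1), l i • B (f (t i)) + B R := by
    rw [hR, map_sub, map_sum]; simp only [map_smul]; abel
  have hθ0 : 0 ≤ θ := (norm_nonneg _).trans (hθ _ (htF 0 (by omega)))
  change ‖B (f τ)‖ ≤ _
  rw [hdec]
  refine (norm_add_le _ _).trans (add_le_add ((norm_sum_le _ _).trans ?_) hBR)
  calc ∑ i ∈ Finset.range (n + 1), ‖l i • B (f (t i))‖
      ≤ ∑ i ∈ Finset.range (n + 1), |l i| * θ := by
        refine Finset.sum_le_sum fun i hi => ?_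
        rw [norm_smul, Real.norm_eq_abs]
        exact mul_le_mul_of_nonneg_left (hθ _ (htF i (Finset.mem_range.1 hi))) (abs_nonneg _)
    _ = (∑ i ∈ Finset.range (n + 1), |l i|) * θ := by rw [Finset.sum_mul]
    _ ≤ _ := by gcongr

lemma aux_inv_le (k : ℝ) (hk : 0 < k) : ∃ m : ℕ, ∀ L : ℝ, 0 < L → L ≤ 1 →
    1 / L ≤ m.factorial * Real.exp (1 / L ^ k) := by
  obtain ⟨m, hm⟩ := exists_nat_ge (1 / k)
  refine ⟨m, fun L hL hL1 => ?_⟩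
  have hLk : 0 < L ^ k := Real.rpow_pos_of_pos hL k
  have hLk1 : L ^ k ≤ 1 := Real.rpow_le_one hL.le hL1 hk.le
  have hy : 1 ≤ 1 / L ^ k := by rw [le_div_iff₀ hLk]; linarith
  have e : 1 / L = (1 / L ^ k) ^ (1 / k) := by
    rw [Real.div_rpow zero_le_one hLk.le, Real.one_rpow, ← Real.rpow_mul hL.le,
      mul_one_div_cancel hk.ne', Real.rpow_one]
  have h1 := Real.rpow_le_rpow_of_exponent_le hy hm
  rw [Real.rpow_natCast] at h1
  have h2 := Real.pow_div_factorial_le_exp (1 / L ^ k) (by positivity) m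
  rw [div_le_iff₀ (by positivity)] at h2
  rw [e]
  linarith

lemma aux_step {X U : Type*}
    [NormedAddCommGroup X] [InnerProductSpace ℝ X]
    [NormedAddCommGroup U] [InnerProductSpace ℝ U]
    (S : ℝ → X →L[ℝ] X)
    (hSsemi : ∀ t s : ℝ, 0 ≤ t → 0 ≤ s → S (t + s) = (S t).comp (S s))
    (M α : ℝ) (hM : 1 ≤ M) (hα : 0 ≤ α)
    (hSbound : ∀ t : ℝ, 0 ≤ t → ∀ x : X, ‖S t x‖ ≤ M * Real.exp (α * t) * ‖x‖)
    (hSsmooth : ∀ x : X, ContDiffOn ℝ (⊤ : ℕ∞) (fun s => S s x) (Set.Ioi 0))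
    (C₀ : ℝ) (hC₀ : 1 ≤ C₀)
    (hSderiv : ∀ (x : X) (m : ℕ) (t : ℝ), 1 ≤ m → 0 < t → t ≤ 1 →
      ‖iteratedDeriv m (fun s => S s x) t‖ ≤ (C₀ * m / t) ^ m * ‖x‖)
    (D : Submodule ℝ X) (A : X →ₗ[ℝ] X) (B : X →ₗ[ℝ] U)
    (hD : ∀ (x : X) (m : ℕ) (t : ℝ), 0 < t → iteratedDeriv m (fun s => S s x) t ∈ D)
    (hA : ∀ (x : X) (m : ℕ) (t : ℝ), 0 < t →
      A (iteratedDeriv m (fun s => S s x) t) = iteratedDeriv (m + 1) (fun s => S s x) t)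
    (b : ℝ) (hb : 0 < b)
    (hB : ∀ v ∈ D, ‖B v‖ ≤ b * (‖A v‖ + ‖v‖))
    (d k : ℝ) (hd : 0 < d) (hk : 0 < k)
    (hobs : ∀ L : ℝ, 0 < L → L ≤ 1 → ∀ u₀ ∈ D,
      ‖S L u₀‖ ^ 2 ≤ Real.exp (d / L ^ k) * ∫ t in (0:ℝ)..L, ‖B (S t u₀)‖ ^ 2) :
    ∃ C > 0, ∃ ε > 0, ∀ (L : ℝ) (x : X) (G : Set ℝ) (n : ℕ), 0 < L → L ≤ 1 → MeasurableSet G →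
      volume (Ioo 0 L \ G) ≤ ENNReal.ofReal (ε * L) →
      IntegrableOn (fun t => ‖B (S t x)‖) G →
      ‖S L x‖ ≤ Real.exp (C / L ^ k) *
        (100 ^ (n + 1) * (∫ t in G, ‖B (S t x)‖) + (1 / 2) ^ (n + 1) * ‖x‖) := by
  obtain ⟨m, hm⟩ := aux_inv_le k hk
  obtain ⟨c, hc⟩ : ∃ c, c = 1 / (4800 * C₀) := ⟨_, rfl⟩
  have hC0 : 0 < C₀ := by linarith
  have hM0 : 0 < M := by linarith
  have hc0 : 0 < c := by rw [hc]; positivity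
  have hc1 : c ≤ 1 / 4 := by
    rw [hc, div_le_div_iff₀ (by positivity) (by norm_num)]; linarith
  set P := M * Real.exp α * (4 / c + 24 * b * C₀) with hP
  have hP0 : 0 < P := by positivity
  set P' := P * m.factorial with hP'
  have hP'0 : 0 < P' := by positivity
  have hck : 0 < c ^ k := Real.rpow_pos_of_pos hc0 k
  refine ⟨d / c ^ k + 1 + P', by positivity, c / 2, by positivity, ?_⟩
  intro L x G n hL hL1 hG hvol hint
  set I := ∫ t in G, ‖B (S t x)‖ with hI
  have hI0 : 0 ≤ I := integral_nonneg fun _ => norm_nonneg _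
  have hcL : c * L ≤ L / 4 := by nlinarith
  have hcL0 : 0 < c * L := by positivity
  -- pointwise bound
  have hpt : ∀ τ ∈ Icc (L / 2) (L / 2 + c * L),
      ‖B (S τ x)‖ ≤ 100 ^ (n + 1) * (4 * I / (c * L)) +
        24 * b * C₀ / L * (1 / 2) ^ (n + 1) * ‖x‖ := by
    intro τ hτ
    refine le_of_forall_pos_le_add fun ξ hξ => ?_
    set θ := 4 * I / (c * L) + ξ / 100 ^ (n + 1) with hθ
    have hθ0 : 0 < θ := by positivity
    set F := {t | t ∈ Icc (L / 2) (L / 2 + c * L) ∧ ‖B (S t x)‖ ≤ θ} with hFdef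
    have hbad : volume ({t | θ ≤ ‖B (S t x)‖} ∩ G) ≤ ENNReal.ofReal (c * L / 4) := by
      rw [← Measure.restrict_apply' hG]
      have h1 := mul_meas_ge_le_integral_of_nonneg (μ := volume.restrict G)
        (f := fun t => ‖B (S t x)‖) (Filter.Eventually.of_forall fun _ => norm_nonneg _) hint θ
      have h2 := hint.measure_ge_lt_top hθ0
      rw [← ENNReal.ofReal_toReal h2.ne]
      refine ENNReal.ofReal_le_ofReal ?_
      change (volume.restrict G).real {t | θ ≤ ‖B (S t x)‖} ≤ _
      have h3 : I ≤ θ * (c * L / 4) := by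
        rw [hθ, add_mul]
        have : 4 * I / (c * L) * (c * L / 4) = I := by field_simp
        rw [this]
        have : 0 ≤ ξ / 100 ^ (n + 1) * (c * L / 4) := by positivity
        linarith
      exact le_of_mul_le_mul_left (h1.trans h3) hθ0
    have hcov : Icc (L / 2) (L / 2 + c * L) ⊆
        F ∪ ((Ioo 0 L \ G) ∪ ({t | θ ≤ ‖B (S t x)‖} ∩ G)) := by
      intro t ht
      by_cases h1 : ‖B (S t x)‖ ≤ θ
      · exact Or.inl ⟨ht, h1⟩
      · by_cases h2 : t ∈ G
        · exact Or.inr (Or.inr ⟨(not_le.1 h1).le, h2⟩)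
        · exact Or.inr (Or.inl ⟨⟨by linarith [ht.1], by linarith [ht.2]⟩, h2⟩)
    have hFv : ENNReal.ofReal (c * L / 4) ≤ volume F := by
      have h1 : volume (Icc (L / 2) (L / 2 + c * L)) ≤
          volume F + (ENNReal.ofReal (c / 2 * L) + ENNReal.ofReal (c * L / 4)) :=
        (measure_mono hcov).trans ((measure_union_le _ _).trans
          (add_le_add le_rfl ((measure_union_le _ _).trans (add_le_add hvol hbad))))
      rw [Real.volume_Icc, ← ENNReal.ofReal_add (by positivity) (by positivity),
        show L / 2 + c * L - L / 2 = c * L / 4 + (c / 2 * L + c * L / 4) by ring,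
        ENNReal.ofReal_add (by positivity) (by positivity)] at h1
      exact (ENNReal.add_le_add_iff_right ENNReal.ofReal_ne_top).1 h1
    have h := aux_point S hSsmooth C₀ hC₀ hSderiv D A B hD hA b hb hB L c hL hL1 hc x F
      (fun t ht => ht.1) hFv θ (fun t ht => ht.2) n τ hτ
    refine h.trans (le_of_eq ?_)
    rw [hθ]; field_simp; ring
  set Q := 100 ^ (n + 1) * (4 * I / (c * L)) + 24 * b * C₀ / L * (1 / 2) ^ (n + 1) * ‖x‖ with hQ
  have hQ0 : 0 ≤ Q := by positivity
  set y := S (L / 2) x with hy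
  have hyD : y ∈ D := by simpa using hD x 0 (L / 2) (by positivity)
  have hcL1 : c * L ≤ 1 := by linarith
  have h1 := hobs (c * L) hcL0 hcL1 y hyD
  have h2 : (∫ t in (0:ℝ)..(c * L), ‖B (S t y)‖ ^ 2) ≤ Q ^ 2 := by
    have h := intervalIntegral.norm_integral_le_of_norm_le_const (a := 0) (b := c * L) (C := Q ^ 2)
      (f := fun t => ‖B (S t y)‖ ^ 2) (by
        intro t ht
        rw [uIoc_of_le hcL0.le] at ht
        have e : S t y = S (t + L / 2) x := by
          rw [hSsemi t (L / 2) ht.1.le (by positivity)]; rfl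
        rw [Real.norm_of_nonneg (by positivity), e]
        have := hpt (t + L / 2) ⟨by linarith [ht.1], by linarith [ht.2]⟩
        gcongr)
    rw [sub_zero, abs_of_pos hcL0] at h
    refine (le_abs_self _).trans (h.trans ?_)
    have : 0 ≤ Q ^ 2 := by positivity
    nlinarith
  set Z := Real.exp (d / (c * L) ^ k) with hZ
  have hck2 : 0 < (c * L) ^ k := Real.rpow_pos_of_pos hcL0 k
  have hZ1 : 1 ≤ Z := Real.one_le_exp (by positivity)
  have h3 : ‖S (c * L) y‖ ≤ Z * Q := by
    have h4 : ‖S (c * L) y‖ ^ 2 ≤ (Z * Q) ^ 2 := by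
      calc ‖S (c * L) y‖ ^ 2 ≤ Z * ∫ t in (0:ℝ)..(c * L), ‖B (S t y)‖ ^ 2 := h1
        _ ≤ Z * Q ^ 2 := by gcongr
        _ ≤ (Z * Q) ^ 2 := by
          rw [mul_pow]; gcongr; nlinarith
    exact le_of_sq_le_sq h4 (by positivity)
  have h5 : S L x = S (L / 2 - c * L) (S (c * L) y) := by
    have e1 : S (c * L) y = S (c * L + L / 2) x := by
      rw [hSsemi _ _ hcL0.le (by positivity)]; rfl
    have e2 : L = (L / 2 - c * L) + (c * L + L / 2) := by ring
    rw [e1]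
    conv_lhs => rw [e2]
    rw [hSsemi (L / 2 - c * L) (c * L + L / 2) (by linarith) (by positivity)]; rfl
  have h6 : ‖S L x‖ ≤ M * Real.exp α * (Z * Q) := by
    rw [h5]
    refine (hSbound _ (by linarith) _).trans ?_
    have : α * (L / 2 - c * L) ≤ α := by nlinarith
    gcongr
  have hLk : 0 < L ^ k := Real.rpow_pos_of_pos hL k
  have hLk1 : L ^ k ≤ 1 := Real.rpow_le_one hL.le hL1 hk.le
  have hy1 : 1 ≤ 1 / L ^ k := by rw [le_div_iff₀ hLk]; linarith
  set W := 100 ^ (n + 1) * I + (1 / 2) ^ (n + 1) * ‖x‖ with hW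
  have hW0 : 0 ≤ W := by positivity
  have h7 : Q ≤ (4 / c + 24 * b * C₀) * (1 / L) * W := by
    have e : (4 / c + 24 * b * C₀) * (1 / L) * W - Q =
        4 / c * (1 / L) * ((1 / 2) ^ (n + 1) * ‖x‖) +
        24 * b * C₀ * (1 / L) * (100 ^ (n + 1) * I) := by
      rw [hQ, hW]; field_simp; ring
    have : 0 ≤ 4 / c * (1 / L) * ((1 / 2) ^ (n + 1) * ‖x‖) +
        24 * b * C₀ * (1 / L) * (100 ^ (n + 1) * I) := by positivity
    linarith
  have h8 : P' ≤ Real.exp (P' * (1 / L ^ k)) := by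
    have : P' ≤ P' * (1 / L ^ k) := le_mul_of_one_le_right hP'0.le hy1
    linarith [Real.add_one_le_exp (P' * (1 / L ^ k))]
  have hZe : Z = Real.exp (d / c ^ k * (1 / L ^ k)) := by
    rw [hZ, Real.mul_rpow hc0.le hL.le]; congr 1; field_simp
  calc ‖S L x‖ ≤ M * Real.exp α * (Z * Q) := h6
    _ ≤ M * Real.exp α * (Z * ((4 / c + 24 * b * C₀) *
          (m.factorial * Real.exp (1 / L ^ k)) * W)) := by
        gcongr
        refine h7.trans ?_
        have := hm L hL hL1
        gcongr
    _ = Z * Real.exp (1 / L ^ k) * P' * W := by rw [hP', hP]; ring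
    _ ≤ Z * Real.exp (1 / L ^ k) * Real.exp (P' * (1 / L ^ k)) * W := by gcongr
    _ = Real.exp ((d / c ^ k + 1 + P') / L ^ k) * W := by
        rw [hZe, ← Real.exp_add, ← Real.exp_add]
        congr 2; ring

lemma aux_cont {X U : Type*}
    [NormedAddCommGroup X] [InnerProductSpace ℝ X]
    [NormedAddCommGroup U] [InnerProductSpace ℝ U]
    (S : ℝ → X →L[ℝ] X)
    (hSsmooth : ∀ x : X, ContDiffOn ℝ (⊤ : ℕ∞) (fun s => S s x) (Set.Ioi 0))
    (D : Submodule ℝ X) (A : X →ₗ[ℝ] X) (B : X →ₗ[ℝ] U)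
    (hD : ∀ (x : X) (m : ℕ) (t : ℝ), 0 < t → iteratedDeriv m (fun s => S s x) t ∈ D)
    (hA : ∀ (x : X) (m : ℕ) (t : ℝ), 0 < t →
      A (iteratedDeriv m (fun s => S s x) t) = iteratedDeriv (m + 1) (fun s => S s x) t)
    (b : ℝ) (hB : ∀ v ∈ D, ‖B v‖ ≤ b * (‖A v‖ + ‖v‖)) (x : X) :
    ContinuousOn (fun t => B (S t x)) (Ioi 0) := by
  set f : ℝ → X := fun s => S s x with hf
  have hc0 : ContinuousOn f (Ioi 0) := (hSsmooth x).continuousOn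
  have hc1 : ContinuousOn (deriv f) (Ioi 0) :=
    ((hSsmooth x).deriv_of_isOpen (m := 0) isOpen_Ioi (by simp)).continuousOn
  have hmem : ∀ y, 0 < y → f y ∈ D := by
    intro y hy
    simpa using hD x 0 y hy
  have hAf : ∀ y, 0 < y → A (f y) = deriv f y := by
    intro y hy
    simpa using hA x 0 y hy
  intro t ht
  have e0 := tendsto_iff_norm_sub_tendsto_zero.1 (hc0 t ht)
  have e1 := tendsto_iff_norm_sub_tendsto_zero.1 (hc1 t ht)
  refine tendsto_iff_norm_sub_tendsto_zero.2 ?_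
  refine squeeze_zero' (g := fun s => b * (‖deriv f s - deriv f t‖ + ‖f s - f t‖))
    (Filter.Eventually.of_forall fun _ => norm_nonneg _) ?_ ?_
  · filter_upwards [self_mem_nhdsWithin] with s hs
    have h := hB (f s - f t) (D.sub_mem (hmem s hs) (hmem t ht))
    rw [map_sub, map_sub, hAf s hs, hAf t ht] at h
    exact h
  · simpa using (e1.add e0).const_mul b

lemma aux_integrable {X U : Type*}
    [NormedAddCommGroup X] [InnerProductSpace ℝ X]
    [NormedAddCommGroup U] [InnerProductSpace ℝ U]
    (S : ℝ → X →L[ℝ] X)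
    (hSsemi : ∀ t s : ℝ, 0 ≤ t → 0 ≤ s → S (t + s) = (S t).comp (S s))
    (B : X →ₗ[ℝ] U) (u₀ : X)
    (hcont : ContinuousOn (fun t => B (S t u₀)) (Ioi 0)) (d k : ℝ)
    (hobs : ∀ L : ℝ, 0 < L → L ≤ 1 →
      ‖S L u₀‖ ^ 2 ≤ Real.exp (d / L ^ k) * ∫ t in (0:ℝ)..L, ‖B (S t u₀)‖ ^ 2) (T : ℝ) :
    IntegrableOn (fun t => ‖B (S t u₀)‖) (Ioo 0 T) := by
  by_cases H : ∃ L, 0 < L ∧ L ≤ 1 ∧ S L u₀ ≠ 0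
  · obtain ⟨L, hL, hL1, hne⟩ := H
    have h1 := hobs L hL hL1
    have hii : IntervalIntegrable (fun t => ‖B (S t u₀)‖ ^ 2) volume 0 L := by
      by_contra hc
      rw [intervalIntegral.integral_undef hc, mul_zero] at h1
      have : 0 < ‖S L u₀‖ ^ 2 := by have := norm_pos_iff.2 hne; positivity
      linarith
    have h2 : IntegrableOn (fun t => ‖B (S t u₀)‖ ^ 2) (Ioc 0 L) :=
      (intervalIntegrable_iff_integrableOn_Ioc_of_le hL.le).1 hii
    have h3 : IntegrableOn (fun t => ‖B (S t u₀)‖) (Ioc 0 L) := by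
      have hone : IntegrableOn (fun _ : ℝ => (1 : ℝ)) (Ioc 0 L) := by simp
      refine Integrable.mono' (hone.add h2) ?_ ?_
      · exact (hcont.norm.mono (fun t ht => ht.1)).aestronglyMeasurable measurableSet_Ioc
      · refine Filter.Eventually.of_forall fun t => ?_
        simp only [norm_norm, Pi.add_apply]
        nlinarith [sq_nonneg (‖B (S t u₀)‖ - 1), norm_nonneg (B (S t u₀))]
    have h4 : IntegrableOn (fun t => ‖B (S t u₀)‖) (Icc L T) :=
      (hcont.norm.mono (fun t ht => lt_of_lt_of_le hL ht.1)).integrableOn_Icc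
    refine (h3.union h4).mono_set fun t ht => ?_
    rcases le_total t L with h | h
    · exact Or.inl ⟨ht.1, h⟩
    · exact Or.inr ⟨h, ht.2.le⟩
  · push Not at H
    have hz : ∀ t, 0 < t → S t u₀ = 0 := by
      intro t ht
      rcases le_total t 1 with h | h
      · exact H t ht h
      · rw [show t = (t - 1) + 1 by ring, hSsemi (t - 1) 1 (by linarith) zero_le_one]
        simp [H 1 one_pos le_rfl]
    have : IntegrableOn (fun _ : ℝ => (0 : ℝ)) (Ioo 0 T) := integrableOn_zero
    refine this.congr_fun (fun t ht => ?_) measurableSet_Ioo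
    simp [hz t ht.1]

lemma aux_density (E : Set ℝ) (hE : MeasurableSet E) (hEpos : 0 < volume E) (η : ℝ) (hη : 0 < η) :
    ∃ l ∈ E, ∃ r0 > 0, ∀ r, 0 < r → r < r0 →
      volume (Ioo l (l + r) \ E) ≤ ENNReal.ofReal (η * r) := by
  have hae := Besicovitch.ae_tendsto_measure_inter_div (volume : Measure ℝ) E
  rw [ae_restrict_iff' hE] at hae
  obtain ⟨l, hl, hlE⟩ : ∃ l, Filter.Tendsto
      (fun r => volume (E ∩ Metric.closedBall l r) / volume (Metric.closedBall l r))
      (nhdsWithin 0 (Ioi 0)) (nhds 1) ∧ l ∈ E := by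
    by_contra hc
    push Not at hc
    have : volume E = 0 := by
      rw [← nonpos_iff_eq_zero]
      refine (measure_mono ?_).trans (le_of_eq (ae_iff.1 hae))
      intro x hx hx2
      exact hc x (hx2 hx) hx
    exact hEpos.ne' this
  refine ⟨l, hlE, ?_⟩
  have hlt : ENNReal.ofReal (1 - η / 2) < 1 := by
    rw [ENNReal.ofReal_lt_one]; linarith
  have hev := hl.eventually (lt_mem_nhds hlt)
  obtain ⟨r0, hr0, hr⟩ := mem_nhdsGT_iff_exists_Ioo_subset.1 hev
  refine ⟨r0, hr0, fun r h0 h1 => ?_⟩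
  have h2 : ENNReal.ofReal (1 - η / 2) < volume (E ∩ Metric.closedBall l r) /
    volume (Metric.closedBall l r) := hr ⟨h0, h1⟩
  rw [Real.volume_closedBall] at h2
  have h3 : ENNReal.ofReal (1 - η / 2) * ENNReal.ofReal (2 * r) ≤
      volume (E ∩ Metric.closedBall l r) := by
    have hpos : ENNReal.ofReal (2 * r) ≠ 0 := by
      rw [Ne, ENNReal.ofReal_eq_zero]; linarith
    exact (ENNReal.le_div_iff_mul_le (Or.inl hpos) (Or.inl ENNReal.ofReal_ne_top)).1 h2.le
  have hfin : volume (E ∩ Metric.closedBall l r) ≠ ⊤ :=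
    ((measure_mono inter_subset_right).trans_lt
      (by rw [Real.volume_closedBall]; exact ENNReal.ofReal_lt_top)).ne
  have h4 : volume (E ∩ Metric.closedBall l r) + volume (Metric.closedBall l r \ E) =
      ENNReal.ofReal (2 * r) := by
    rw [← Real.volume_closedBall, inter_comm]
    exact measure_inter_add_diff _ hE
  have h5 : volume (Metric.closedBall l r \ E) ≤ ENNReal.ofReal (η * r) := by
    have h6 : ENNReal.ofReal (2 * r) ≤
        volume (E ∩ Metric.closedBall l r) + ENNReal.ofReal (η * r) := by
      refine le_trans ?_ (add_le_add h3 le_rfl)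
      rcases le_total 0 (1 - η / 2) with hh | hh
      · rw [← ENNReal.ofReal_mul hh, ← ENNReal.ofReal_add (by positivity) (by positivity)]
        exact ENNReal.ofReal_le_ofReal (by linarith)
      · refine le_trans (ENNReal.ofReal_le_ofReal ?_) le_add_self
        nlinarith
    rw [← h4] at h6
    exact (ENNReal.add_le_add_iff_left hfin).1 h6
  refine (measure_mono ?_).trans h5
  refine diff_subset_diff_left fun t ht => ?_
  rw [Metric.mem_closedBall, Real.dist_eq, abs_le]
  constructor <;> linarith [ht.1, ht.2]

lemma aux_weight (C : ℝ) (hC : 0 < C) (y : ℝ) (hy : 1 ≤ y) :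
    ∃ n : ℕ, Real.exp (-(22 * C + 10) * y) * (Real.exp (C * y) * 100 ^ (n + 1)) ≤ 1 ∧
      Real.exp (-(22 * C + 10) * y) * (Real.exp (C * y) * (1 / 2) ^ (n + 1)) ≤
        Real.exp (-(22 * C + 10) * (21 / 20 * y)) := by
  set κ := 2 * C + (22 * C + 10) / 10 with hκ
  obtain ⟨n, hn⟩ : ∃ n, n = ⌊κ * y⌋₊ := ⟨_, rfl⟩
  have hκy : 0 ≤ κ * y := by positivity
  have h1 : (n : ℝ) ≤ κ * y := by rw [hn]; exact Nat.floor_le hκy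
  have h2 : κ * y < n + 1 := by rw [hn]; exact Nat.lt_floor_add_one _
  refine ⟨n, ?_, ?_⟩
  · have h100 : (100 : ℝ) ^ (n + 1) ≤ Real.exp (5 * (n + 1)) := by
      have : (100 : ℝ) ≤ Real.exp 5 := by
        have h := Real.exp_one_gt_d9
        have e : Real.exp 5 = Real.exp 1 ^ 5 := by rw [← Real.exp_nat_mul]; norm_num
        rw [e]
        calc (100 : ℝ) ≤ 2.7 ^ 5 := by norm_num
          _ ≤ Real.exp 1 ^ 5 := by gcongr; linarith
      calc (100 : ℝ) ^ (n + 1) ≤ Real.exp 5 ^ (n + 1) := by gcongr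
        _ = Real.exp (5 * (n + 1)) := by rw [← Real.exp_nat_mul]; push_cast; ring_nf
    calc _ ≤ Real.exp (-(22 * C + 10) * y) * (Real.exp (C * y) * Real.exp (5 * (n + 1))) := by
          gcongr
      _ = Real.exp (-(22 * C + 10) * y + (C * y + 5 * (n + 1))) := by
          rw [← Real.exp_add, ← Real.exp_add]
      _ ≤ 1 := by
          rw [Real.exp_le_one_iff]
          rw [hκ] at h1
          nlinarith
  · have hhalf : ((1 : ℝ) / 2) ^ (n + 1) ≤ Real.exp (-(1 / 2) * (n + 1)) := by
      have : (1 : ℝ) / 2 ≤ Real.exp (-(1 / 2)) := by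
        linarith [Real.add_one_le_exp (-(1 / 2) : ℝ)]
      calc ((1 : ℝ) / 2) ^ (n + 1) ≤ Real.exp (-(1 / 2)) ^ (n + 1) := by gcongr
        _ = _ := by rw [← Real.exp_nat_mul]; push_cast; ring_nf
    calc _ ≤ Real.exp (-(22 * C + 10) * y) * (Real.exp (C * y) * Real.exp (-(1 / 2) * (n + 1))) := by
          gcongr
      _ = Real.exp (-(22 * C + 10) * y + (C * y + -(1 / 2) * (n + 1))) := by
          rw [← Real.exp_add, ← Real.exp_add]
      _ ≤ _ := by
          rw [Real.exp_le_exp]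
          rw [hκ] at h2
          nlinarith

theorem observability_from_measurable_sets_analytic
    {X U : Type*}
    [NormedAddCommGroup X] [InnerProductSpace ℝ X] [CompleteSpace X]
    [NormedAddCommGroup U] [InnerProductSpace ℝ U] [CompleteSpace U]
    (S : ℝ → X →L[ℝ] X)
    (hS0 : S 0 = ContinuousLinearMap.id ℝ X)
    (hSsemi : ∀ t s : ℝ, 0 ≤ t → 0 ≤ s → S (t + s) = (S t).comp (S s))
    (hScont : ∀ x : X, ContinuousOn (fun t => S t x) (Set.Ici 0))
    (M α : ℝ) (hM : 1 ≤ M) (hα : 0 ≤ α)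
    (hSbound : ∀ t : ℝ, 0 ≤ t → ∀ x : X, ‖S t x‖ ≤ M * Real.exp (α * t) * ‖x‖)
    (hSsmooth : ∀ x : X, ContDiffOn ℝ (⊤ : ℕ∞) (fun s => S s x) (Set.Ioi 0))
    (C₀ : ℝ) (hC₀ : 1 ≤ C₀)
    (hSderiv : ∀ (x : X) (m : ℕ) (t : ℝ), 1 ≤ m → 0 < t → t ≤ 1 →
      ‖iteratedDeriv m (fun s => S s x) t‖ ≤ (C₀ * m / t) ^ m * ‖x‖)
    (D : Submodule ℝ X) (A : X →ₗ[ℝ] X) (B : X →ₗ[ℝ] U)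
    (hD : ∀ (x : X) (m : ℕ) (t : ℝ), 0 < t → iteratedDeriv m (fun s => S s x) t ∈ D)
    (hA : ∀ (x : X) (m : ℕ) (t : ℝ), 0 < t →
      A (iteratedDeriv m (fun s => S s x) t) = iteratedDeriv (m + 1) (fun s => S s x) t)
    (b : ℝ) (hb : 0 < b)
    (hB : ∀ v ∈ D, ‖B v‖ ≤ b * (‖A v‖ + ‖v‖))
    -- (a) admissibility of the observation operator B
    (hadm : ∀ τ : ℝ, 0 < τ → ∃ Cτ > 0, ∀ u₀ ∈ D,
      (∫ t in (0:ℝ)..τ, ‖B (S t u₀)‖ ^ 2) ≤ Cτ * ‖u₀‖ ^ 2)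
    -- (b) observability inequality from time intervals
    (d k : ℝ) (hd : 0 < d) (hk : 0 < k)
    (hobs : ∀ L : ℝ, 0 < L → L ≤ 1 → ∀ u₀ ∈ D,
      ‖S L u₀‖ ^ 2 ≤ Real.exp (d / L ^ k) * ∫ t in (0:ℝ)..L, ‖B (S t u₀)‖ ^ 2)
    (T : ℝ) (hT : 0 < T)
    (E : Set ℝ) (hE : MeasurableSet E) (hET : E ⊆ Set.Ioo 0 T)
    (hEpos : 0 < volume E) :
    ∃ C > 0, ∀ u₀ ∈ D, ‖S T u₀‖ ≤ C * ∫ t in E, ‖B (S t u₀)‖ := by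
  obtain ⟨C, hC, ε, hε, hstep⟩ := aux_step S hSsemi M α hM hα hSbound hSsmooth C₀ hC₀ hSderiv
    D A B hD hA b hb hB d k hd hk hobs
  have hM0 : 0 < M := by linarith
  -- geometric ratio
  obtain ⟨z, hz⟩ : ∃ z : ℝ, z = (20 / 21 : ℝ) ^ (1 / k) := ⟨_, rfl⟩
  have hz0 : 0 < z := by rw [hz]; positivity
  have hz1 : z < 1 := by
    rw [hz]; exact Real.rpow_lt_one (by norm_num) (by norm_num) (by positivity)
  have hzk : z ^ k = 20 / 21 := by
    rw [hz, ← Real.rpow_mul (by norm_num), one_div_mul_cancel hk.ne', Real.rpow_one]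
  have h1z : 0 < 1 - z := by linarith
  obtain ⟨l, hlE, r0, hr0, hdens⟩ := aux_density E hE hEpos (ε * (1 - z)) (by positivity)
  have hl0 : 0 < l := (hET hlE).1
  have hlT : l < T := (hET hlE).2
  obtain ⟨r, hr, hrr0, hr1, hrT⟩ : ∃ r, 0 < r ∧ r < r0 ∧ r ≤ 1 ∧ l + r ≤ T := by
    refine ⟨min (r0 / 2) (min 1 (T - l)), ?_, ?_, ?_, ?_⟩
    · have : 0 < T - l := by linarith
      positivity
    · exact (min_le_left _ _).trans_lt (by linarith)
    · exact (min_le_right _ _).trans (min_le_left _ _)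
    · have := (min_le_right (r0 / 2) _).trans (min_le_right 1 (T - l))
      linarith
  set lm : ℕ → ℝ := fun m => l + r * z ^ m with hlm
  set Lm : ℕ → ℝ := fun m => r * (1 - z) * z ^ m with hLm
  set y : ℕ → ℝ := fun m => 1 / (Lm m) ^ k with hy
  have hzm : ∀ m, 0 < z ^ m := fun m => by positivity
  have hzm1 : ∀ m, z ^ m ≤ 1 := fun m => pow_le_one₀ hz0.le hz1.le
  have hLm0 : ∀ m, 0 < Lm m := fun m => by simp only [hLm]; positivity
  have hLm1 : ∀ m, Lm m ≤ 1 := fun m => by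
    simp only [hLm]
    have h1 : r * (1 - z) ≤ 1 := by nlinarith
    have h2 : 0 ≤ r * (1 - z) := by positivity
    nlinarith [hzm1 m, hzm m]
  have hlms : ∀ m, lm m = lm (m + 1) + Lm m := fun m => by
    simp only [hlm, hLm]; ring
  have hlmpos : ∀ m, 0 < lm m := fun m => by
    simp only [hlm]; have := hzm m; positivity
  have hlmT : ∀ m, lm m ≤ T := fun m => by
    simp only [hlm]; nlinarith [hzm1 m]
  have hy1 : ∀ m, 1 ≤ y m := fun m => by
    have h1 : 0 < Lm m ^ k := Real.rpow_pos_of_pos (hLm0 m) k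
    have h2 : Lm m ^ k ≤ 1 := Real.rpow_le_one (hLm0 m).le (hLm1 m) hk.le
    simp only [hy]; rw [le_div_iff₀ h1]; linarith
  have hys : ∀ m, y (m + 1) = 21 / 20 * y m := fun m => by
    have e : Lm (m + 1) = Lm m * z := by simp only [hLm]; ring
    simp only [hy]
    rw [e, Real.mul_rpow (hLm0 m).le hz0.le, hzk]
    have h1 : 0 < Lm m ^ k := Real.rpow_pos_of_pos (hLm0 m) k
    field_simp
  set w : ℕ → ℝ := fun m => Real.exp (-(22 * C + 10) * y m) with hw
  have hdm : ∀ m, volume (Ioo (lm (m + 1)) (lm m) \ E) ≤ ENNReal.ofReal (ε * Lm m) := by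
    intro m
    have hlt : r * z ^ m < r0 := by nlinarith [hzm1 m]
    have h := hdens (r * z ^ m) (by positivity) hlt
    refine (measure_mono ?_).trans (h.trans (le_of_eq ?_))
    · refine diff_subset_diff_left fun t ht => ⟨?_, ht.2⟩
      have h1 := ht.1
      simp only [hlm] at h1
      have : 0 < r * z ^ (m + 1) := by positivity
      linarith
    · congr 1; simp only [hLm]; ring
  refine ⟨M * Real.exp (α * T) * (w 0)⁻¹, by simp only [hw]; positivity, ?_⟩
  intro u₀ hu₀
  set f : ℝ → ℝ := fun t => ‖B (S t u₀)‖ with hf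
  have hcont := aux_cont S hSsmooth D A B hD hA b hB u₀
  have hintT : IntegrableOn f (Ioo 0 T) :=
    aux_integrable S hSsemi B u₀ hcont d k (fun L h1 h2 => hobs L h1 h2 u₀ hu₀) T
  have hintE : IntegrableOn f E := hintT.mono_set hET
  set a : ℕ → ℝ := fun m => ‖S (lm m) u₀‖ with ha
  have ha0 : ∀ m, 0 ≤ a m := fun m => norm_nonneg _
  -- one telescoping step
  have htel : ∀ m, w m * a m ≤ (∫ t in E ∩ Ioc (lm (m + 1)) (lm m), f t) + w (m + 1) * a (m + 1) := by
    intro m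
    set s := lm (m + 1) with hs
    have hs0 : 0 < s := hlmpos _
    set x := S s u₀ with hx
    set H := E ∩ Ioc s (lm m) with hH
    have hHm : MeasurableSet H := hE.inter measurableSet_Ioc
    set G := (fun t => t + s) ⁻¹' H with hG
    have hGm : MeasurableSet G := (measurable_add_const s) hHm
    have hmp : MeasurePreserving (fun t : ℝ => t + s) volume volume :=
      measurePreserving_add_right volume s
    have hemb : MeasurableEmbedding (fun t : ℝ => t + s) := measurableEmbedding_addRight s
    have hGeq : ∀ t ∈ G, ‖B (S t x)‖ = f (t + s) := by
      intro t ht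
      have h0 : 0 ≤ t := by have := ht.2.1; linarith
      simp only [hf]
      rw [hSsemi t s h0 hs0.le]; rfl
    have hGint : IntegrableOn (fun t => ‖B (S t x)‖) G := by
      have h1 : IntegrableOn (f ∘ fun t => t + s) G :=
        (hmp.integrableOn_comp_preimage hemb).2 (hintE.mono_set inter_subset_left)
      exact h1.congr_fun (fun t ht => (hGeq t ht).symm) hGm
    have hGI : (∫ t in G, ‖B (S t x)‖) = ∫ t in H, f t := by
      rw [setIntegral_congr_fun hGm hGeq]
      exact hmp.setIntegral_preimage_emb hemb f H
    have hGv : volume (Ioo 0 (Lm m) \ G) ≤ ENNReal.ofReal (ε * Lm m) := by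
      refine le_trans ?_ (hdm m)
      rw [← measure_preimage_add_right volume s (Ioo (lm (m + 1)) (lm m) \ E)]
      refine measure_mono fun t ht => ?_
      have h1 : s < t + s := by linarith [ht.1.1]
      have h2 : t + s < lm m := by rw [hlms m]; linarith [ht.1.2]
      exact ⟨⟨h1, h2⟩, fun h3 => ht.2 ⟨h3, h1, h2.le⟩⟩
    obtain ⟨n, hn1, hn2⟩ := aux_weight C hC (y m) (hy1 m)
    have h := hstep (Lm m) x G n (hLm0 m) (hLm1 m) hGm hGv hGint
    have hSx : S (Lm m) x = S (lm m) u₀ := by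
      rw [hlms m, add_comm, hSsemi _ _ (hLm0 m).le hs0.le]; rfl
    rw [hSx, hGI, show C / Lm m ^ k = C * y m by simp only [hy]; ring] at h
    have hIH : 0 ≤ ∫ t in H, f t := integral_nonneg fun _ => norm_nonneg _
    have hw' : w (m + 1) = Real.exp (-(22 * C + 10) * (21 / 20 * y m)) := by
      simp only [hw]; rw [hys m]
    calc w m * a m ≤ w m * (Real.exp (C * y m) *
          (100 ^ (n + 1) * (∫ t in H, f t) + (1 / 2) ^ (n + 1) * ‖x‖)) :=
          mul_le_mul_of_nonneg_left h (Real.exp_pos _).le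
      _ = w m * (Real.exp (C * y m) * 100 ^ (n + 1)) * (∫ t in H, f t) +
          w m * (Real.exp (C * y m) * (1 / 2) ^ (n + 1)) * ‖x‖ := by ring
      _ ≤ 1 * (∫ t in H, f t) + w (m + 1) * ‖x‖ := by
          rw [hw']
          exact add_le_add (mul_le_mul_of_nonneg_right hn1 hIH)
            (mul_le_mul_of_nonneg_right hn2 (norm_nonneg _))
      _ = _ := by rw [one_mul]
  have hmono : ∀ m, lm m ≤ lm 0 := fun m => by
    simp only [hlm, pow_zero]; nlinarith [hzm1 m]
  have hsum : ∀ N, w 0 * a 0 ≤ (∫ t in E ∩ Ioc (lm N) (lm 0), f t) + w N * a N := by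
    intro N
    induction N with
    | zero => simp
    | succ N ih =>
      have hle : lm (N + 1) ≤ lm N := by rw [hlms N]; linarith [hLm0 N]
      have hun : E ∩ Ioc (lm (N + 1)) (lm 0) =
          (E ∩ Ioc (lm (N + 1)) (lm N)) ∪ (E ∩ Ioc (lm N) (lm 0)) := by
        rw [← inter_union_distrib_left, Ioc_union_Ioc_eq_Ioc hle (hmono N)]
      rw [hun, setIntegral_union _ (hE.inter measurableSet_Ioc)
        (hintE.mono_set inter_subset_left) (hintE.mono_set inter_subset_left)]
      · linarith [htel N]
      · refine Disjoint.mono inter_subset_right inter_subset_right ?_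
        rw [Set.disjoint_left]
        intro t h1 h2
        exact absurd h1.2 (not_le.2 h2.1)
  have hsum2 : ∀ N, w 0 * a 0 ≤ (∫ t in E, f t) + w N * (M * Real.exp (α * T) * ‖u₀‖) := by
    intro N
    refine (hsum N).trans (add_le_add ?_ ?_)
    · exact setIntegral_mono_set hintE (Filter.Eventually.of_forall fun _ => norm_nonneg _)
        (HasSubset.Subset.eventuallyLE inter_subset_left)
    · refine mul_le_mul_of_nonneg_left ?_ (Real.exp_pos _).le
      refine (hSbound _ (hlmpos N).le _).trans ?_
      have := hlmT N
      gcongr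
  have hyN : ∀ N, y N = (21 / 20) ^ N * y 0 := by
    intro N
    induction N with
    | zero => simp
    | succ N ih => rw [hys, ih]; ring
  have hytop : Filter.Tendsto y Filter.atTop Filter.atTop := by
    have : y = fun N => (21 / 20 : ℝ) ^ N * y 0 := funext hyN
    rw [this]
    exact (tendsto_pow_atTop_atTop_of_one_lt (by norm_num)).atTop_mul_const
      (by linarith [hy1 0])
  have hwlim : Filter.Tendsto w Filter.atTop (nhds 0) := by
    refine Real.tendsto_exp_atBot.comp ?_
    exact hytop.const_mul_atTop_of_neg (by linarith)
  have hlim : w 0 * a 0 ≤ ∫ t in E, f t := by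
    have h1 : Filter.Tendsto (fun N => (∫ t in E, f t) + w N * (M * Real.exp (α * T) * ‖u₀‖))
        Filter.atTop (nhds (∫ t in E, f t)) := by
      simpa using (hwlim.mul_const (M * Real.exp (α * T) * ‖u₀‖)).const_add (∫ t in E, f t)
    exact ge_of_tendsto' h1 hsum2
  have hfin : ‖S T u₀‖ ≤ M * Real.exp (α * T) * a 0 := by
    have e : S T u₀ = S (T - lm 0) (S (lm 0) u₀) := by
      conv_lhs => rw [show T = (T - lm 0) + lm 0 by ring]
      rw [hSsemi _ _ (by linarith [hlmT 0]) (hlmpos 0).le]; rfl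
    rw [e]
    refine (hSbound _ (by linarith [hlmT 0]) _).trans ?_
    have := hlmpos 0
    have h2 : T - lm 0 ≤ T := by linarith
    gcongr
  have hw0 : 0 < w 0 := Real.exp_pos _
  calc ‖S T u₀‖ ≤ M * Real.exp (α * T) * a 0 := hfin
    _ = M * Real.exp (α * T) * (w 0)⁻¹ * (w 0 * a 0) := by field_simp
    _ ≤ M * Real.exp (α * T) * (w 0)⁻¹ * ∫ t in E, f t := by gcongr
end

section
/- For each u₀ ∈ X, the function g(t) := ‖B S(t) u₀‖_U², t > 0, is real-analytic on (0,∞). Moreover, there exist constants K ≥ 1 and ρ ∈ (0,1), independent of u₀, such that for all s ≥ 0, all t with 0 < t - s ≤ 1, and all β ∈ ℕ: |g^{(β)}(t)| ≤ K (t-s)^{-2} β! (ρ (t-s))^{-β} ‖S(s) u₀‖_X². -/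
open MeasureTheory Set

/-- Smooth functions with Cauchy-type derivative bounds are analytic. -/
lemma aux_analyticAt {g : ℝ → ℝ} {t₀ δ C R : ℝ} (hδ : 0 < δ) (hC : 0 ≤ C) (hR : 0 < R)
    (hg : ∀ t ∈ Metric.ball t₀ δ, ContDiffAt ℝ (⊤ : ℕ∞) g t)
    (hb : ∀ t ∈ Metric.ball t₀ δ, ∀ n : ℕ,
      |iteratedDeriv n g t| ≤ C * (Nat.factorial n) * R ^ n) : AnalyticAt ℝ g t₀ := by
  have hn : ∀ t ∈ Metric.ball t₀ δ, ∀ n : ℕ, ContDiffAt ℝ n g t := fun t ht n =>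
    (hg t ht).of_le (by exact_mod_cast le_top)
  have h0 : t₀ ∈ Metric.ball t₀ δ := Metric.mem_ball_self hδ
  have hcoef : ∀ n : ℕ, |iteratedDeriv n g t₀ / (Nat.factorial n)| ≤ C * R ^ n := by
    intro n
    have hf : (0:ℝ) < Nat.factorial n := by exact_mod_cast Nat.factorial_pos n
    rw [abs_div, abs_of_pos hf, div_le_iff₀ hf]
    calc _ ≤ _ := hb t₀ h0 n
      _ = _ := by ring
  -- Taylor remainder
  have hrem : ∀ y : ℝ, |y| < δ → ∀ n : ℕ,
      |g (t₀ + y) - ∑ k ∈ Finset.range (n + 1), iteratedDeriv k g t₀ / (Nat.factorial k) * y ^ k|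
        ≤ C * (R * |y|) ^ (n + 1) := by
    intro y hy n
    by_cases hy0 : y = 0
    · subst hy0
      rw [Finset.sum_range_succ']
      simp
    · have hne : t₀ ≠ t₀ + y := by simpa using fun h => hy0 h
      have hsub : uIcc t₀ (t₀ + y) ⊆ Metric.ball t₀ δ := by
        rw [← segment_eq_uIcc]
        exact (convex_ball t₀ δ).segment_subset h0 (by simpa [Real.dist_eq] using hy)
      have hU : UniqueDiffOn ℝ (uIcc t₀ (t₀ + y)) := by
        apply uniqueDiffOn_Icc
        exact inf_lt_sup.2 hne
      have heq : ∀ k : ℕ, ∀ t ∈ uIcc t₀ (t₀ + y),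
          iteratedDerivWithin k g (uIcc t₀ (t₀ + y)) t = iteratedDeriv k g t := fun k t ht =>
        iteratedDerivWithin_eq_iteratedDeriv hU (hn t (hsub ht) k) ht
      have hcd : ∀ k : ℕ, ContDiffOn ℝ k g (uIcc t₀ (t₀ + y)) := fun k t ht =>
        (hn t (hsub ht) k).contDiffWithinAt
      obtain ⟨x', hx', he⟩ := taylor_mean_remainder_lagrange (n := n) hne (hcd n)
        (((hcd (n+1)).differentiableOn_iteratedDerivWithin
          (by exact_mod_cast Nat.lt_succ_self n) hU).mono uIoo_subset_uIcc_self)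
      rw [taylor_within_apply] at he
      have hs : ∑ k ∈ Finset.range (n + 1), ((Nat.factorial k : ℝ)⁻¹ * (t₀ + y - t₀) ^ k) •
          iteratedDerivWithin k g (uIcc t₀ (t₀ + y)) t₀ =
          ∑ k ∈ Finset.range (n + 1), iteratedDeriv k g t₀ / (Nat.factorial k) * y ^ k := by
        refine Finset.sum_congr rfl fun k _ => ?_
        rw [heq k t₀ left_mem_uIcc, smul_eq_mul, add_sub_cancel_left]
        ring
      rw [hs] at he
      rw [he, heq _ _ (uIoo_subset_uIcc_self hx'), add_sub_cancel_left, abs_div, abs_mul, abs_pow]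
      have hf : (0:ℝ) < Nat.factorial (n+1) := by exact_mod_cast Nat.factorial_pos _
      rw [abs_of_pos hf, div_le_iff₀ hf]
      calc _ ≤ (C * (Nat.factorial (n+1)) * R ^ (n+1)) * |y| ^ (n+1) := by
              gcongr
              exact hb _ (hsub (uIoo_subset_uIcc_self hx')) _
        _ = _ := by ring
  set r : ℝ := min δ (1 / (2 * R)) with hr
  have hr0 : 0 < r := by positivity
  have hrR : R * r ≤ 1 / 2 := by
    calc R * r ≤ R * (1 / (2 * R)) := by gcongr; exact min_le_right _ _
      _ = 1 / 2 := by field_simp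
  refine ⟨FormalMultilinearSeries.ofScalars ℝ (fun n => iteratedDeriv n g t₀ / (Nat.factorial n)),
    ENNReal.ofReal r, ?_, by simpa using hr0, ?_⟩
  · rw [ENNReal.ofReal]
    apply FormalMultilinearSeries.le_radius_of_bound _ C
    intro n
    rw [Real.coe_toNNReal _ hr0.le]
    have h1 : ‖FormalMultilinearSeries.ofScalars ℝ
        (fun n => iteratedDeriv n g t₀ / (Nat.factorial n)) n‖ ≤ C * R ^ n := by
      simpa [FormalMultilinearSeries.ofScalars, norm_smul, abs_div] using hcoef n
    calc _ ≤ (C * R ^ n) * r ^ n := by gcongr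
      _ = C * (R * r) ^ n := by ring
      _ ≤ C * 1 := by
        gcongr
        exact pow_le_one₀ (by positivity) (by linarith)
      _ = C := mul_one C
  · intro y hy
    have hy' : |y| < r := by
      rw [Metric.mem_eball, edist_dist, dist_zero_right, Real.norm_eq_abs] at hy
      exact (ENNReal.ofReal_lt_ofReal_iff hr0).1 hy
    have hq : R * |y| < 1 := by
      have : R * |y| ≤ R * r := by gcongr
      linarith
    have hq0 : 0 ≤ R * |y| := by positivity
    simp only [FormalMultilinearSeries.ofScalars_apply_eq, smul_eq_mul]
    rw [hasSum_iff_tendsto_nat_of_summable_norm]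
    · rw [← Filter.tendsto_add_atTop_iff_nat 1, tendsto_iff_norm_sub_tendsto_zero]
      refine squeeze_zero (fun _ => norm_nonneg _) (g := fun n : ℕ => C * (R * |y|) ^ (n + 1))
        (fun n => ?_) ?_
      · rw [norm_sub_rev]
        exact hrem y (lt_of_lt_of_le hy' (min_le_left _ _)) n
      · have := (tendsto_pow_atTop_nhds_zero_of_lt_one hq0 hq)
        have := ((Filter.tendsto_add_atTop_iff_nat 1).2 this).const_mul C
        simpa using this
    · refine Summable.of_nonneg_of_le (fun _ => norm_nonneg _) (fun n => ?_)
        ((summable_geometric_of_lt_one hq0 hq).mul_left C)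
      rw [norm_mul, norm_pow, Real.norm_eq_abs, Real.norm_eq_abs, mul_pow, ← mul_assoc]
      gcongr
      exact hcoef n

/-- Leibniz bound for the squared norm. -/
lemma aux_leibniz {U : Type*} [NormedAddCommGroup U] [InnerProductSpace ℝ U]
    {f : ℝ → U} {V : Set ℝ} (hV : IsOpen V) (hf : ContDiffOn ℝ (⊤ : ℕ∞) f V) {x : ℝ} (hx : x ∈ V)
    {N q : ℝ} (hN : 0 ≤ N) (hq : 0 ≤ q)
    (h : ∀ m : ℕ, ‖iteratedDeriv m f x‖ ≤ N * (Nat.factorial m) * q ^ m) (β : ℕ) :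
    |iteratedDeriv β (fun τ => ‖f τ‖ ^ 2) x| ≤ N ^ 2 * (Nat.factorial β) * (2 * q) ^ β := by
  have key := ContinuousLinearMap.norm_iteratedFDerivWithin_le_of_bilinear_of_le_one
    (innerSL ℝ : U →L[ℝ] U →L[ℝ] ℝ) hf hf hV.uniqueDiffOn hx (n := β)
    (by exact_mod_cast le_top) (norm_innerSL_le ℝ)
  have e : (fun y => ((innerSL ℝ : U →L[ℝ] U →L[ℝ] ℝ) (f y)) (f y)) = fun τ => ‖f τ‖ ^ 2 := by
    funext y
    exact real_inner_self_eq_norm_sq (f y)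
  rw [e] at key
  simp only [norm_iteratedFDerivWithin_eq_norm_iteratedDerivWithin,
    iteratedDerivWithin_of_isOpen hV hx] at key
  rw [Real.norm_eq_abs] at key
  refine key.trans ?_
  calc _ ≤ ∑ i ∈ Finset.range (β + 1), N ^ 2 * (Nat.factorial β) * q ^ β := by
        refine Finset.sum_le_sum fun i hi => ?_
        have hi' : i ≤ β := Nat.lt_succ_iff.1 (Finset.mem_range.1 hi)
        calc _ ≤ (β.choose i : ℝ) * (N * (Nat.factorial i) * q ^ i) *
              (N * (Nat.factorial (β - i)) * q ^ (β - i)) := by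
              gcongr
              · exact h i
              · exact h _
          _ = N ^ 2 * ((β.choose i : ℝ) * (Nat.factorial i) * (Nat.factorial (β - i))) *
              (q ^ i * q ^ (β - i)) := by ring
          _ = _ := by
              rw [← pow_add, Nat.add_sub_cancel' hi', ← Nat.choose_mul_factorial_mul_factorial hi']
              push_cast
              ring
    _ = ((β : ℝ) + 1) * (N ^ 2 * (Nat.factorial β) * q ^ β) := by simp
    _ ≤ 2 ^ β * (N ^ 2 * (Nat.factorial β) * q ^ β) := by
        gcongr
        exact_mod_cast Nat.lt_two_pow_self
    _ = _ := by rw [mul_pow]; ring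

/-- **Analyticity and derivative bounds for `t ↦ ‖B S(t) u₀‖²`.**
For each `u₀`, the function `g(t) = ‖B (S t u₀)‖²` is real-analytic on `(0,∞)`, and there
are constants `K ≥ 1` and `ρ ∈ (0,1)`, independent of `u₀`, such that for `0 < t - s ≤ 1`,
`|g^{(β)}(t)| ≤ K (t-s)⁻² β! (ρ(t-s))^{-β} ‖S s u₀‖²`. -/
theorem analyticity_of_observation_norm
    {X U : Type*}
    [NormedAddCommGroup X] [InnerProductSpace ℝ X] [CompleteSpace X]
    [NormedAddCommGroup U] [InnerProductSpace ℝ U] [CompleteSpace U]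
    (S : ℝ → X →L[ℝ] X)
    (hS0 : S 0 = ContinuousLinearMap.id ℝ X)
    (hSsemi : ∀ t s : ℝ, 0 ≤ t → 0 ≤ s → S (t + s) = (S t).comp (S s))
    (hScont : ∀ x : X, ContinuousOn (fun t => S t x) (Set.Ici 0))
    (M α : ℝ) (hM : 1 ≤ M) (hα : 0 ≤ α)
    (hSbound : ∀ t : ℝ, 0 ≤ t → ∀ x : X, ‖S t x‖ ≤ M * Real.exp (α * t) * ‖x‖)
    (hSsmooth : ∀ x : X, ContDiffOn ℝ (⊤ : ℕ∞) (fun s => S s x) (Set.Ioi 0))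
    (C₀ : ℝ) (hC₀ : 1 ≤ C₀)
    (hSderiv : ∀ (x : X) (m : ℕ) (t : ℝ), 1 ≤ m → 0 < t → t ≤ 1 →
      ‖iteratedDeriv m (fun s => S s x) t‖ ≤ (C₀ * m / t) ^ m * ‖x‖)
    (D : Submodule ℝ X) (A : X →ₗ[ℝ] X) (B : X →ₗ[ℝ] U)
    (hD : ∀ (x : X) (m : ℕ) (t : ℝ), 0 < t → iteratedDeriv m (fun s => S s x) t ∈ D)
    (hA : ∀ (x : X) (m : ℕ) (t : ℝ), 0 < t →
      A (iteratedDeriv m (fun s => S s x) t) = iteratedDeriv (m + 1) (fun s => S s x) t)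
    (b : ℝ) (hb : 0 < b)
    (hB : ∀ v ∈ D, ‖B v‖ ≤ b * (‖A v‖ + ‖v‖)) :
    (∀ u₀ : X, AnalyticOnNhd ℝ (fun t => ‖B (S t u₀)‖ ^ 2) (Set.Ioi 0)) ∧
    ∃ K ≥ (1:ℝ), ∃ ρ ∈ Set.Ioo (0:ℝ) 1, ∀ (u₀ : X) (s t : ℝ) (β : ℕ),
      0 ≤ s → 0 < t - s → t - s ≤ 1 →
      |iteratedDeriv β (fun τ => ‖B (S τ u₀)‖ ^ 2) t| ≤
        K * (t - s) ^ (-(2:ℤ)) * (Nat.factorial β) * (ρ * (t - s)) ^ (-(β : ℤ))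
          * ‖S s u₀‖ ^ 2 := by
  have hCA : ∀ (x : X) (t : ℝ), 0 < t → ContDiffAt ℝ (⊤ : ℕ∞) (fun s => S s x) t := fun x t ht =>
    (hSsmooth x).contDiffAt (Ioi_mem_nhds ht)
  set E : ℝ := M * Real.exp α with hE
  have hE1 : 1 ≤ E := by
    have : 1 ≤ Real.exp α := Real.one_le_exp hα
    nlinarith
  have hSb1 : ∀ r : ℝ, 0 ≤ r → r ≤ 1 → ∀ x : X, ‖S r x‖ ≤ E * ‖x‖ := by
    intro r h0 h1 x
    refine (hSbound r h0 x).trans ?_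
    rw [hE]
    gcongr
    nlinarith
  -- the bounded operators `B S(r)`
  have hL : ∀ r : ℝ, 0 < r → r ≤ 1 → ∃ L : X →L[ℝ] U, (∀ x, L x = B (S r x)) ∧
      ‖L‖ ≤ b * (C₀ + E) / r := by
    intro r h0 h1
    have hbd : ∀ x : X, ‖(B ∘ₗ (S r : X →ₗ[ℝ] X)) x‖ ≤ (b * (C₀ + E) / r) * ‖x‖ := by
      intro x
      have hDx := hD x 0 r h0
      have hAx := hA x 0 r h0
      simp only [iteratedDeriv_zero] at hDx hAx
      have h2 := hSderiv x 1 r le_rfl h0 h1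
      have h3 := hSb1 r h0.le h1 x
      have h4 := hB _ hDx
      rw [hAx] at h4
      simp only [Nat.cast_one, mul_one, pow_one] at h2
      have h5 : E * ‖x‖ ≤ E / r * ‖x‖ := by
        gcongr
        rw [le_div_iff₀ h0]
        nlinarith
      calc ‖B (S r x)‖ ≤ _ := h4
        _ ≤ b * (C₀ / r * ‖x‖ + E / r * ‖x‖) := by
          gcongr
          exact h3.trans h5
        _ = _ := by ring
    refine ⟨LinearMap.mkContinuous _ _ hbd, fun x => rfl, ?_⟩
    exact LinearMap.mkContinuous_norm_le _ (by positivity) _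
  set N : ℝ := 2 * b * (C₀ + E) * E with hN
  have hN0 : 0 < N := by positivity
  set c : ℝ := 2 * Real.exp 1 * C₀ with hc
  have hc1 : 1 ≤ c := by
    have : 1 ≤ Real.exp 1 := Real.one_le_exp zero_le_one
    nlinarith
  -- bounds for `B S(τ) u₀`
  have hobs : ∀ (u₀ : X) (s t : ℝ), 0 ≤ s → 0 < t - s → t - s ≤ 1 →
      ContDiffOn ℝ (⊤ : ℕ∞) (fun τ => B (S τ u₀)) (Ioi (s + (t - s) / 2)) ∧
      ∀ m : ℕ, ‖iteratedDeriv m (fun τ => B (S τ u₀)) t‖ ≤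
        (N / (t - s) * ‖S s u₀‖) * (Nat.factorial m) * (c / (t - s)) ^ m := by
    intro u₀ s t hs h0 h1
    set r := t - s with hr
    obtain ⟨L, hLe, hLn⟩ := hL (r / 2) (by linarith) (by linarith)
    set x := S s u₀ with hx
    have heq : EqOn (fun τ => B (S τ u₀)) (L ∘ fun τ => S (τ - (s + r / 2)) x)
        (Ioi (s + r / 2)) := by
      intro τ hτ
      have hτ' : 0 ≤ τ - (s + r / 2) := by
        have : s + r / 2 < τ := hτ
        linarith
      have e1 : S τ u₀ = S (r / 2) (S (τ - (s + r / 2)) x) := by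
        have : τ = r / 2 + ((τ - (s + r / 2)) + s) := by ring
        conv_lhs => rw [this]
        rw [hSsemi _ _ (by linarith) (by linarith), hSsemi _ _ hτ' hs]
        rfl
      simp only [Function.comp, hLe]
      rw [e1]
    have hsm : ∀ τ ∈ Ioi (s + r / 2),
        ContDiffAt ℝ (⊤ : ℕ∞) (fun τ => S (τ - (s + r / 2)) x) τ := by
      intro τ hτ
      have hτ' : 0 < τ - (s + r / 2) := by
        have : s + r / 2 < τ := hτ
        linarith
      exact ContDiffAt.comp τ (hCA x _ hτ') (by fun_prop)
    refine ⟨ContDiffOn.congr (fun τ hτ => ?_) heq, fun m => ?_⟩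
    · exact (L.contDiff.contDiffAt.comp τ (hsm τ hτ)).contDiffWithinAt
    · have ht : t ∈ Ioi (s + r / 2) := by
        simp only [mem_Ioi]; linarith
      rw [heq.iteratedDeriv_of_isOpen isOpen_Ioi m ht]
      have h2 := L.norm_iteratedFDeriv_comp_left (n := m) (hsm t ht) (by exact_mod_cast le_top)
      rw [norm_iteratedFDeriv_eq_norm_iteratedDeriv, norm_iteratedFDeriv_eq_norm_iteratedDeriv,
        iteratedDeriv_comp_sub_const m (fun τ => S τ x)] at h2
      have h3 : t - (s + r / 2) = r / 2 := by rw [hr]; ring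
      simp only [h3] at h2
      have hder : ‖iteratedDeriv m (fun τ => S τ x) (r / 2)‖ ≤
          E * ((Nat.factorial m) * (c / r) ^ m) * ‖x‖ := by
        rcases Nat.eq_zero_or_pos m with rfl | hm
        · simpa using hSb1 (r / 2) (by linarith) (by linarith) x
        · refine (hSderiv x m (r / 2) hm (by linarith) (by linarith)).trans ?_
          gcongr
          have hf : (0:ℝ) < Nat.factorial m := by exact_mod_cast Nat.factorial_pos m
          have h4 : (m : ℝ) ^ m ≤ Nat.factorial m * Real.exp 1 ^ m := by
            have := Real.pow_div_factorial_le_exp (x := (m : ℝ)) (by positivity) m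
            rw [div_le_iff₀ hf] at this
            rw [← Real.exp_nat_mul, mul_one]
            linarith
          calc (C₀ * m / (r / 2)) ^ m = (m : ℝ) ^ m * (2 * C₀ / r) ^ m := by
                rw [← mul_pow]; congr 1; field_simp
            _ ≤ (Nat.factorial m * Real.exp 1 ^ m) * (2 * C₀ / r) ^ m := by gcongr
            _ = 1 * (Nat.factorial m * (c / r) ^ m) := by
                rw [mul_assoc, ← mul_pow, one_mul, hc]; congr 2; ring
            _ ≤ _ := by gcongr
      calc _ ≤ _ := h2
        _ ≤ (b * (C₀ + E) / (r / 2)) * (E * ((Nat.factorial m) * (c / r) ^ m) * ‖x‖) := by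
          gcongr
        _ = _ := by rw [hN]; field_simp
  have hmain : ∀ (u₀ : X) (s t : ℝ) (β : ℕ), 0 ≤ s → 0 < t - s → t - s ≤ 1 →
      |iteratedDeriv β (fun τ => ‖B (S τ u₀)‖ ^ 2) t| ≤
        (N / (t - s) * ‖S s u₀‖) ^ 2 * (Nat.factorial β) * (2 * (c / (t - s))) ^ β := by
    intro u₀ s t β hs h0 h1
    obtain ⟨h2, h3⟩ := hobs u₀ s t hs h0 h1
    exact aux_leibniz isOpen_Ioi h2 (by simp only [mem_Ioi]; linarith) (by positivity)
      (by positivity) h3 β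
  constructor
  · intro u₀ t₀ ht₀
    have ht₀' : 0 < t₀ := ht₀
    set δ : ℝ := min (t₀ / 2) (1 / 3) with hδ
    have hδ0 : 0 < δ := by positivity
    have hδ1 : δ ≤ t₀ / 2 := min_le_left _ _
    have hδ2 : δ ≤ 1 / 3 := min_le_right _ _
    have hbal : ∀ t ∈ Metric.ball t₀ δ, δ < t - (t₀ - 2 * δ) ∧ t - (t₀ - 2 * δ) ≤ 1 := by
      intro t ht
      rw [Metric.mem_ball, Real.dist_eq, abs_lt] at ht
      constructor <;> linarith [ht.1, ht.2]
    refine aux_analyticAt (δ := δ) (C := (N / δ * ‖S (t₀ - 2 * δ) u₀‖) ^ 2) (R := 2 * (c / δ))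
      hδ0 (by positivity) (by positivity) ?_ ?_
    · intro t ht
      obtain ⟨h1, h2⟩ := hbal t ht
      obtain ⟨h3, -⟩ := hobs u₀ (t₀ - 2 * δ) t (by linarith) (by linarith) h2
      have h4 : ContDiffAt ℝ (⊤ : ℕ∞) (fun τ => B (S τ u₀)) t :=
        h3.contDiffAt (Ioi_mem_nhds (by linarith))
      exact h4.norm_sq ℝ
    · intro t ht n
      obtain ⟨h1, h2⟩ := hbal t ht
      refine (hmain u₀ (t₀ - 2 * δ) t n (by linarith) (by linarith) h2).trans ?_
      have : 0 < t - (t₀ - 2 * δ) := by linarith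
      gcongr
  · refine ⟨N ^ 2 + 1, by nlinarith [sq_nonneg N], 1 / (2 * c), ⟨by positivity, ?_⟩, ?_⟩
    · rw [div_lt_one (by positivity)]
      linarith
    · intro u₀ s t β hs h0 h1
      refine (hmain u₀ s t β hs h0 h1).trans ?_
      have e : (1 / (2 * c) * (t - s)) ^ (-(β : ℤ)) = (2 * (c / (t - s))) ^ β := by
        rw [zpow_neg, zpow_natCast, ← inv_pow]
        congr 1
        field_simp
      have e2 : (t - s) ^ (-(2:ℤ)) = ((t - s) ^ 2)⁻¹ := by
        rw [zpow_neg]; norm_cast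
      rw [e, e2]
      calc _ = N ^ 2 * ((t - s) ^ 2)⁻¹ * (Nat.factorial β) * (2 * (c / (t - s))) ^ β
              * ‖S s u₀‖ ^ 2 := by rw [mul_pow, div_pow, div_eq_mul_inv]; generalize ((t - s) ^ 2)⁻¹ = w; ring
        _ ≤ _ := by
          gcongr
          linarith
end

section
/- For every ρ ∈ (0,1] and every r ∈ (0,1] there exist constants C ≥ 1 and θ ∈ (0,1), depending only on ρ and r, with the following property: whenever a ∈ ℝ, s > 0, M > 0, f : [a, a+s] → ℝ is infinitely differentiable and satisfies |f^{(β)}(x)| ≤ M β! (sρ)^{-β} for all x ∈ [a, a+s] and all β ∈ ℕ, and Ê ⊆ [a, a+s] is a Lebesgue-measurable set with |Ê| ≥ r s, then sup_{x ∈ [a,a+s]} |f(x)| ≤ C M^{1-θ} ( (1/|Ê|) ∫_Ê |f(x)| dx )^θ. -/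
open MeasureTheory Set

lemma ps_points (h : ℝ) (hh : 0 < h) (n : ℕ) : ∀ F : Set ℝ, IsCompact F →
    ENNReal.ofReal (n * h) ≤ volume F →
    ∃ x : ℕ → ℝ, (∀ i < n, x i ∈ F) ∧ ∀ i j, i < j → j < n → ((j:ℝ) - i) * h ≤ x j - x i := by
  induction n with
  | zero => intro F _ _; exact ⟨fun _ => 0, by simp, by intro i j _ hj; omega⟩
  | succ n ih =>
    intro F hF hv
    have hne : F.Nonempty := by
      rcases F.eq_empty_or_nonempty with h0 | h0
      · rw [h0] at hv
        simp only [measure_empty, nonpos_iff_eq_zero, ENNReal.ofReal_eq_zero] at hv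
        have : 0 < ((n+1:ℕ):ℝ) * h := by positivity
        linarith
      · exact h0
    obtain ⟨x0, hx0, hmin⟩ := hF.exists_isLeast hne
    have hF' : IsCompact (F ∩ Ici (x0 + h)) := hF.inter_right isClosed_Ici
    have hsub : F ⊆ Icc x0 (x0 + h) ∪ (F ∩ Ici (x0 + h)) := by
      intro y hy
      have := hmin hy
      rcases le_total y (x0 + h) with h1 | h1
      · left; exact ⟨this, h1⟩
      · right; exact ⟨hy, h1⟩
    have h1 : volume F ≤ ENNReal.ofReal h + volume (F ∩ Ici (x0 + h)) := by
      refine (measure_mono hsub).trans ((measure_union_le _ _).trans ?_)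
      simp [Real.volume_Icc]
    have h2 : ENNReal.ofReal (n * h) ≤ volume (F ∩ Ici (x0 + h)) := by
      have h3 : ENNReal.ofReal (((n+1:ℕ):ℝ) * h) = ENNReal.ofReal h + ENNReal.ofReal (n * h) := by
        rw [← ENNReal.ofReal_add hh.le (by positivity)]; congr 1; push_cast; ring
      rw [h3] at hv
      exact (ENNReal.add_le_add_iff_left ENNReal.ofReal_ne_top).1 (hv.trans h1)
    obtain ⟨x, hx, hs⟩ := ih _ hF' h2
    refine ⟨fun i => Nat.casesOn i x0 x, ?_, ?_⟩
    · intro i hi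
      cases i with
      | zero => exact hx0
      | succ i => exact (hx i (by omega)).1
    · intro i j hij hj
      cases j with
      | zero => omega
      | succ j =>
        cases i with
        | zero =>
          have h4 : x0 + h ≤ x 0 := (hx 0 (by omega)).2
          have h5 : ((j:ℝ) - (0:ℕ)) * h ≤ x j - x 0 := by
            rcases Nat.eq_zero_or_pos j with h0 | h0
            · subst h0; simp
            · exact hs 0 j h0 (by omega)
          push_cast at h5 ⊢
          change ((j:ℝ) + 1 - 0) * h ≤ x j - x0
          linarith
        | succ i =>
          have := hs i j (by omega) (by omega)
          push_cast
          change ((j:ℝ) + 1 - (i + 1)) * h ≤ x j - x i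
          linarith

lemma ps_prod (i k : ℕ) : ∏ j ∈ (Finset.range (i + 1 + k)).erase i, |(i:ℝ) - j| =
    (i.factorial : ℝ) * k.factorial := by
  have h0 : ∏ j ∈ (Finset.range (i + 1 + k)).erase i, |(i:ℝ) - j| =
      ∏ j ∈ Finset.range (i + 1 + k), if j = i then 1 else |(i:ℝ) - j| := by
    rw [← Finset.mul_prod_erase (Finset.range (i+1+k)) _ (a := i) (by simp; omega)]
    simp only [if_true, one_mul]
    refine Finset.prod_congr rfl fun j hj => ?_
    rw [if_neg (Finset.ne_of_mem_erase hj)]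
  rw [h0, Finset.prod_range_add, Finset.prod_range_succ, if_pos rfl, mul_one]
  congr 1
  · rw [← Finset.prod_range_reflect, ← Finset.prod_range_add_one_eq_factorial]
    push_cast
    refine Finset.prod_congr rfl fun j hj => ?_
    have hj := Finset.mem_range.1 hj
    rw [if_neg (by omega)]
    have : ((i - 1 - j : ℕ) : ℝ) = i - 1 - j := by
      rw [Nat.sub_sub, Nat.cast_sub (by omega)]; push_cast; ring
    rw [this]
    have : (i:ℝ) - (i - 1 - j) = j + 1 := by ring
    rw [this, abs_of_pos (by positivity)]
  · rw [← Finset.prod_range_add_one_eq_factorial]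
    push_cast
    refine Finset.prod_congr rfl fun j hj => ?_
    rw [if_neg (by omega)]
    have : (i:ℝ) - (i + 1 + j) = -(j + 1) := by ring
    rw [this, abs_neg, abs_of_pos (by positivity)]

lemma ps_sum (n : ℕ) : ∑ i ∈ Finset.range (n+1), ((i.factorial : ℝ) * (n - i).factorial)⁻¹ =
    2 ^ n / n.factorial := by
  have h := Nat.sum_range_choose n
  have h' : ∑ i ∈ Finset.range (n+1), (n.choose i : ℝ) = 2 ^ n := by exact_mod_cast h
  rw [← h', Finset.sum_div]
  refine Finset.sum_congr rfl fun i hi => ?_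
  have hi := Finset.mem_range.1 hi
  rw [Nat.cast_choose ℝ (by omega)]
  field_simp

open Polynomial in
lemma ps_poly (n : ℕ) (P : ℝ[X]) (hP : P.degree < ((n+1 : ℕ) : WithBot ℕ)) (x : ℕ → ℝ) (p δ c h η : ℝ)
    (hδ : 0 < δ) (hc : 0 < c) (hc1 : c ≤ 1) (hh : (n+1) * h = c * δ)
    (hx : ∀ i < n+1, x i ∈ Icc p (p + δ))
    (hs : ∀ i j, i < j → j < n+1 → ((j:ℝ) - i) * h ≤ x j - x i)
    (hη : ∀ i < n+1, |P.eval (x i)| ≤ η) (y : ℝ) (hy : y ∈ Icc p (p + δ)) :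
    |P.eval y| ≤ (2 * Real.exp 1 / c) ^ (n+1) * η := by
  have hη0 : 0 ≤ η := (abs_nonneg _).trans (hη 0 (by omega))
  have hh0 : 0 < h := by
    have : 0 < ((n:ℝ)+1) * h := by rw [hh]; positivity
    exact pos_of_mul_pos_right this (by positivity)
  have hsep : ∀ i < n+1, ∀ j < n+1, |(i:ℝ) - j| * h ≤ |x i - x j| := by
    intro i hi j hj
    rcases lt_trichotomy i j with h1 | h1 | h1
    · have h2 := hs i j h1 hj
      have h3 : (i:ℝ) < j := by exact_mod_cast h1
      rw [abs_sub_comm (x i), abs_sub_comm (i:ℝ), abs_of_pos (sub_pos.2 h3)]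
      exact h2.trans (le_abs_self _)
    · subst h1; simp
    · have h2 := hs j i h1 hi
      have h3 : (j:ℝ) < i := by exact_mod_cast h1
      rw [abs_of_pos (sub_pos.2 h3)]
      exact h2.trans (le_abs_self _)
  have hinj : Set.InjOn x (Finset.range (n+1) : Finset ℕ) := by
    intro i hi j hj hij
    have := hsep i (by simpa using hi) j (by simpa using hj)
    rw [hij, sub_self, abs_zero] at this
    by_contra hne
    have h3 : (0:ℝ) < |(i:ℝ) - j| := abs_pos.2 (sub_ne_zero.2 (by exact_mod_cast hne))
    nlinarith [mul_pos h3 hh0]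
  have hPe := Lagrange.eq_interpolate hinj (f := P) (by simpa using hP)
  have hbasis : ∀ i ∈ Finset.range (n+1), |(Lagrange.basis (Finset.range (n+1)) x i).eval y| ≤
      (δ / h) ^ n * ((i.factorial : ℝ) * (n - i).factorial)⁻¹ := by
    intro i hi
    have hi' := Finset.mem_range.1 hi
    rw [Lagrange.basis, eval_prod, Finset.abs_prod]
    have h1 : ∏ j ∈ (Finset.range (n+1)).erase i, |eval y (Lagrange.basisDivisor (x i) (x j))| ≤
        ∏ j ∈ (Finset.range (n+1)).erase i, ((δ / h) * |(i:ℝ) - j|⁻¹) := by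
      refine Finset.prod_le_prod (fun _ _ => abs_nonneg _) fun j hj => ?_
      have hji := Finset.ne_of_mem_erase hj
      have hj' := Finset.mem_range.1 (Finset.mem_of_mem_erase hj)
      have h3 : (0:ℝ) < |(i:ℝ) - j| := abs_pos.2 (sub_ne_zero.2 (by exact_mod_cast hji.symm))
      have h4 : |y - x j| ≤ δ := by
        have := hx j hj'
        rw [abs_le]; constructor <;> linarith [this.1, this.2, hy.1, hy.2]
      have h5 := hsep i hi' j hj'
      simp only [Lagrange.basisDivisor, eval_mul, eval_C, eval_sub, eval_X, abs_mul, abs_inv]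
      calc |x i - x j|⁻¹ * |y - x j| ≤ (|(i:ℝ) - j| * h)⁻¹ * δ := by gcongr
        _ = _ := by field_simp
    refine h1.trans (le_of_eq ?_)
    rw [Finset.prod_mul_distrib, Finset.prod_const, Finset.card_erase_of_mem hi, Finset.card_range,
      Finset.prod_inv_distrib]
    have h2 : n + 1 = i + 1 + (n - i) := by omega
    have := ps_prod i (n - i)
    rw [← h2] at this
    rw [this, Nat.add_sub_cancel]
  have hmain : |P.eval y| ≤ ∑ i ∈ Finset.range (n+1),
      η * ((δ / h) ^ n * ((i.factorial : ℝ) * (n - i).factorial)⁻¹) := by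
    conv_lhs => rw [hPe]
    rw [Lagrange.interpolate_apply, eval_finsetSum]
    refine (Finset.abs_sum_le_sum_abs _ _).trans (Finset.sum_le_sum fun i hi => ?_)
    rw [eval_mul, eval_C, abs_mul]
    exact mul_le_mul (hη i (Finset.mem_range.1 hi)) (hbasis i hi) (abs_nonneg _) hη0
  rw [← Finset.mul_sum, ← Finset.mul_sum, ps_sum] at hmain
  refine hmain.trans ?_
  rw [mul_comm]
  gcongr
  have h6 : δ / h = (n+1) / c := by
    field_simp; linarith
  have h7 : ((n+1 : ℝ)) ^ (n+1) / (n+1).factorial ≤ Real.exp (n+1) :=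
    Real.pow_div_factorial_le_exp (x := (n+1:ℝ)) (by positivity) (n+1)
  have h8 : Real.exp (n+1) = Real.exp 1 ^ (n+1) := by
    rw [← Real.exp_nat_mul]; push_cast; ring_nf
  have h9 : ((n+1 : ℝ)) ^ (n+1) / (n+1).factorial = (n+1) ^ n / n.factorial := by
    rw [Nat.factorial_succ]; push_cast; rw [pow_succ]; field_simp
  rw [h6]
  calc ((n+1:ℝ) / c) ^ n * (2 ^ n / n.factorial) = (2 / c) ^ n * ((n+1) ^ n / n.factorial) := by
        rw [div_pow, div_pow]; ring
    _ ≤ (2 / c) ^ (n+1) * Real.exp 1 ^ (n+1) := by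
        rw [← h8, ← h9]
        gcongr
        · rw [le_div_iff₀ hc]; linarith
        · omega
    _ = _ := by rw [← mul_pow]; ring

lemma ps_opt (A : ℝ) (hA : 1 < A) : ∃ θ ∈ Ioo (0:ℝ) 1, ∀ u η M : ℝ, 0 < M → 0 ≤ η → u ≤ M →
    (∀ N : ℕ, u ≤ A ^ N * η + 2 * M * (1/2) ^ N) → u ≤ M * 6 * (η / M) ^ θ := by
  have hl2 : 0 < Real.log 2 := Real.log_pos (by norm_num)
  have hlA : 0 < Real.log A := Real.log_pos hA
  have hl : Real.log (2 * A) = Real.log 2 + Real.log A := Real.log_mul (by norm_num) (by positivity)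
  have hθ0 : 0 < Real.log 2 / Real.log (2 * A) := by rw [hl]; positivity
  refine ⟨Real.log 2 / Real.log (2 * A), ⟨hθ0, ?_⟩, ?_⟩
  · rw [hl, div_lt_one (by positivity)]; linarith
  intro u η M hM hη huM h
  set θ := Real.log 2 / Real.log (2 * A) with hθ
  have h2A : (2 * A) ^ θ = 2 := by
    rw [Real.rpow_def_of_pos (by positivity), hθ, mul_div_cancel₀ _ (by rw [hl]; positivity),
      Real.exp_log (by norm_num)]
  rcases hη.eq_or_lt with h0 | h0
  · subst h0
    rw [zero_div, Real.zero_rpow hθ0.ne', mul_zero]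
    have ht : Filter.Tendsto (fun N : ℕ => 2 * M * (1/2 : ℝ) ^ N) Filter.atTop (nhds (2 * M * 0)) :=
      (tendsto_pow_atTop_nhds_zero_of_lt_one (by norm_num) (by norm_num)).const_mul _
    rw [mul_zero] at ht
    exact ge_of_tendsto' ht fun N => by simpa using h N
  rcases le_total M η with h1 | h1
  · have : 1 ≤ (η / M) ^ θ := Real.one_le_rpow ((one_le_div hM).2 h1) hθ0.le
    nlinarith
  set t := η / M with htd
  have ht0 : 0 < t := by positivity
  have ht1 : t ≤ 1 := (div_le_one hM).2 h1
  have hηt : η = M * t := by rw [htd]; field_simp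
  obtain ⟨N, hN1, hN2⟩ := exists_nat_pow_near (x := 1 / t) (y := 2 * A) ((one_le_div ht0).2 ht1) (by linarith)
  have h3 : A ^ N * t ≤ (1/2) ^ N := by
    rw [le_div_iff₀ ht0, mul_pow] at hN1
    have : (0:ℝ) < 2 ^ N := by positivity
    rw [one_div, inv_pow, ← one_div, le_div_iff₀ this]
    linarith
  have h4 : (1/2 : ℝ) ^ (N+1) ≤ t ^ θ := by
    have h5 : (1 / t) ^ θ ≤ ((2 * A) ^ (N+1)) ^ θ := Real.rpow_le_rpow (by positivity) hN2.le hθ0.le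
    rw [← Real.rpow_natCast, ← Real.rpow_mul (by positivity), mul_comm _ θ,
      Real.rpow_mul (by positivity), h2A, Real.rpow_natCast, Real.div_rpow (by positivity) ht0.le,
      Real.one_rpow] at h5
    have h6 : 0 < t ^ θ := by positivity
    rw [one_div, inv_pow, ← one_div, div_le_iff₀ (by positivity)]
    rw [div_le_iff₀ h6] at h5
    linarith
  have h5 := h N
  rw [hηt] at h5
  have h6 : A ^ N * (M * t) ≤ M * (1/2) ^ N := by
    calc A ^ N * (M * t) = M * (A ^ N * t) := by ring
      _ ≤ _ := by gcongr
  rw [pow_succ] at h4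
  have h7 := mul_le_mul_of_nonneg_left h4 hM.le
  linarith

open Polynomial in
lemma ps_taylor (f : ℝ → ℝ) (p δ : ℝ) (n : ℕ) : ∃ P : ℝ[X], P.degree < ((n+1 : ℕ) : WithBot ℕ) ∧
    ∀ y, P.eval y = taylorWithinEval f n (Icc p (p + δ)) p y := by
  refine ⟨∑ k ∈ Finset.range (n+1),
    C ((k.factorial : ℝ)⁻¹ * iteratedDerivWithin k f (Icc p (p + δ)) p) * (X - C p) ^ k, ?_, ?_⟩
  · refine lt_of_le_of_lt (degree_sum_le _ _) ?_
    rw [Finset.sup_lt_iff (WithBot.bot_lt_coe _)]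
    intro k hk
    refine lt_of_le_of_lt ((degree_mul_le _ _).trans (add_le_add_left degree_C_le _)) ?_
    rw [degree_pow, degree_X_sub_C, zero_add, nsmul_one]
    exact_mod_cast Finset.mem_range.1 hk
  · intro y
    rw [taylor_within_apply, eval_finsetSum]
    refine Finset.sum_congr rfl fun k _ => ?_
    simp
    ring

lemma ps_local_N (c ρ q : ℝ) (hc : 0 < c) (hc1 : c ≤ 1) (hρ : 0 < ρ)
    (hq : 0 < q) (hqA : 4 * (2 * Real.exp 1 / c) * q ≤ 1)
    (a s M δ : ℝ) (f : ℝ → ℝ) (hs : 0 < s) (hM : 0 < M) (hδ : 0 < δ) (hδq : δ ≤ s * ρ * q)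
    (hf : ContDiffOn ℝ (⊤ : ℕ∞) f (Icc a (a + s)))
    (hb : ∀ (β : ℕ), ∀ x ∈ Icc a (a + s), |iteratedDerivWithin β f (Icc a (a + s)) x| ≤
            M * (Nat.factorial β) * (s * ρ) ^ (-(β : ℤ)))
    (p : ℝ) (hp : Icc p (p + δ) ⊆ Icc a (a + s)) (F : Set ℝ) (hF : IsCompact F)
    (hFK : F ⊆ Icc p (p + δ)) (hv : ENNReal.ofReal (c * δ) ≤ volume F) (η : ℝ) (hη : 0 ≤ η)
    (hFη : ∀ y ∈ F, |f y| ≤ η) (x : ℝ) (hx : x ∈ Icc p (p + δ)) (N : ℕ) :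
    |f x| ≤ (2 * Real.exp 1 / c) ^ N * η + 2 * M * (1/2) ^ N := by
  set A := 2 * Real.exp 1 / c with hA
  have hA1 : 1 ≤ A := by
    rw [hA, le_div_iff₀ hc]
    have := Real.add_one_le_exp (1:ℝ)
    linarith
  cases N with
  | zero =>
    have := hb 0 x (hp hx)
    simp at this ⊢
    linarith
  | succ n =>
    have hbK : ∀ y ∈ Icc p (p + δ), ‖iteratedDerivWithin (n+1) f (Icc p (p + δ)) y‖ ≤
        M * (Nat.factorial (n+1)) * (s * ρ) ^ (-((n+1 : ℕ) : ℤ)) := by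
      intro y hy
      have h1 : iteratedDerivWithin (n+1) f (Icc p (p + δ)) y =
          iteratedDerivWithin (n+1) f (Icc a (a + s)) y := by
        simp only [iteratedDerivWithin]
        rw [iteratedFDerivWithin_subset hp (uniqueDiffOn_Icc (by linarith))
          (uniqueDiffOn_Icc (by linarith)) (hf.of_le (by exact_mod_cast le_top)) hy]
      rw [h1, Real.norm_eq_abs]
      exact hb _ _ (hp hy)
    have hT : ∀ y ∈ Icc p (p + δ), |f y - taylorWithinEval f n (Icc p (p + δ)) p y| ≤
        M * (2 * q) ^ (n+1) := by
      intro y hy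
      have h1 := taylor_mean_remainder_bound (n := n) (by linarith)
        ((hf.mono hp).of_le (by exact_mod_cast le_top)) hy hbK
      rw [Real.norm_eq_abs] at h1
      refine h1.trans ?_
      have h2 : (y - p) ^ (n+1) ≤ (s * ρ * q) ^ (n+1) := by
        have : 0 ≤ y - p := by linarith [hy.1]
        gcongr
        linarith [hy.2]
      have h3 : ((n+1 : ℕ):ℝ) ≤ 2 ^ (n+1) := by exact_mod_cast Nat.lt_two_pow_self.le
      calc M * (Nat.factorial (n+1)) * (s * ρ) ^ (-((n+1 : ℕ) : ℤ)) * (y - p) ^ (n+1) / n.factorial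
          ≤ M * (Nat.factorial (n+1)) * (s * ρ) ^ (-((n+1 : ℕ) : ℤ)) * (s * ρ * q) ^ (n+1)
            / n.factorial := by gcongr
        _ = M * ((n+1 : ℕ) * q ^ (n+1)) := by
            rw [zpow_neg, zpow_natCast, Nat.factorial_succ, mul_pow (s * ρ)]
            push_cast
            field_simp
        _ ≤ M * (2 ^ (n+1) * q ^ (n+1)) := by gcongr
        _ = _ := by rw [mul_pow]
    obtain ⟨P, hPd, hPe⟩ := ps_taylor f p δ n
    have hh : ((n+1 : ℕ) : ℝ) * (c * δ / (n+1)) = c * δ := by push_cast; field_simp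
    obtain ⟨z, hzF, hzs⟩ := ps_points (c * δ / (n+1)) (by positivity) (n+1) F hF (by rw [hh]; exact hv)
    have hPb := ps_poly n P hPd z p δ c (c * δ / (n+1)) (η + M * (2 * q) ^ (n+1)) hδ hc hc1
      (by exact_mod_cast hh) (fun i hi => hFK (hzF i hi)) hzs (by
        intro i hi
        have h1 := hT _ (hFK (hzF i hi))
        have h2 := hFη _ (hzF i hi)
        rw [hPe]
        rw [abs_le] at h1 h2 ⊢
        constructor <;> linarith [h1.1, h1.2, h2.1, h2.2]) x hx
    rw [← hA] at hPb
    have h1 := hT x hx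
    rw [← hPe] at h1
    have h2 : |f x| ≤ |P.eval x| + |f x - P.eval x| := by
      have := abs_add_le (P.eval x) (f x - P.eval x)
      simpa using this
    have h3 : A ^ (n+1) * (M * (2*q)^(n+1)) ≤ M * (1/2)^(n+1) := by
      have : A ^ (n+1) * (M * (2*q)^(n+1)) = M * (A * (2 * q))^(n+1) := by rw [mul_pow A]; ring
      rw [this]
      gcongr
      linarith
    have h4 : M * (2*q)^(n+1) ≤ M * (1/2)^(n+1) := by
      gcongr
      nlinarith
    rw [mul_add] at hPb
    linarith

lemma ps_chain (c C0 θ0 : ℝ) (hc1 : c ≤ 1/2) (hC0 : 1 ≤ C0) (hθ0 : θ0 ∈ Ioo (0:ℝ) 1) (n : ℕ) :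
    ∃ C ≥ (1:ℝ), ∃ θ ∈ Ioc (0:ℝ) 1, ∀ (a s M δ u v η : ℝ) (f : ℝ → ℝ), 0 < M → 0 < δ →
    (∀ p, Icc p (p + δ) ⊆ Icc a (a + s) → ∀ F : Set ℝ, IsCompact F → F ⊆ Icc p (p + δ) →
      ENNReal.ofReal (c * δ) ≤ volume F → ∀ η, 0 ≤ η → (∀ y ∈ F, |f y| ≤ η) →
      ∀ x ∈ Icc p (p + δ), |f x| ≤ M * C0 * (η / M) ^ θ0) →
    a ≤ u → v ≤ a + s → u + δ ≤ v → 0 ≤ η → (∀ y ∈ Icc u v, |f y| ≤ η) →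
    ∀ x ∈ Icc a (a + s), u - n * (δ / 2) ≤ x → x ≤ v + n * (δ / 2) →
      |f x| ≤ M * C * (η / M) ^ θ := by
  induction n with
  | zero =>
    refine ⟨1, le_rfl, 1, ⟨one_pos, le_rfl⟩, ?_⟩
    intro a s M δ u v η f hM hδ H hau hv huv hη hf x hx h1 h2
    rw [Real.rpow_one, mul_one, mul_div_cancel₀ _ hM.ne']
    simp at h1 h2
    exact hf x ⟨h1, h2⟩
  | succ n ih =>
    obtain ⟨C, hC, θ, hθ, ih⟩ := ih
    refine ⟨C0 * C ^ θ0, ?_, θ * θ0, ⟨mul_pos hθ.1 hθ0.1, ?_⟩, ?_⟩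
    · have := Real.one_le_rpow hC hθ0.1.le
      nlinarith
    · nlinarith [hθ.1, hθ.2, hθ0.1, hθ0.2]
    intro a s M δ u v η f hM hδ H hau hv huv hη hf x hx h1 h2
    have ih' := ih a s M δ u v η f hM hδ H hau hv huv hη hf
    have hnn : (0:ℝ) ≤ n * (δ / 2) := by positivity
    push_cast at h1 h2
    have hη' : 0 ≤ M * C * (η / M) ^ θ := by positivity
    have hfin : M * C0 * (M * C * (η / M) ^ θ / M) ^ θ0 = M * (C0 * C ^ θ0) * (η / M) ^ (θ * θ0) := by
      have : M * C * (η / M) ^ θ / M = C * (η / M) ^ θ := by field_simp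
      rw [this, Real.mul_rpow (by positivity) (by positivity), ← Real.rpow_mul (by positivity)]
      ring
    rw [← hfin]
    -- the local step applied to an interval of length `δ` containing `x`
    have step : ∀ p l, a ≤ p → p + δ ≤ a + s → x ∈ Icc p (p + δ) → p ≤ l → l + δ / 2 ≤ p + δ →
        u - n * (δ / 2) ≤ l → l + δ / 2 ≤ v + n * (δ / 2) →
        |f x| ≤ M * C0 * (M * C * (η / M) ^ θ / M) ^ θ0 := by
      intro p l hp1 hp2 hxp hl1 hl2 hl3 hl4
      refine H p (Icc_subset_Icc hp1 hp2) (Icc l (l + δ / 2)) isCompact_Icc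
        (Icc_subset_Icc hl1 hl2) ?_ _ hη' ?_ x hxp
      · rw [Real.volume_Icc]
        apply ENNReal.ofReal_le_ofReal
        nlinarith
      · intro y hy
        exact ih' y ⟨by linarith [hy.1], by linarith [hy.2]⟩ (by linarith [hy.1]) (by linarith [hy.2])
    rcases le_total x u with h3 | h3
    · exact step x (x + δ / 2) hx.1 (by linarith) ⟨le_rfl, by linarith⟩ (by linarith) (by linarith)
        (by linarith) (by linarith)
    rcases le_total x (u + δ) with h4 | h4
    · exact step u u hau (by linarith) ⟨h3, h4⟩ le_rfl (by linarith) (by linarith) (by linarith)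
    · exact step (x - δ) (x - δ) (by linarith) (by linarith [hx.2]) ⟨by linarith, by linarith⟩ le_rfl
        (by linarith) (by linarith) (by linarith)

lemma ps_pigeon (a δ c : ℝ) (hδ : 0 < δ) (n : ℕ) (hn : 0 < n) (F : Set ℝ)
    (hF : F ⊆ Icc a (a + n * δ)) (hv : ENNReal.ofReal (c * (n * δ)) ≤ volume F) :
    ∃ k < n, ENNReal.ofReal (c * δ) ≤ volume (F ∩ Icc (a + k * δ) (a + k * δ + δ)) := by
  by_contra! hcon
  have hsub : F ⊆ ⋃ k ∈ Finset.range n, F ∩ Icc (a + k * δ) (a + k * δ + δ) := by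
    intro y hy
    have hy' := hF hy
    simp only [mem_iUnion, Finset.mem_range]
    have h0 : 0 ≤ (y - a) / δ := div_nonneg (by linarith [hy'.1]) hδ.le
    by_cases hlt : y < a + n * δ
    · refine ⟨⌊(y - a) / δ⌋₊, ?_, hy, ?_, ?_⟩
      · rw [Nat.floor_lt h0, div_lt_iff₀ hδ]; linarith
      · have := Nat.floor_le h0
        rw [le_div_iff₀ hδ] at this; linarith
      · have := (Nat.lt_floor_add_one ((y - a) / δ)).le
        rw [div_le_iff₀ hδ] at this; linarith
    · have : ((n - 1 : ℕ) : ℝ) = n - 1 := by rw [Nat.cast_sub hn]; simp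
      refine ⟨n - 1, by omega, hy, ?_, ?_⟩ <;> rw [this] <;> nlinarith [hy'.2]
  have h1 := (measure_mono hsub).trans (measure_biUnion_finset_le (μ := volume) _ _)
  have h2 : ∑ k ∈ Finset.range n, volume (F ∩ Icc (a + k * δ) (a + k * δ + δ)) <
      ∑ k ∈ Finset.range n, ENNReal.ofReal (c * δ) :=
    ENNReal.sum_lt_sum_of_nonempty (by simpa using hn.ne') fun k hk => hcon k (Finset.mem_range.1 hk)
  have h3 : ∑ k ∈ Finset.range n, ENNReal.ofReal (c * δ) = ENNReal.ofReal (c * (n * δ)) := by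
    rw [Finset.sum_const, Finset.card_range, ← ENNReal.ofReal_nsmul, nsmul_eq_mul]
    congr 1; ring
  rw [h3] at h2
  exact absurd (hv.trans h1) (not_le.2 h2)

lemma ps_cheb (f : ℝ → ℝ) (E : Set ℝ) (hE : MeasurableSet E) (hEf : volume E ≠ ⊤)
    (hE0 : volume E ≠ 0) (hf : IntegrableOn f E) :
    volume E / 2 ≤ volume {y | y ∈ E ∧ |f y| ≤ 2 * ((volume E).toReal⁻¹ * ∫ y in E, |f y|)} := by
  set ε := (volume E).toReal⁻¹ * ∫ y in E, |f y| with hε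
  have hm : 0 < (volume E).toReal := ENNReal.toReal_pos hE0 hEf
  have hint : (volume E).toReal * ε = ∫ y in E, |f y| := by rw [hε]; field_simp
  have hε0 : 0 ≤ ε := by
    rw [hε]
    have : 0 ≤ ∫ y in E, |f y| := integral_nonneg fun _ => abs_nonneg _
    positivity
  have hG : volume (E ∩ {y | 2 * ε < |f y|}) ≤ volume E / 2 := by
    rcases hε0.eq_or_lt with h0 | h0
    · rw [← h0, mul_zero] at hint
      have h1 := (integral_eq_zero_iff_of_nonneg (fun _ => abs_nonneg _) hf.abs).1 hint.symm
      have h2 : volume.restrict E {y | 2 * ε < |f y|} = 0 := by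
        rw [← h0]
        refine measure_mono_null ?_ (ae_iff.1 h1)
        intro y hy
        simp at hy ⊢
        exact hy
      rw [Measure.restrict_apply' hE, inter_comm] at h2
      rw [h2]; exact zero_le
    · have h1 := mul_meas_ge_le_integral_of_nonneg (μ := volume.restrict E)
        (Filter.Eventually.of_forall fun y => abs_nonneg (f y)) hf.abs (2 * ε)
      rw [← hint] at h1
      have h2 : (volume.restrict E).real {y | 2 * ε ≤ |f y|} ≤ (volume E).toReal / 2 := by
        by_contra! hh
        nlinarith
      have h3 : volume (E ∩ {y | 2 * ε < |f y|}) ≤ volume.restrict E {y | 2 * ε ≤ |f y|} := by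
        rw [Measure.restrict_apply' hE, inter_comm]
        exact measure_mono (inter_subset_inter_left _ fun y hy => (show 2 * ε < |f y| from hy).le)
      refine h3.trans ?_
      have hfin : volume.restrict E {y | 2 * ε ≤ |f y|} ≠ ⊤ := by
        refine ne_top_of_le_ne_top hEf ?_
        exact (measure_mono (subset_univ _)).trans (by simp)
      rw [← ENNReal.toReal_le_toReal hfin (ENNReal.div_ne_top hEf (by norm_num))]
      simpa [Measure.real] using h2
  have hsub : volume E ≤ volume {y | y ∈ E ∧ |f y| ≤ 2 * ε} + volume (E ∩ {y | 2 * ε < |f y|}) := by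
    refine (measure_mono ?_).trans (measure_union_le _ _)
    intro y hy
    rcases le_or_gt (|f y|) (2 * ε) with h | h
    · left; exact ⟨hy, h⟩
    · right; exact ⟨hy, h⟩
  have h4 : volume E / 2 + volume E / 2 ≤
      volume {y | y ∈ E ∧ |f y| ≤ 2 * ε} + volume E / 2 := by
    rw [ENNReal.add_halves]
    exact hsub.trans (by gcongr)
  exact (ENNReal.add_le_add_iff_right (ENNReal.div_ne_top hEf (by norm_num))).1 h4


/-- **Propagation of smallness from measurable sets for analytic functions on an interval.**
Given `ρ ∈ (0,1]` and `r ∈ (0,1]` there are `C ≥ 1` and `θ ∈ (0,1)` such that any `f`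
satisfying the quantitative analyticity bounds
`|f^{(β)}(x)| ≤ M β! (sρ)^{-β}` on `[a, a+s]`, and any measurable `Ehat ⊆ [a,a+s]` with
`|Ehat| ≥ r s`, satisfy
`sup_{[a,a+s]} |f| ≤ C M^{1-θ} ((1/|Ehat|) ∫_Ehat |f|)^θ`. -/
theorem propagation_of_smallness_measurable_sets
    (ρ r : ℝ) (hρ : ρ ∈ Set.Ioc (0:ℝ) 1) (hr : r ∈ Set.Ioc (0:ℝ) 1) :
    ∃ C ≥ (1:ℝ), ∃ θ ∈ Set.Ioo (0:ℝ) 1,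
      ∀ (a s M : ℝ) (f : ℝ → ℝ) (Ehat : Set ℝ),
        0 < s → 0 < M →
        ContDiffOn ℝ (⊤ : ℕ∞) f (Set.Icc a (a + s)) →
        (∀ (β : ℕ), ∀ x ∈ Set.Icc a (a + s),
          |iteratedDerivWithin β f (Set.Icc a (a + s)) x| ≤
            M * (Nat.factorial β) * (s * ρ) ^ (-(β : ℤ))) →
        MeasurableSet Ehat → Ehat ⊆ Set.Icc a (a + s) →
        ENNReal.ofReal (r * s) ≤ volume Ehat →
        ∀ x ∈ Set.Icc a (a + s),
          |f x| ≤ C * M ^ (1 - θ) *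
            (((volume Ehat).toReal)⁻¹ * ∫ y in Ehat, |f y|) ^ θ := by
  obtain ⟨hρ0, hρ1⟩ := hρ
  obtain ⟨hr0, hr1⟩ := hr
  set A := 2 * Real.exp 1 / (r / 2) with hA
  have hA1 : 1 < A := by
    rw [hA, lt_div_iff₀ (by positivity)]
    have := Real.add_one_le_exp (1:ℝ)
    linarith
  set q := 1 / (4 * A) with hq
  have hq0 : 0 < q := by positivity
  obtain ⟨θ0, hθ0, hopt⟩ := ps_opt A hA1
  obtain ⟨n, hn⟩ := exists_nat_ge (1 / (ρ * q))
  have hn0 : 0 < n := by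
    have : 0 < 1 / (ρ * q) := by positivity
    exact_mod_cast this.trans_le hn
  obtain ⟨C, hC, θ, hθ, hchain⟩ := ps_chain (r/2) 6 θ0 (by linarith) (by norm_num)
    hθ0 (2 * n)
  have hΘ0 : 0 < θ0 * θ := mul_pos hθ0.1 hθ.1
  have hC' : 1 ≤ C * (6 * 2 ^ θ0) ^ θ := by
    have h1 : (1:ℝ) ≤ 2 ^ θ0 := Real.one_le_rpow (by norm_num) hθ0.1.le
    have h2 : 1 ≤ (6 * (2:ℝ) ^ θ0) ^ θ := Real.one_le_rpow (by linarith) hθ.1.le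
    nlinarith
  refine ⟨C * (6 * 2 ^ θ0) ^ θ, hC', θ0 * θ, ⟨hΘ0, by nlinarith [hθ0.1, hθ0.2, hθ.1, hθ.2]⟩, ?_⟩
  intro a s M f E hs hM hf hb hEm hE hEv x hx
  have hnR : (0:ℝ) < n := by exact_mod_cast hn0
  set δ := s / n with hδd
  have hδ : 0 < δ := by positivity
  have hnδ : n * δ = s := by rw [hδd]; field_simp
  have hδq : δ ≤ s * ρ * q := by
    rw [hδd, div_le_iff₀ hnR]
    rw [div_le_iff₀ (by positivity)] at hn
    nlinarith
  have hloc : ∀ p, Icc p (p + δ) ⊆ Icc a (a + s) → ∀ F : Set ℝ, IsCompact F → F ⊆ Icc p (p + δ) →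
      ENNReal.ofReal (r / 2 * δ) ≤ volume F → ∀ η, 0 ≤ η → (∀ y ∈ F, |f y| ≤ η) →
      ∀ x ∈ Icc p (p + δ), |f x| ≤ M * 6 * (η / M) ^ θ0 := by
    intro p hp F hF hFK hv η hη hFη x hx
    refine hopt _ η M hM hη (by simpa using hb 0 x (hp hx)) fun N => ?_
    exact ps_local_N (r/2) ρ q (by positivity) (by linarith) hρ0 hq0
      (by rw [← hA, hq]; apply le_of_eq; field_simp) a s M δ f hs hM hδ hδq hf hb p hp F hF hFK hv η hη
      hFη x hx N
  have hEtop : volume E ≠ ⊤ := ne_top_of_le_ne_top (by simp [Real.volume_Icc]) (measure_mono hE)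
  have hE0 : volume E ≠ 0 := by
    intro h0
    rw [h0] at hEv
    have : 0 < r * s := by positivity
    simp at hEv
    linarith
  have hcont := hf.continuousOn
  have hint : IntegrableOn f E := (hcont.integrableOn_Icc).mono_set hE
  have hcheb := ps_cheb f E hEm hEtop hE0 hint
  set ε := (volume E).toReal⁻¹ * ∫ y in E, |f y| with hε
  have hε0 : 0 ≤ ε := by
    have : 0 ≤ ∫ y in E, |f y| := integral_nonneg fun _ => abs_nonneg _
    rw [hε]; positivity
  set F := Icc a (a + s) ∩ (fun y => |f y|) ⁻¹' Iic (2 * ε) with hF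
  have hFc : IsCompact F := isCompact_Icc.of_isClosed_subset
    (hcont.abs.preimage_isClosed_of_isClosed isClosed_Icc isClosed_Iic) inter_subset_left
  have hFv : ENNReal.ofReal (r / 2 * (n * δ)) ≤ volume F := by
    have h1 : volume E / 2 ≤ volume F :=
      hcheb.trans (measure_mono fun y hy => ⟨hE hy.1, hy.2⟩)
    refine le_trans ?_ h1
    have h2 : ENNReal.ofReal (r / 2 * (n * δ)) = ENNReal.ofReal (r * s) / 2 := by
      rw [hnδ, show r / 2 * s = r * s / 2 by ring, ENNReal.ofReal_div_of_pos (by norm_num)]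
      simp
    rw [h2]
    gcongr
  obtain ⟨k, hk, hkv⟩ := ps_pigeon a δ (r/2) hδ n hn0 F
    (by rw [hnδ]; exact inter_subset_left) hFv
  have hk1 : (k:ℝ) + 1 ≤ n := by exact_mod_cast hk
  have hk2 : ((k:ℝ) + 1) * δ ≤ s := by rw [← hnδ]; gcongr
  have hk0 : 0 ≤ (k:ℝ) * δ := by positivity
  have h1 := hloc (a + k * δ) (Icc_subset_Icc (by linarith) (by linarith))
    (F ∩ Icc (a + k * δ) (a + k * δ + δ)) (hFc.inter_right isClosed_Icc) inter_subset_right hkv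
    (2 * ε) (by positivity) (fun y hy => hy.1.2)
  have h2n : ((2 * n : ℕ) : ℝ) * (δ / 2) = s := by push_cast; linarith
  have h2 := hchain a s M δ (a + k * δ) (a + k * δ + δ) _ f hM hδ hloc (by linarith) (by linarith)
    le_rfl (by positivity) h1 x hx (by rw [h2n]; linarith [hx.1]) (by rw [h2n]; linarith [hx.2])
  refine h2.trans (le_of_eq ?_)
  have h3 : M * 6 * (2 * ε / M) ^ θ0 / M = (6 * 2 ^ θ0) * (ε / M) ^ θ0 := by
    rw [mul_div_assoc 2 ε M, Real.mul_rpow (by norm_num) (by positivity)]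
    field_simp
  rw [h3, Real.mul_rpow (by positivity) (by positivity), ← Real.rpow_mul (by positivity),
    Real.div_rpow hε0 hM.le, Real.rpow_sub hM, Real.rpow_one]
  field_simp
end

section
/- Assume the observability inequality from time intervals: there are constants d > 0 and k > 0 such that for every L ∈ (0,1] and every u₀ ∈ D, ‖S(L) u₀‖_X² ≤ e^{d / L^k} ∫_0^L ‖B S(t) u₀‖_U² dt. Let η ∈ (0,1). Then there exist constants C > 0 and θ ∈ (0,1) (depending only on d, k, C₀, b, η, M, α, but not on t₁, t₂ or u₀) with the following property: for all 0 ≤ t₁ < t₂ with t₂ - t₁ ≤ 1 and every Lebesgue-measurable set E ⊆ [t₁, t₂] with |E ∩ (t₁,t₂)| ≥ η (t₂ - t₁), every u₀ ∈ D satisfies, writing u(t) = S(t)u₀: ‖u(t₂)‖_X ≤ ( C e^{C/(t₂-t₁)^k} ∫_{t₁}^{t₂} χ_E(t) ‖B u(t)‖_U dt )^θ ‖u(t₁)‖_X^{1-θ}. -/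
open MeasureTheory Set

lemma pts_exist (h : ℝ) (hh : 0 < h) (a : ℝ) : ∀ (n : ℕ) (F : Set ℝ), (∀ x ∈ F, a ≤ x) →
    ENNReal.ofReal (n * h) < volume F →
    ∃ t : ℕ → ℝ, (∀ i ≤ n, t i ∈ F) ∧ ∀ i j, i < j → j ≤ n → ((j:ℝ) - i) * h ≤ t j - t i := by
  intro n
  induction n with
  | zero =>
    intro F _ hF
    have : F.Nonempty := by
      rw [Set.nonempty_iff_ne_empty]; rintro rfl; simp at hF
    obtain ⟨x, hx⟩ := this
    exact ⟨fun _ => x, fun _ _ => hx, fun i j h1 h2 => by omega⟩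
  | succ n ih =>
    intro F ha hF
    have hne : F.Nonempty := by
      rw [Set.nonempty_iff_ne_empty]; rintro rfl; simp at hF
    have hbdd : BddBelow F := ⟨a, ha⟩
    obtain ⟨c, hc0, hc1⟩ := ENNReal.lt_iff_exists_real_btwn.1 hF
    have hc2 := hc1.2
    have hc3 : ((n+1:ℕ):ℝ) * h < c := by
      have := hc1.1
      exact (ENNReal.ofReal_lt_ofReal_iff_of_nonneg (by positivity)).1 this
    obtain ⟨x, hx, hxs⟩ := exists_lt_of_csInf_lt hne
      (show sInf F < sInf F + (c - ((n+1:ℕ):ℝ) * h) by linarith)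
    have hsub : F ⊆ Icc (sInf F) (x + h) ∪ (F ∩ Ici (x+h)) := by
      intro y hy
      by_cases hyx : x + h ≤ y
      · exact Or.inr ⟨hy, hyx⟩
      · exact Or.inl ⟨csInf_le hbdd hy, by linarith⟩
    have hm := (measure_mono (μ := volume) hsub).trans (measure_union_le _ _)
    rw [Real.volume_Icc] at hm
    have hF' : ENNReal.ofReal (n * h) < volume (F ∩ Ici (x+h)) := by
      by_contra hcon
      push Not at hcon
      have h1 : volume F ≤ ENNReal.ofReal (x + h - sInf F + n * h) := by
        rw [ENNReal.ofReal_add _ (by positivity)]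
        · exact hm.trans (by gcongr)
        · have := csInf_le hbdd hx; linarith
      have h2 : x + h - sInf F + n * h ≤ c := by push_cast at hxs; linarith
      exact absurd (hc2.trans_le (h1.trans (ENNReal.ofReal_le_ofReal h2))) (lt_irrefl _)
    obtain ⟨t, ht1, ht2⟩ := ih (F ∩ Ici (x+h)) (fun y hy => ha y hy.1) hF'
    refine ⟨fun i => Nat.casesOn i x t, ?_, ?_⟩
    · intro i hi
      cases i with
      | zero => exact hx
      | succ i => exact (ht1 i (by omega)).1
    · intro i j hij hj
      cases j with
      | zero => omega
      | succ j =>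
        cases i with
        | zero =>
          have h0 : x + h ≤ t 0 := (ht1 0 (by omega)).2
          rcases Nat.eq_zero_or_pos j with rfl | hj0
          · simp; linarith
          · have := ht2 0 j hj0 (by omega)
            change (((j+1:ℕ):ℝ) - ((0:ℕ):ℝ)) * h ≤ t j - x
            push_cast at this ⊢
            linarith
        | succ i =>
          have := ht2 i j (by omega) (by omega)
          push_cast
          simpa using this

lemma prod_dist (i k : ℕ) : ∏ j ∈ (Finset.range (i+1+k)).erase i, |(i:ℝ) - j| = i.factorial * k.factorial := by
  have : ∏ j ∈ (Finset.range (i+1+k)).erase i, |(i:ℝ) - j|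
      = ∏ j ∈ Finset.range (i+1+k), if j = i then 1 else |(i:ℝ) - j| := by
    rw [← Finset.mul_prod_erase (Finset.range (i+1+k)) _ (a := i) (by simp; omega)]
    simp only [if_true, one_mul]
    apply Finset.prod_congr rfl
    intro j hj
    rw [if_neg (Finset.ne_of_mem_erase hj)]
  rw [this, Finset.prod_range_add, Finset.prod_range_succ, if_pos rfl, mul_one]
  congr 1
  · rw [← Finset.prod_range_reflect, ← Finset.prod_range_add_one_eq_factorial]
    push_cast
    apply Finset.prod_congr rfl
    intro j hj
    have hj := Finset.mem_range.1 hj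
    rw [if_neg (by omega)]
    rw [Nat.sub_sub, Nat.cast_sub (by omega)]
    push_cast
    rw [abs_of_nonneg] <;> [ring; (ring_nf; positivity)]
  · rw [← Finset.prod_range_add_one_eq_factorial]
    push_cast
    apply Finset.prod_congr rfl
    intro j hj
    rw [if_neg (by omega), abs_sub_comm]
    rw [abs_of_nonneg] <;> [ring; (ring_nf; positivity)]

lemma lagr {U : Type*} [NormedAddCommGroup U] [NormedSpace ℝ U] (n : ℕ) (c : ℕ → U) (r h ε : ℝ)
    (hh : 0 < h) (hr : 0 ≤ r) (hε : 0 ≤ ε)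
    (t : ℕ → ℝ) (ht : ∀ i ≤ n, t i ∈ Icc 0 r)
    (hsep : ∀ i j, i < j → j ≤ n → ((j:ℝ) - i) * h ≤ t j - t i)
    (hp : ∀ i ≤ n, ‖∑ m ∈ Finset.range (n+1), (t i)^m • c m‖ ≤ ε) (x : ℝ) (hx : x ∈ Icc 0 r) :
    ‖∑ m ∈ Finset.range (n+1), x^m • c m‖ ≤ (2 * r / h)^n / n.factorial * ε := by
  have habs : ∀ i j, i ≤ n → j ≤ n → |(i:ℝ) - j| * h ≤ |t i - t j| := by
    intro i j hi hj
    rcases lt_trichotomy i j with h1 | h1 | h1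
    · have := hsep i j h1 hj
      have h2 : (i:ℝ) < j := by exact_mod_cast h1
      rw [abs_sub_comm, abs_of_pos (by linarith), abs_sub_comm]
      exact this.trans (le_abs_self _)
    · subst h1; simp
    · have := hsep j i h1 hi
      have h2 : (j:ℝ) < i := by exact_mod_cast h1
      rw [abs_of_pos (by linarith)]
      exact this.trans (le_abs_self _)
  have hinj : Set.InjOn t (Finset.range (n+1)) := by
    intro i hi j hj hij
    simp only [Finset.coe_range, mem_Iio] at hi hj
    by_contra hne
    have h1 := habs i j (by omega) (by omega)
    rw [hij, sub_self, abs_zero] at h1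
    have h2 : 0 < |(i:ℝ) - j| := abs_pos.2 (sub_ne_zero.2 (by exact_mod_cast hne))
    nlinarith [mul_pos h2 hh]
  set ℓ : ℕ → ℝ := fun i => (Lagrange.basis (Finset.range (n+1)) t i).eval x with hℓ
  have hmon : ∀ m ∈ Finset.range (n+1), x^m = ∑ i ∈ Finset.range (n+1), (t i)^m * ℓ i := by
    intro m hm
    have hm := Finset.mem_range.1 hm
    have := Lagrange.eq_interpolate (f := (Polynomial.X^m : Polynomial ℝ)) hinj (by
      rw [Polynomial.degree_X_pow]; simp; exact_mod_cast hm)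
    have h2 := congrArg (Polynomial.eval x) this
    rw [Lagrange.interpolate_apply, Polynomial.eval_finsetSum] at h2
    simpa using h2
  have hsum : ∑ m ∈ Finset.range (n+1), x^m • c m
      = ∑ i ∈ Finset.range (n+1), ℓ i • ∑ m ∈ Finset.range (n+1), (t i)^m • c m := by
    simp_rw [Finset.smul_sum]
    rw [Finset.sum_comm]
    apply Finset.sum_congr rfl
    intro m hm
    rw [hmon m hm, Finset.sum_smul]
    apply Finset.sum_congr rfl
    intro i _
    rw [smul_smul, mul_comm]
  have hℓb : ∀ i ∈ Finset.range (n+1), |ℓ i| ≤ (r/h)^n / n.factorial * (n.choose i) := by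
    intro i hi
    have hi' : i ≤ n := by have := Finset.mem_range.1 hi; omega
    have hcard : ((Finset.range (n+1)).erase i).card = n := by
      rw [Finset.card_erase_of_mem hi]; simp
    have h1 : |ℓ i| ≤ ∏ j ∈ (Finset.range (n+1)).erase i, ((r/h) * (|(i:ℝ) - j|)⁻¹) := by
      simp only [hℓ, Lagrange.basis, Polynomial.eval_prod, Finset.abs_prod]
      apply Finset.prod_le_prod
      · intros; positivity
      · intro j hj
        have hjn : j ≤ n := by have := Finset.mem_range.1 (Finset.mem_of_mem_erase hj); omega
        have hne := Finset.ne_of_mem_erase hj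
        have h2 : 0 < |(i:ℝ) - j| := abs_pos.2 (sub_ne_zero.2 (by exact_mod_cast hne.symm))
        have h3 := habs i j hi' hjn
        have h4 := ht j hjn
        simp only [Lagrange.basisDivisor, Polynomial.eval_mul, Polynomial.eval_C, Polynomial.eval_sub,
          Polynomial.eval_X, abs_mul, abs_inv]
        have h5 : |x - t j| ≤ r := by rw [abs_le]; constructor <;> linarith [hx.1, hx.2, h4.1, h4.2]
        calc |t i - t j|⁻¹ * |x - t j| ≤ (|(i:ℝ) - j| * h)⁻¹ * r := by gcongr
          _ = _ := by rw [mul_inv, div_eq_mul_inv]; ring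
    refine h1.trans (le_of_eq ?_)
    rw [Finset.prod_mul_distrib, Finset.prod_const, hcard, Finset.prod_inv_distrib]
    obtain ⟨k, rfl⟩ := Nat.exists_eq_add_of_le hi'
    have := prod_dist i k
    rw [show i + 1 + k = i + k + 1 by ring] at this
    rw [this, Nat.cast_add_choose]
    field_simp
  rw [hsum]
  calc _ ≤ ∑ i ∈ Finset.range (n+1), (r/h)^n / n.factorial * (n.choose i) * ε := by
        refine (norm_sum_le _ _).trans (Finset.sum_le_sum fun i hi => ?_)
        rw [norm_smul, Real.norm_eq_abs]
        have hi' : i ≤ n := by have := Finset.mem_range.1 hi; omega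
        exact mul_le_mul (hℓb i hi) (hp i hi') (norm_nonneg _) (by positivity)
    _ = _ := by
        rw [← Finset.sum_mul, ← Finset.mul_sum]
        have : ∑ i ∈ Finset.range (n+1), (n.choose i : ℝ) = 2^n := by exact_mod_cast Nat.sum_range_choose n
        rw [this, mul_div_assoc, mul_pow]
        ring

lemma taylor_bd {U : Type*} [NormedAddCommGroup U] [NormedSpace ℝ U] (a b K : ℝ) :
    ∀ (n : ℕ) (f : ℕ → ℝ → U), (∀ m, ∀ t ∈ Icc a b, HasDerivAt (f m) (f (m+1) t) t) →
    (∀ t ∈ Icc a b, ‖f (n+1) t‖ ≤ K) → ∀ t ∈ Icc a b,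
    ‖f 0 t - ∑ m ∈ Finset.range (n+1), (t-a)^m • ((m.factorial:ℝ)⁻¹ • f m a)‖ ≤ K * (t-a)^(n+1) / (n+1).factorial := by
  have key : ∀ (n : ℕ) (g g' : ℝ → U), (∀ t ∈ Icc a b, HasDerivAt g (g' t) t) → g a = 0 →
     (∀ t ∈ Icc a b, ‖g' t‖ ≤ K * (t-a)^n / n.factorial) → ∀ t ∈ Icc a b, ‖g t‖ ≤ K * (t-a)^(n+1) / (n+1).factorial := by
    intro n g g' hg hga hg' t ht
    refine image_norm_le_of_norm_deriv_right_le_deriv_boundary (f := g) (f' := g')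
      (B := fun t => K * (t-a)^(n+1) / (n+1).factorial) (B' := fun t => K * (t-a)^n / n.factorial) (a := a) (b := b)
      (fun t ht => (hg t ht).continuousAt.continuousWithinAt)
      (fun t ht => (hg t ⟨ht.1, ht.2.le⟩).hasDerivWithinAt) (by simp [hga]) ?_
      (fun t ht => hg' t ⟨ht.1, ht.2.le⟩) ht
    intro t
    have := (((((hasDerivAt_id t).sub_const a).pow (n+1)).const_mul K).div_const ((n+1).factorial:ℝ))
    refine this.congr_deriv ?_
    simp [Nat.factorial_succ]
    field_simp
  intro n
  induction n with
  | zero =>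
    intro f hf hb t ht
    have := key 0 (fun t => f 0 t - f 0 a) (f 1) (fun t ht => (hf 0 t ht).sub_const _) (by simp)
      (by simpa using hb) t ht
    simpa using this
  | succ n ih =>
    intro f hf hb t ht
    have h1 := ih (fun m => f (m+1)) (fun m => hf (m+1)) hb
    refine key (n+1) (fun t => f 0 t - ∑ m ∈ Finset.range (n+1+1), (t-a)^m • ((m.factorial:ℝ)⁻¹ • f m a)) _ ?_ ?_ h1 t ht
    · intro t ht
      refine (hf 0 t ht).sub ?_
      have : ∀ m ∈ Finset.range (n+1+1), HasDerivAt (fun t:ℝ => (t-a)^m • ((m.factorial:ℝ)⁻¹ • f m a))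
          (((m:ℝ) * (t-a)^(m-1)) • ((m.factorial:ℝ)⁻¹ • f m a)) t := by
        intro m _
        have := (((hasDerivAt_id t).sub_const a).pow m).smul_const ((m.factorial:ℝ)⁻¹ • f m a)
        simpa using this
      have h2 := HasDerivAt.fun_sum this
      convert h2 using 1
      rw [Finset.sum_range_succ' _ (n+1)]
      simp only [Nat.cast_zero, zero_mul, zero_smul, add_zero]
      apply Finset.sum_congr rfl
      intro m _
      rw [smul_smul, smul_smul]
      congr 1
      simp [Nat.factorial_succ]
      field_simp
    · simp [Finset.sum_range_succ']

lemma optim (C₁ : ℝ) (hC : 1 < C₁) (x ε K : ℝ) (hε : 0 ≤ ε) (hK : 0 ≤ K) (hxK : x ≤ K)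
    (hx : ∀ n : ℕ, x ≤ C₁^n * ε + 2 * K * (1/2)^n) :
    x ≤ 6 * K ^ (1 - Real.log 2 / Real.log (2*C₁)) * ε ^ (Real.log 2 / Real.log (2*C₁)) := by
  set θ := Real.log 2 / Real.log (2*C₁) with hθ
  have hl2 : 0 < Real.log 2 := Real.log_pos (by norm_num)
  have hl : Real.log 2 < Real.log (2*C₁) := Real.log_lt_log (by norm_num) (by linarith)
  have hθ0 : 0 < θ := div_pos hl2 (hl2.trans hl)
  have hθ1 : θ < 1 := (div_lt_one (hl2.trans hl)).2 hl
  rcases hε.eq_or_lt with rfl | hε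
  · have : Filter.Tendsto (fun n : ℕ => C₁^n * 0 + 2 * K * (1/2:ℝ)^n) Filter.atTop (nhds (C₁^0 * 0 + 2 * K * 0)) := by
      simp only [mul_zero, zero_add]
      simpa using (tendsto_pow_atTop_nhds_zero_of_lt_one (r := (1/2:ℝ)) (by norm_num) (by norm_num)).const_mul (2*K)
    have h2 := ge_of_tendsto' this hx
    rw [Real.zero_rpow hθ0.ne']
    simpa using h2
  rcases le_total K ε with hKε | hKε
  · refine hxK.trans ?_
    rcases hK.eq_or_lt with rfl | hK
    · positivity
    calc K = K ^ (1-θ) * K ^ θ := by rw [← Real.rpow_add hK]; simp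
      _ ≤ K ^ (1-θ) * ε ^ θ := by gcongr
      _ ≤ _ := by
        have : 0 ≤ K ^ (1-θ) * ε ^ θ := by positivity
        linarith
  have hK0 : 0 < K := hε.trans_le hKε
  obtain ⟨n, hn1, hn2⟩ := exists_nat_pow_near (x := K/ε) (y := 2*C₁) ((one_le_div hε).2 hKε) (by linarith)
  have h2θ : (2*C₁) ^ θ = 2 := by
    rw [Real.rpow_def_of_pos (by linarith), hθ, mul_div_cancel₀ _ (hl2.trans hl).ne', Real.exp_log (by norm_num)]
  have h3 : (K/ε)^θ ≤ 2^(n+1) := by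
    calc (K/ε)^θ ≤ ((2*C₁)^(n+1))^θ := by gcongr
      _ = ((2*C₁)^θ)^(n+1) := by
        rw [← Real.rpow_natCast, ← Real.rpow_natCast, ← Real.rpow_mul (by linarith), ← Real.rpow_mul (by linarith), mul_comm θ]
      _ = _ := by rw [h2θ]
  have h4 : C₁^n * ε ≤ K * (1/2)^n := by
    rw [le_div_iff₀ hε, mul_pow] at hn1
    rw [one_div, inv_pow, ← div_eq_mul_inv, le_div_iff₀ (by positivity)]
    linarith
  have h5 : x ≤ 3 * K * (1/2)^n := by linarith [hx n]
  have h6 : K^(1-θ) * ε^θ = K / (K/ε)^θ := by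
    rw [Real.div_rpow hK hε.le, Real.rpow_sub hK0, Real.rpow_one]
    field_simp
  rw [mul_assoc, h6]
  have h7 : 0 < (K/ε)^θ := by positivity
  calc x ≤ 3 * K * (1/2)^n := h5
    _ = 6 * (K / 2^(n+1)) := by rw [one_div, inv_pow, pow_succ]; field_simp; norm_num
    _ ≤ _ := by gcongr

lemma pigeon (N : ℕ) (hN : 0 < N) (E : Set ℝ) (a r m : ℝ) (hr : 0 < r) (hm : 0 < m)
    (hE : ENNReal.ofReal m ≤ volume (E ∩ Icc a (a + N * r))) :
    ∃ j < N, ENNReal.ofReal (m / N) ≤ volume (E ∩ Icc (a + j * r) (a + j * r + r)) := by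
  by_contra hcon
  push Not at hcon
  have hsub : E ∩ Icc a (a + N * r) ⊆ ⋃ j ∈ Finset.range N, E ∩ Icc (a + j * r) (a + j * r + r) := by
    rintro x ⟨hxE, hx1, hx2⟩
    simp only [mem_iUnion, Finset.mem_range]
    by_cases hx : x < a + N * r
    · have h0 : 0 ≤ (x - a) / r := div_nonneg (by linarith) hr.le
      have h1 := Nat.floor_le h0
      have h2 := Nat.lt_floor_add_one ((x-a)/r)
      rw [le_div_iff₀ hr] at h1
      rw [div_lt_iff₀ hr] at h2
      refine ⟨⌊(x-a)/r⌋₊, ?_, hxE, by linarith, by linarith⟩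
      rw [Nat.floor_lt h0, div_lt_iff₀ hr]; linarith
    · refine ⟨N-1, by omega, hxE, ?_, ?_⟩ <;>
      · rw [Nat.cast_sub (by omega)]; push_cast; nlinarith
  have h1 := (hE.trans (measure_mono hsub)).trans (measure_biUnion_finset_le _ _)
  have hne : (Finset.range N).Nonempty := by simp; omega
  have h2 : ∑ j ∈ Finset.range N, volume (E ∩ Icc (a + j * r) (a + j * r + r)) < ∑ j ∈ Finset.range N, ENNReal.ofReal (m / N) :=
    ENNReal.sum_lt_sum_of_nonempty hne (fun j hj => hcon j (Finset.mem_range.1 hj))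
  rw [Finset.sum_const, Finset.card_range, nsmul_eq_mul, ← ENNReal.ofReal_natCast, ← ENNReal.ofReal_mul (by positivity),
    mul_div_cancel₀ _ (by positivity)] at h2
  exact absurd (h1.trans_lt h2) (lt_irrefl _)

lemma local_est {U : Type*} [NormedAddCommGroup U] [NormedSpace ℝ U] (f : ℕ → ℝ → U) (a r δ q K e C₁ : ℝ)
    (hr : 0 < r) (hδ : 0 < δ) (hδ1 : δ < 1) (hq : 0 ≤ q) (hK : 0 ≤ K) (hC₁ : C₁ = 4 * Real.exp 1 / δ)
    (hCq : C₁ * q ≤ 1/2)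
    (hf : ∀ m, ∀ t ∈ Icc a (a+r), HasDerivAt (f m) (f (m+1) t) t)
    (hf0 : ∀ t ∈ Icc a (a+r), ‖f 0 t‖ ≤ K)
    (hfn : ∀ n : ℕ, ∀ t ∈ Icc a (a+r), ‖f (n+1) t‖ * r^(n+1) / (n+1).factorial ≤ K * q^(n+1))
    (G : Set ℝ) (hG : MeasurableSet G) (hGs : G ⊆ Icc a (a+r)) (hGv : ENNReal.ofReal (δ * r) ≤ volume G)
    (he : ∫ t in G, ‖f 0 t‖ ≤ e) (t : ℝ) (ht : t ∈ Icc a (a+r)) :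
    ‖f 0 t‖ ≤ 6 * K ^ (1 - Real.log 2 / Real.log (2*C₁)) * (2*e/(δ*r)) ^ (Real.log 2 / Real.log (2*C₁)) := by
  have he0 : 0 ≤ e := (integral_nonneg fun _ => norm_nonneg _).trans he
  have hexp : 1 < Real.exp 1 := by simp
  have hC1 : 1 < C₁ := by
    rw [hC₁, lt_div_iff₀ hδ]; linarith
  have hcont : ContinuousOn (f 0) (Icc a (a+r)) := fun t ht => (hf 0 t ht).continuousAt.continuousWithinAt
  have hint : IntegrableOn (fun t => ‖f 0 t‖) G :=
    (hcont.norm.integrableOn_compact isCompact_Icc).mono_set hGs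
  -- selection of good set
  have hmain : ∀ (n : ℕ) (ε : ℝ), 2*e/(δ*r) < ε → ‖f 0 t‖ ≤ C₁^(n+1) * ε + 2 * K * (1/2)^(n+1) := by
    intro n ε hε
    have hε0 : 0 < ε := lt_of_le_of_lt (by positivity) hε
    set F := G ∩ {t | ‖f 0 t‖ < ε} with hF
    have hbad : volume (G ∩ {t | ε ≤ ‖f 0 t‖}) ≤ ENNReal.ofReal (e/ε) := by
      have h1 := mul_meas_ge_le_integral_of_nonneg (μ := volume.restrict G) (Filter.Eventually.of_forall fun t => norm_nonneg (f 0 t)) hint ε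
      have hfin : (volume.restrict G) {t | ε ≤ ‖f 0 t‖} ≠ ⊤ := by
        refine ne_top_of_le_ne_top ?_ (measure_mono (subset_univ _))
        rw [Measure.restrict_apply_univ]
        exact ne_top_of_le_ne_top (by simp) (measure_mono hGs)
      have h2 : (volume.restrict G).real {t | ε ≤ ‖f 0 t‖} ≤ e/ε := by
        rw [le_div_iff₀ hε0, mul_comm]
        exact h1.trans he
      have h3 : volume (G ∩ {t | ε ≤ ‖f 0 t‖}) = (volume.restrict G) {t | ε ≤ ‖f 0 t‖} := by
        rw [Measure.restrict_apply' hG, inter_comm]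
      rw [h3, ← ENNReal.ofReal_toReal hfin]
      exact ENNReal.ofReal_le_ofReal h2
    have heε : e/ε < δ*r/2 := by
      rw [div_lt_iff₀ (by positivity)] at hε
      rw [div_lt_iff₀ hε0]; linarith
    set h : ℝ := δ * r / (2*(n+1)) with hh
    have hh0 : 0 < h := by positivity
    have hFv : ENNReal.ofReal (n * h) < volume F := by
      by_contra hcon
      push Not at hcon
      have hsub : G ⊆ F ∪ (G ∩ {t | ε ≤ ‖f 0 t‖}) := by
        intro y hy
        rcases lt_or_ge (‖f 0 y‖) ε with h1 | h1
        · exact Or.inl ⟨hy, h1⟩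
        · exact Or.inr ⟨hy, h1⟩
      have h1 := (hGv.trans (measure_mono hsub)).trans (measure_union_le _ _)
      have h2 := h1.trans (add_le_add hcon hbad)
      rw [← ENNReal.ofReal_add (by positivity) (by positivity)] at h2
      rw [ENNReal.ofReal_le_ofReal_iff (by positivity)] at h2
      have h3 : n * h ≤ δ*r/2 := by
        rw [hh, mul_div_assoc', div_le_div_iff₀ (by positivity) (by positivity)]
        have : 0 < δ * r := by positivity
        nlinarith
      linarith
    obtain ⟨s, hs1, hs2⟩ := pts_exist h hh0 a n F (fun x hx => (hGs hx.1).1) hFv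
    set c : ℕ → U := fun m => (m.factorial:ℝ)⁻¹ • f m a with hc
    have htay : ∀ t ∈ Icc a (a+r), ‖f 0 t - ∑ m ∈ Finset.range (n+1), (t-a)^m • c m‖ ≤ K * q^(n+1) := by
      intro t ht
      have h1 := taylor_bd a (a+r) (K * q^(n+1) * (n+1).factorial / r^(n+1)) n f hf (fun t ht => by
        rw [le_div_iff₀ (by positivity)]
        have := hfn n t ht
        rwa [div_le_iff₀ (by positivity)] at this) t ht
      refine h1.trans ?_
      have h2 : (t-a)^(n+1) ≤ r^(n+1) := pow_le_pow_left₀ (by linarith [ht.1]) (by linarith [ht.2]) _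
      rw [div_mul_eq_mul_div, div_div, div_le_iff₀ (by positivity)]
      calc _ ≤ K * q ^ (n + 1) * ↑(n + 1).factorial * r^(n+1) := by gcongr
        _ = _ := by ring
    have hlag := lagr n c r h (ε + K*q^(n+1)) hh0 hr.le (by positivity) (fun i => s i - a)
      (fun i hi => by have := hGs (hs1 i hi).1; exact ⟨by linarith [this.1], by linarith [this.2]⟩)
      (fun i j hij hj => by have := hs2 i j hij hj; linarith)
      (fun i hi => by
        have h1 := htay (s i) (hGs (hs1 i hi).1)
        have h2 : ‖f 0 (s i)‖ < ε := (hs1 i hi).2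
        have h3 := norm_sub_norm_le (∑ m ∈ Finset.range (n+1), (s i-a)^m • c m) (f 0 (s i))
        rw [norm_sub_rev] at h3
        linarith) (t - a) ⟨by linarith [ht.1], by linarith [ht.2]⟩
    have hΛ : (2 * r / h)^n / n.factorial ≤ C₁^(n+1) := by
      have h1 : 2 * r / h = 4 / δ * (n+1) := by rw [hh]; field_simp; norm_num
      have h2 := Real.pow_div_factorial_le_exp (n+1:ℝ) (by positivity) n
      have h3 : Real.exp (n+1:ℝ) = (Real.exp 1)^(n+1) := by
        rw [← Real.exp_nat_mul]; simp
      have h4 : 1 ≤ 4/δ := by rw [le_div_iff₀ hδ]; linarith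
      rw [h1, mul_pow, mul_div_assoc, hC₁, mul_div_right_comm, mul_pow, ← h3]
      gcongr
      omega
    have h1 := htay t ht
    have h2 : 0 ≤ ε + K * q^(n+1) := by positivity
    have h3 := norm_sub_norm_le (f 0 t) (∑ m ∈ Finset.range (n+1), (t-a)^m • c m)
    have h4 : (1:ℝ) ≤ C₁^(n+1) := one_le_pow₀ hC1.le
    have h5 : C₁^(n+1) * q^(n+1) ≤ (1/2)^(n+1) := by
      rw [← mul_pow]; exact pow_le_pow_left₀ (by positivity) hCq _
    have h6 : K * q^(n+1) ≤ C₁^(n+1) * (K * q^(n+1)) := le_mul_of_one_le_left (by positivity) h4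
    have h7 := mul_le_mul_of_nonneg_left h5 hK
    have h8 := mul_le_mul_of_nonneg_right hΛ h2
    nlinarith
  apply optim C₁ hC1 _ _ K (by positivity) hK (hf0 t ht)
  intro n
  cases n with
  | zero => 
    have := hf0 t ht
    have h2 : 0 ≤ 2*e/(δ*r) := by positivity
    simp; linarith
  | succ n =>
    have hp : 0 < C₁^(n+1) := by positivity
    have : ∀ ε > 2*e/(δ*r), (‖f 0 t‖ - 2 * K * (1/2)^(n+1)) / C₁^(n+1) ≤ ε := fun ε hε => by
      rw [div_le_iff₀ hp]; linarith [hmain n ε hε]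
    have := le_of_forall_gt_imp_ge_of_dense this
    rw [div_le_iff₀ hp] at this
    linarith

lemma deriv_B {X U : Type*} [NormedAddCommGroup X] [NormedSpace ℝ X]
    [NormedAddCommGroup U] [NormedSpace ℝ U]
    (u : ℝ → X) (hu : ContDiffOn ℝ (⊤ : ℕ∞) u (Set.Ioi 0))
    (D : Submodule ℝ X) (A : X →ₗ[ℝ] X) (B : X →ₗ[ℝ] U)
    (hD : ∀ (m : ℕ) (t : ℝ), 0 < t → iteratedDeriv m u t ∈ D)
    (hA : ∀ (m : ℕ) (t : ℝ), 0 < t → A (iteratedDeriv m u t) = iteratedDeriv (m + 1) u t)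
    (b : ℝ) (hB : ∀ v ∈ D, ‖B v‖ ≤ b * (‖A v‖ + ‖v‖)) (m : ℕ) (t : ℝ) (ht : 0 < t) :
    HasDerivAt (fun t => B (iteratedDeriv m u t)) (B (iteratedDeriv (m+1) u t)) t := by
  have hder : ∀ m, HasDerivAt (iteratedDeriv m u) (iteratedDeriv (m+1) u t) t := by
    intro m
    rw [iteratedDeriv_succ]
    apply DifferentiableAt.hasDerivAt
    have h1 := (hu.differentiableOn_iteratedDerivWithin (m := m)
      (by exact_mod_cast WithTop.coe_lt_top m) (uniqueDiffOn_Ioi 0)).differentiableAt (Ioi_mem_nhds ht)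
    refine h1.congr_of_eventuallyEq ?_
    filter_upwards [Ioi_mem_nhds ht] with s hs
    exact (iteratedDerivWithin_of_isOpen isOpen_Ioi hs).symm
  have h1 := hasDerivAt_iff_isLittleO.1 (hder m)
  have h2 := hasDerivAt_iff_isLittleO.1 (hder (m+1))
  rw [hasDerivAt_iff_isLittleO]
  have h3 := (h2.norm_left.add h1.norm_left).const_mul_left b
  refine Asymptotics.IsBigO.trans_isLittleO ?_ h3
  apply Asymptotics.IsBigO.of_bound 1
  filter_upwards [Ioi_mem_nhds ht] with s hs
  rw [one_mul]
  have hmem : iteratedDeriv m u s - iteratedDeriv m u t - (s - t) • iteratedDeriv (m+1) u t ∈ D :=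
    D.sub_mem (D.sub_mem (hD m s hs) (hD m t ht)) (D.smul_mem _ (hD _ t ht))
  have := hB _ hmem
  simp only [map_sub, map_smul, hA _ s hs, hA _ t ht] at this
  exact this.trans (le_abs_self _)

lemma fin_alg (A D' k θ L ε V : ℝ) (hA : 0 < A) (hD : 0 < D') (hθ : 0 < θ) (hL : 0 < L)
    (hε : 0 ≤ ε) (hV : 0 ≤ V) :
    A * Real.exp (D' / L^k) * ε^θ * V^(1-θ) ≤
     ((A^(1/θ) + D'/θ) * Real.exp ((A^(1/θ) + D'/θ) / L^k) * ε)^θ * V^(1-θ) := by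
  have hLk : 0 < L^k := by positivity
  have hA' : 0 < A^(1/θ) := by positivity
  have hD' : 0 < D'/θ := by positivity
  set C := A^(1/θ) + D'/θ with hC
  have hC0 : 0 < C := by positivity
  rw [Real.mul_rpow (by positivity) hε, Real.mul_rpow hC0.le (by positivity), ← Real.exp_mul]
  have h1 : A ≤ C^θ := by
    calc A = (A^(1/θ))^θ := by rw [← Real.rpow_mul hA.le]; field_simp; simp
      _ ≤ C^θ := by gcongr; linarith
  have h2 : D' / L^k ≤ C / L^k * θ := by
    rw [div_mul_eq_mul_div]
    gcongr
    rw [← div_le_iff₀ hθ]; linarith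
  gcongr

lemma inv_le_exp (L k : ℝ) (hL : 0 < L) (hk : 0 < k) : 1 / L ≤ Real.exp ((1/k) / L^k) := by
  have hLk : 0 < L^k := by positivity
  have h1 : Real.log (1/L^k) ≤ 1/L^k := by
    have := Real.log_le_sub_one_of_pos (show 0 < 1/L^k by positivity)
    linarith
  rw [one_div, Real.log_inv, Real.log_rpow hL] at h1
  rw [← Real.log_le_iff_le_exp (by positivity), one_div L, Real.log_inv, div_div, le_div_iff₀ (by positivity)]
  rw [inv_eq_one_div, le_div_iff₀ hLk] at h1
  linarith

lemma fact_bd (n : ℕ) : ((n+2:ℕ):ℝ)^(n+2) ≤ (Real.exp 1)^(n+2) * 2^(n+1) * (n+1).factorial := by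
  have h := Real.pow_div_factorial_le_exp ((n+2:ℕ):ℝ) (by positivity) (n+2)
  have h3 : Real.exp ((n+2:ℕ):ℝ) = (Real.exp 1)^(n+2) := by
    rw [← Real.exp_nat_mul]; simp
  rw [h3, div_le_iff₀ (by positivity)] at h
  refine h.trans ?_
  have h4 : (n+2) ≤ 2^(n+1) := Nat.lt_two_pow_self (n := n+1)
  have h5 : ((n+2:ℕ):ℝ) ≤ 2^(n+1) := by exact_mod_cast h4
  rw [Nat.factorial_succ (n+1), mul_assoc]
  push_cast at h5 ⊢
  rw [show (n:ℝ)+1+1 = n+2 by ring]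
  gcongr

lemma integ {X U : Type*} [NormedAddCommGroup X] [NormedAddCommGroup U]
    (w : ℝ → X) (g : ℝ → U) (hg : ContinuousOn g (Ioi 0)) (hw : ∀ t, w t = 0 → g t = 0) (c : ℝ → ℝ)
    (hobs : ∀ L : ℝ, 0 < L → L ≤ 1 → ‖w L‖ ^ 2 ≤ c L * ∫ t in (0:ℝ)..L, ‖g t‖ ^ 2)
    (L : ℝ) (hL : 0 < L) (hL1 : L ≤ 1) : IntegrableOn (fun t => ‖g t‖) (Ioc 0 L) := by
  have hsq : IntervalIntegrable (fun t => ‖g t‖^2) volume 0 L := by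
    by_contra hcon
    have h0 : ∀ L', 0 < L' → L' ≤ L → w L' = 0 := by
      intro L' h1 h2
      have hn : ¬ IntervalIntegrable (fun t => ‖g t‖^2) volume 0 L' := by
        intro h3
        apply hcon
        refine h3.trans (ContinuousOn.intervalIntegrable ?_)
        rw [uIcc_of_le h2]
        exact (hg.norm.pow 2).mono fun x hx => h1.trans_le hx.1
      have h4 := hobs L' h1 (h2.trans hL1)
      rw [intervalIntegral.integral_undef hn, mul_zero] at h4
      have : ‖w L'‖ = 0 := by nlinarith [norm_nonneg (w L')]
      simpa using this
    apply hcon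
    rw [intervalIntegrable_iff_integrableOn_Ioc_of_le hL.le]
    refine (integrableOn_zero).congr_fun (fun t ht => ?_) measurableSet_Ioc
    simp [hw t (h0 t ht.1 ht.2)]
  rw [intervalIntegrable_iff_integrableOn_Ioc_of_le hL.le] at hsq
  have h1 : IntegrableOn (fun _ : ℝ => (1:ℝ)) (Ioc 0 L) := by simp
  refine Integrable.mono' (h1.add hsq) ?_ ?_
  · exact (hg.norm.mono fun x hx => hx.1).aestronglyMeasurable measurableSet_Ioc
  · refine Filter.Eventually.of_forall fun t => ?_
    simp only [norm_norm, Pi.add_apply]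
    nlinarith [sq_nonneg (‖g t‖ - 1)]

set_option maxHeartbeats 2000000 in
lemma core
    {X U : Type*}
    [NormedAddCommGroup X] [InnerProductSpace ℝ X]
    [NormedAddCommGroup U] [InnerProductSpace ℝ U]
    (S : ℝ → X →L[ℝ] X)
    (hSsemi : ∀ t s : ℝ, 0 ≤ t → 0 ≤ s → S (t + s) = (S t).comp (S s))
    (M α : ℝ) (hM : 1 ≤ M) (hα : 0 ≤ α)
    (hSbound : ∀ t : ℝ, 0 ≤ t → ∀ x : X, ‖S t x‖ ≤ M * Real.exp (α * t) * ‖x‖)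
    (hSsmooth : ∀ x : X, ContDiffOn ℝ (⊤ : ℕ∞) (fun s => S s x) (Set.Ioi 0))
    (C₀ : ℝ) (hC₀ : 1 ≤ C₀)
    (hSderiv : ∀ (x : X) (m : ℕ) (t : ℝ), 1 ≤ m → 0 < t → t ≤ 1 →
      ‖iteratedDeriv m (fun s => S s x) t‖ ≤ (C₀ * m / t) ^ m * ‖x‖)
    (D : Submodule ℝ X) (A : X →ₗ[ℝ] X) (B : X →ₗ[ℝ] U)
    (hD : ∀ (x : X) (m : ℕ) (t : ℝ), 0 < t → iteratedDeriv m (fun s => S s x) t ∈ D)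
    (hA : ∀ (x : X) (m : ℕ) (t : ℝ), 0 < t →
      A (iteratedDeriv m (fun s => S s x) t) = iteratedDeriv (m + 1) (fun s => S s x) t)
    (b : ℝ) (hb : 0 < b)
    (hB : ∀ v ∈ D, ‖B v‖ ≤ b * (‖A v‖ + ‖v‖))
    (d k : ℝ) (hd : 0 < d) (hk : 0 < k)
    (hobs : ∀ L : ℝ, 0 < L → L ≤ 1 → ∀ u₀ ∈ D,
      ‖S L u₀‖ ^ 2 ≤ Real.exp (d / L ^ k) * ∫ t in (0:ℝ)..L, ‖B (S t u₀)‖ ^ 2)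
    (η : ℝ) (hη : η ∈ Set.Ioo (0:ℝ) 1) :
    ∃ C > (0:ℝ), ∃ θ ∈ Set.Ioo (0:ℝ) 1,
      ∀ L : ℝ, 0 < L → L ≤ 1 →
        ∀ E : Set ℝ, MeasurableSet E →
          ENNReal.ofReal (η * L) ≤ volume (E ∩ Set.Ioo 0 L) →
          ∀ v ∈ D,
            ‖S L v‖ ≤
              (C * Real.exp (C / L ^ k) *
                  ∫ t in (0:ℝ)..L, E.indicator (fun t => ‖B (S t v)‖) t) ^ θ
                * ‖v‖ ^ (1 - θ) := by
  obtain ⟨hη0, hη1⟩ := hη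
  have hexp : 1 < Real.exp 1 := by simp
  have hexpα : 1 ≤ Real.exp α := Real.one_le_exp hα
  obtain ⟨C₁, hC₁⟩ : ∃ C₁ : ℝ, C₁ = 4 * Real.exp 1 / (η/2) := ⟨_, rfl⟩
  have hC1 : 1 < C₁ := by rw [hC₁, lt_div_iff₀ (by linarith)]; linarith
  obtain ⟨N, hN⟩ := exists_nat_gt (8 * Real.exp 1 * C₀ * C₁ / η)
  have hN0 : (0:ℝ) < N := lt_of_le_of_lt (by positivity) hN
  obtain ⟨c, hc⟩ : ∃ c : ℝ, c = (1 - η/2) / N := ⟨_, rfl⟩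
  have hc0 : 0 < c := by rw [hc]; exact div_pos (by linarith) hN0
  have hN1 : (1:ℝ) ≤ N := by
    have : 0 < N := by exact_mod_cast hN0
    exact_mod_cast this
  have hc1 : c ≤ 1 := by rw [hc, div_le_one hN0]; linarith
  obtain ⟨q, hq⟩ : ∃ q : ℝ, q = 2 * Real.exp 1 * C₀ * c / (η/2) := ⟨_, rfl⟩
  have hq0 : 0 ≤ q := by rw [hq]; positivity
  have hCq : C₁ * q ≤ 1/2 := by
    rw [div_lt_iff₀ hη0] at hN
    have h1 : c * N ≤ 1 := by rw [hc, div_mul_cancel₀ _ hN0.ne']; linarith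
    have h2 : 8 * Real.exp 1 * C₀ * C₁ * c ≤ η := by
      calc _ ≤ N * η * c := by gcongr
        _ = (c * N) * η := by ring
        _ ≤ 1 * η := by gcongr
        _ = η := one_mul _
    rw [hq, mul_div_assoc', div_le_iff₀ (by positivity)]
    linarith
  obtain ⟨θ, hθ⟩ : ∃ θ : ℝ, θ = Real.log 2 / Real.log (2*C₁) := ⟨_, rfl⟩
  have hl2 : 0 < Real.log 2 := Real.log_pos (by norm_num)
  have hl : Real.log 2 < Real.log (2*C₁) := Real.log_lt_log (by norm_num) (by linarith)
  have hθ0 : 0 < θ := by rw [hθ]; exact div_pos hl2 (hl2.trans hl)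
  have hθ1 : θ < 1 := by rw [hθ]; exact (div_lt_one (hl2.trans hl)).2 hl
  obtain ⟨Kc, hKc⟩ : ∃ Kc : ℝ, Kc = 2 * b * (Real.exp 1 * C₀ / (η/2)) * (M * Real.exp α) := ⟨_, rfl⟩
  have hKc0 : 0 < Kc := by rw [hKc]; positivity
  obtain ⟨Kd, hKd⟩ : ∃ Kd : ℝ, Kd = 2 / (η / 2 * c) := ⟨_, rfl⟩
  have hKd0 : 0 < Kd := by rw [hKd]; positivity
  obtain ⟨A₁, hA₁⟩ : ∃ A₁ : ℝ, A₁ = M * Real.exp α * 6 * Kc^(1-θ) * Kd^θ := ⟨_, rfl⟩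
  have hA₁0 : 0 < A₁ := by rw [hA₁]; positivity
  obtain ⟨D₁, hD₁⟩ : ∃ D₁ : ℝ, D₁ = d / c^k + 1/k := ⟨_, rfl⟩
  have hD₁0 : 0 < D₁ := by rw [hD₁]; positivity
  refine ⟨A₁^(1/θ) + D₁/θ, by positivity, θ, ⟨hθ0, hθ1⟩, ?_⟩
  intro L hL hL1 E hE hEv v hv
  set f : ℕ → ℝ → U := fun m t => B (iteratedDeriv m (fun s => S s v) t) with hf
  have hf00 : ∀ t, f 0 t = B (S t v) := fun t => by simp [hf]
  have hder : ∀ m t, 0 < t → HasDerivAt (f m) (f (m+1) t) t := fun m t ht =>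
    deriv_B (fun s => S s v) (hSsmooth v) D A B (hD v) (hA v) b hB m t ht
  have hint : IntegrableOn (fun t => ‖B (S t v)‖) (Ioc 0 L) := by
    refine integ (fun t => S t v) (fun t => B (S t v)) ?_ ?_ (fun L => Real.exp (d / L ^ k))
      (fun L h1 h2 => hobs L h1 h2 v hv) L hL hL1
    · intro t ht
      have := (hder 0 t ht).continuousAt
      exact (this.congr (Filter.Eventually.of_forall hf00)).continuousWithinAt
    · intro t ht
      change S t v = 0 at ht
      simp [ht]
  obtain ⟨ε, hε⟩ : ∃ ε, ε = ∫ t in (0:ℝ)..L, E.indicator (fun t => ‖B (S t v)‖) t := ⟨_, rfl⟩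
  rw [← hε]
  rw [intervalIntegral.integral_of_le hL.le, setIntegral_indicator hE] at hε
  have hε0 : 0 ≤ ε := by rw [hε]; exact integral_nonneg fun _ => norm_nonneg _
  obtain ⟨r, hr⟩ : ∃ r, r = c * L := ⟨_, rfl⟩
  have hr0 : 0 < r := by rw [hr]; positivity
  have hr1 : r ≤ 1 := by rw [hr]; nlinarith
  obtain ⟨a₀, ha₀⟩ : ∃ a₀, a₀ = η/2 * L := ⟨_, rfl⟩
  have ha₀0 : 0 < a₀ := by rw [ha₀]; positivity
  have ha₀1 : a₀ ≤ 1 := by rw [ha₀]; nlinarith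
  have hNr : a₀ + N * r = L := by rw [ha₀, hr, hc]; field_simp; ring
  have hEv2 : ENNReal.ofReal (η/2 * L) ≤ volume (E ∩ Icc a₀ (a₀ + N * r)) := by
    have hsub : E ∩ Ioo 0 L ⊆ Icc 0 a₀ ∪ (E ∩ Icc a₀ (a₀ + N * r)) := by
      rintro x ⟨hx, hx1, hx2⟩
      rcases le_total x a₀ with h | h
      · exact Or.inl ⟨hx1.le, h⟩
      · exact Or.inr ⟨hx, h, by rw [hNr]; exact hx2.le⟩
    have h1 := (hEv.trans (measure_mono hsub)).trans (measure_union_le _ _)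
    rw [Real.volume_Icc, sub_zero, show η * L = a₀ + η/2*L by rw [ha₀]; ring,
      ENNReal.ofReal_add ha₀0.le (by positivity)] at h1
    exact (ENNReal.add_le_add_iff_left ENNReal.ofReal_ne_top).1 h1
  obtain ⟨j, hjN, hj⟩ := pigeon N (by exact_mod_cast hN0) E a₀ r (η/2*L) hr0 (by positivity) hEv2
  obtain ⟨a, ha⟩ : ∃ a, a = a₀ + j * r := ⟨_, rfl⟩
  rw [← ha] at hj
  have haa₀ : a₀ ≤ a := by rw [ha]; have : 0 ≤ j * r := by positivity
                           linarith
  have haL : a + r ≤ L := by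
    rw [ha, ← hNr]
    have : (j:ℝ) + 1 ≤ N := by exact_mod_cast hjN
    nlinarith
  have ha0 : 0 < a := ha₀0.trans_le haa₀
  obtain ⟨K, hK⟩ : ∃ K, K = Kc * ‖v‖ / L := ⟨_, rfl⟩
  have hK0 : 0 ≤ K := by rw [hK]; positivity
  have hKeq : K = 2 * b * (Real.exp 1 * C₀ / a₀) * (M * Real.exp α) * ‖v‖ := by
    rw [hK, hKc, ha₀]; field_simp
  have hqeq : q = 2 * Real.exp 1 * C₀ * r / a₀ := by
    rw [hq, hr, ha₀]; field_simp
  have hM1 : 1 ≤ M * Real.exp α := one_le_mul_of_one_le_of_one_le hM hexpα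
  have hCa : 1 ≤ C₀ / a₀ := by rw [le_div_iff₀ ha₀0]; linarith
  have hu : ∀ m : ℕ, 1 ≤ m → ∀ t ∈ Icc a (a+r), ‖iteratedDeriv m (fun s => S s v) t‖ ≤ (C₀ * m / a₀)^m * ‖v‖ := by
    intro m hm t ht
    refine (hSderiv v m t hm (ha0.trans_le ht.1) (ht.2.trans (haL.trans hL1))).trans ?_
    have := haa₀.trans ht.1
    have ht0 : 0 < t := ha₀0.trans_le this
    gcongr
  have hSb : ∀ t, 0 ≤ t → t ≤ 1 → ∀ x, ‖S t x‖ ≤ M * Real.exp α * ‖x‖ := by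
    intro t h0 h1 x
    refine (hSbound t h0 x).trans ?_
    have := mul_le_of_le_one_right hα h1
    gcongr
  have hBf : ∀ m t, 0 < t → ‖f m t‖ ≤ b * (‖iteratedDeriv (m+1) (fun s => S s v) t‖ + ‖iteratedDeriv m (fun s => S s v) t‖) := by
    intro m t ht
    have := hB _ (hD v m t ht)
    rwa [hA v m t ht] at this
  have hx := fun t ht => local_est f a r (η/2) q K ε C₁ hr0 (by linarith) (by linarith) hq0 hK0 hC₁ hCq
    (fun m t ht => hder m t (ha0.trans_le ht.1))
    (by
      intro t ht
      refine (hBf 0 t (ha0.trans_le ht.1)).trans ?_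
      have h1 := hu 1 le_rfl t ht
      have h2 := hSb t (ha0.trans_le ht.1).le (ht.2.trans (haL.trans hL1)) v
      simp only [iteratedDeriv_zero, zero_add]
      simp only [pow_one, Nat.cast_one, mul_one] at h1
      have h3 : C₀ / a₀ ≤ Real.exp 1 * C₀ / a₀ * (M * Real.exp α) := by
        rw [mul_div_assoc, mul_comm (Real.exp 1), mul_assoc]
        exact le_mul_of_one_le_right (by positivity) (one_le_mul_of_one_le_of_one_le hexp.le hM1)
      have h4 : M * Real.exp α ≤ Real.exp 1 * C₀ / a₀ * (M * Real.exp α) := by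
        rw [mul_div_assoc]
        exact le_mul_of_one_le_left (by positivity) (one_le_mul_of_one_le_of_one_le hexp.le hCa)
      calc _ ≤ b * (C₀ / a₀ * ‖v‖ + M * Real.exp α * ‖v‖) := by gcongr
        _ ≤ b * (Real.exp 1 * C₀ / a₀ * (M * Real.exp α) * ‖v‖ + Real.exp 1 * C₀ / a₀ * (M * Real.exp α) * ‖v‖) := by gcongr
        _ = K := by rw [hKeq]; ring)
    (by
      intro n t ht
      have h0 := hBf (n+1) t (ha0.trans_le ht.1)
      have h1 := hu (n+1+1) (by omega) t ht
      have h2 := hu (n+1) (by omega) t ht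
      have h3 : (C₀ * (n+1:ℕ) / a₀)^(n+1) ≤ (C₀ * (n+1+1:ℕ) / a₀)^(n+1+1) := by
        have hle : C₀ * (n+1:ℕ) / a₀ ≤ C₀ * (n+1+1:ℕ) / a₀ := by gcongr; omega
        have h1le : 1 ≤ C₀ * (n+1+1:ℕ) / a₀ := by
          rw [mul_div_right_comm]
          exact one_le_mul_of_one_le_of_one_le hCa (by push_cast; linarith [(Nat.cast_nonneg n : (0:ℝ) ≤ n)])
        exact (pow_le_pow_left₀ (by positivity) hle _).trans (pow_le_pow_right₀ h1le (by omega))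
      have h4 := fact_bd n
      have h5 : (C₀ * (n+1+1:ℕ) / a₀)^(n+1+1) ≤ (C₀/a₀)^(n+2) * ((Real.exp 1)^(n+2) * 2^(n+1) * (n+1).factorial) := by
        rw [mul_div_right_comm, mul_pow]
        gcongr
      rw [div_le_iff₀ (by positivity)]
      calc _ ≤ b * ((C₀/a₀)^(n+2) * ((Real.exp 1)^(n+2) * 2^(n+1) * (n+1).factorial) * ‖v‖ + (C₀/a₀)^(n+2) * ((Real.exp 1)^(n+2) * 2^(n+1) * (n+1).factorial) * ‖v‖) * r^(n+1) := by
            gcongr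
            refine h0.trans ?_
            gcongr
            · exact h1.trans (by gcongr)
            · exact h2.trans (by gcongr; exact h3.trans h5)
        _ = 2 * b * (Real.exp 1 * C₀ / a₀) * 1 * ‖v‖ * (2 * Real.exp 1 * C₀ * r / a₀)^(n+1) * (n+1).factorial := by
            simp only [div_pow, mul_pow]; field_simp; ring
        _ ≤ _ := by rw [hKeq, hqeq]; gcongr)
    (E ∩ Icc a (a+r)) (hE.inter measurableSet_Icc) inter_subset_right
    (by
      refine le_trans (ENNReal.ofReal_le_ofReal ?_) hj
      rw [hr, hc, le_div_iff₀ hN0]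
      field_simp
      nlinarith)
    (by
      simp only [hf00]
      rw [hε]
      refine setIntegral_mono_set (hint.mono_set inter_subset_left) (Filter.Eventually.of_forall fun _ => norm_nonneg _) (Filter.Eventually.of_forall ?_)
      rintro x ⟨hxE, hx1, hx2⟩
      exact ⟨⟨ha0.trans_le hx1, hx2.trans haL⟩, hxE⟩) t ht
  rw [← hθ] at hx
  obtain ⟨y, hy⟩ : ∃ y, y = 6 * K ^ (1 - θ) * (2*ε/(η/2*r)) ^ θ := ⟨_, rfl⟩
  rw [← hy] at hx
  have hy0 : 0 ≤ y := by rw [hy]; positivity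
  have hSav : S a v ∈ D := by simpa using hD v 0 a ha0
  have hob := hobs r hr0 hr1 _ hSav
  have hI : ∫ t in (0:ℝ)..r, ‖B (S t (S a v))‖^2 ≤ y^2 := by
    have h1 : ‖∫ t in (0:ℝ)..r, ‖B (S t (S a v))‖^2‖ ≤ y^2 * |r - 0| := by
      apply intervalIntegral.norm_integral_le_of_norm_le_const
      intro t ht
      rw [uIoc_of_le hr0.le] at ht
      have h2 := hx (t + a) ⟨by linarith [ht.1], by linarith [ht.2]⟩
      rw [hf00, hSsemi t a ht.1.le ha0.le] at h2
      rw [norm_pow, norm_norm]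
      exact pow_le_pow_left₀ (norm_nonneg _) h2 2
    rw [sub_zero, abs_of_pos hr0] at h1
    exact (le_abs_self _).trans (h1.trans (mul_le_of_le_one_right (by positivity) hr1))
  have hSr : ‖S r (S a v)‖ ≤ Real.exp (d / r^k) * y := by
    refine (sq_le_sq₀ (norm_nonneg _) (by positivity)).1 ?_
    have h1 : 1 ≤ Real.exp (d / r^k) := Real.one_le_exp (by positivity)
    calc _ ≤ Real.exp (d / r^k) * y^2 := hob.trans (by gcongr)
      _ ≤ Real.exp (d / r^k) * (Real.exp (d / r^k) * y^2) := by
        gcongr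
        exact le_mul_of_one_le_left (by positivity) h1
      _ = _ := by ring
  have hfin1 : ‖S L v‖ ≤ M * Real.exp α * (Real.exp (d / r^k) * y) := by
    have h1 : S L v = S (L - (r + a)) (S r (S a v)) := by
      have e1 : S (r + a) v = S r (S a v) := by rw [hSsemi r a hr0.le ha0.le]; rfl
      rw [← e1, ← ContinuousLinearMap.comp_apply, ← hSsemi _ _ (by linarith) (by linarith)]
      congr 2; ring
    rw [h1]
    refine (hSb _ (by linarith) (by linarith) _).trans ?_
    gcongr
  refine hfin1.trans (le_trans ?_ (fin_alg A₁ D₁ k θ L ε ‖v‖ hA₁0 hD₁0 hθ0 hL hε0 (norm_nonneg _)))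
  have hyeq : y = 6 * Kc^(1-θ) * Kd^θ * (1/L) * ε^θ * ‖v‖^(1-θ) := by
    have h1 : 2*ε/(η/2*r) = Kd * ε / L := by rw [hKd, hr]; field_simp
    rw [hy, h1, hK, Real.div_rpow (by positivity) hL.le, Real.div_rpow (by positivity) hL.le,
      Real.mul_rpow hKc0.le (norm_nonneg _), Real.mul_rpow hKd0.le hε0, Real.rpow_sub hL, Real.rpow_one]
    field_simp
  have hrk : d / r^k = d / c^k / L^k := by rw [hr, Real.mul_rpow hc0.le hL.le, div_div]
  have hi := inv_le_exp L k hL hk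
  rw [hyeq, hrk, hA₁, hD₁, add_div, Real.exp_add]
  calc _ = M * Real.exp α * 6 * Kc^(1-θ) * Kd^θ * (Real.exp (d / c^k / L^k) * (1/L)) * ε^θ * ‖v‖^(1-θ) := by ring
    _ ≤ _ := by gcongr

/-- **Interpolation inequality on a short time interval from a measurable set.**
Assuming the observability inequality from time intervals, for each `η ∈ (0,1)` there
exist `C > 0` and `θ ∈ (0,1)` such that for all `0 ≤ t₁ < t₂` with `t₂ - t₁ ≤ 1` and every
measurable `E ⊆ [t₁,t₂]` with `|E ∩ (t₁,t₂)| ≥ η (t₂ - t₁)`, every `u₀ ∈ D` satisfies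
`‖u(t₂)‖ ≤ (C e^{C/(t₂-t₁)^k} ∫_{t₁}^{t₂} χ_E ‖B u(t)‖ dt)^θ ‖u(t₁)‖^{1-θ}`. -/
theorem interpolation_inequality_from_measurable_sets
    {X U : Type*}
    [NormedAddCommGroup X] [InnerProductSpace ℝ X] [CompleteSpace X]
    [NormedAddCommGroup U] [InnerProductSpace ℝ U] [CompleteSpace U]
    (S : ℝ → X →L[ℝ] X)
    (hS0 : S 0 = ContinuousLinearMap.id ℝ X)
    (hSsemi : ∀ t s : ℝ, 0 ≤ t → 0 ≤ s → S (t + s) = (S t).comp (S s))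
    (hScont : ∀ x : X, ContinuousOn (fun t => S t x) (Set.Ici 0))
    (M α : ℝ) (hM : 1 ≤ M) (hα : 0 ≤ α)
    (hSbound : ∀ t : ℝ, 0 ≤ t → ∀ x : X, ‖S t x‖ ≤ M * Real.exp (α * t) * ‖x‖)
    (hSsmooth : ∀ x : X, ContDiffOn ℝ (⊤ : ℕ∞) (fun s => S s x) (Set.Ioi 0))
    (C₀ : ℝ) (hC₀ : 1 ≤ C₀)
    (hSderiv : ∀ (x : X) (m : ℕ) (t : ℝ), 1 ≤ m → 0 < t → t ≤ 1 →
      ‖iteratedDeriv m (fun s => S s x) t‖ ≤ (C₀ * m / t) ^ m * ‖x‖)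
    (D : Submodule ℝ X) (A : X →ₗ[ℝ] X) (B : X →ₗ[ℝ] U)
    (hD : ∀ (x : X) (m : ℕ) (t : ℝ), 0 < t → iteratedDeriv m (fun s => S s x) t ∈ D)
    (hA : ∀ (x : X) (m : ℕ) (t : ℝ), 0 < t →
      A (iteratedDeriv m (fun s => S s x) t) = iteratedDeriv (m + 1) (fun s => S s x) t)
    (b : ℝ) (hb : 0 < b)
    (hB : ∀ v ∈ D, ‖B v‖ ≤ b * (‖A v‖ + ‖v‖))
    -- observability inequality from time intervals
    (d k : ℝ) (hd : 0 < d) (hk : 0 < k)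
    (hobs : ∀ L : ℝ, 0 < L → L ≤ 1 → ∀ u₀ ∈ D,
      ‖S L u₀‖ ^ 2 ≤ Real.exp (d / L ^ k) * ∫ t in (0:ℝ)..L, ‖B (S t u₀)‖ ^ 2)
    (η : ℝ) (hη : η ∈ Set.Ioo (0:ℝ) 1) :
    ∃ C > (0:ℝ), ∃ θ ∈ Set.Ioo (0:ℝ) 1,
      ∀ t₁ t₂ : ℝ, 0 ≤ t₁ → t₁ < t₂ → t₂ - t₁ ≤ 1 →
        ∀ E : Set ℝ, MeasurableSet E → E ⊆ Set.Icc t₁ t₂ →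
          ENNReal.ofReal (η * (t₂ - t₁)) ≤ volume (E ∩ Set.Ioo t₁ t₂) →
          ∀ u₀ ∈ D,
            ‖S t₂ u₀‖ ≤
              (C * Real.exp (C / (t₂ - t₁) ^ k) *
                  ∫ t in t₁..t₂, E.indicator (fun t => ‖B (S t u₀)‖) t) ^ θ
                * ‖S t₁ u₀‖ ^ (1 - θ) := by
  obtain ⟨C, hC, θ, hθ, h⟩ := core S hSsemi M α hM hα hSbound hSsmooth C₀ hC₀ hSderiv D A B hD hA b hb hB
    d k hd hk hobs η hη
  refine ⟨C, hC, θ, hθ, ?_⟩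
  intro t₁ t₂ ht₁ ht₁₂ ht E hE _ hEv u₀ hu₀
  have hL : 0 < t₂ - t₁ := by linarith
  have hv : S t₁ u₀ ∈ D := by
    rcases ht₁.eq_or_lt with rfl | h0
    · rw [hS0]; exact hu₀
    · simpa using hD u₀ 0 t₁ h0
  have hvol : volume (((fun x => x + t₁) ⁻¹' E) ∩ Ioo 0 (t₂ - t₁)) = volume (E ∩ Ioo t₁ t₂) := by
    rw [← measure_preimage_add_right volume t₁ (E ∩ Ioo t₁ t₂), preimage_inter]
    congr 2
    ext x
    simp only [mem_Ioo, mem_preimage]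
    constructor <;> rintro ⟨h1, h2⟩ <;> constructor <;> linarith
  have key := h (t₂ - t₁) hL ht ((fun x => x + t₁) ⁻¹' E) (hE.preimage (measurable_add_const t₁))
    (by rw [hvol]; exact hEv) (S t₁ u₀) hv
  have e1 : S (t₂ - t₁) (S t₁ u₀) = S t₂ u₀ := by
    rw [← ContinuousLinearMap.comp_apply, ← hSsemi _ _ hL.le ht₁, sub_add_cancel]
  have e2 : ∫ t in (0:ℝ)..(t₂ - t₁), ((fun x => x + t₁) ⁻¹' E).indicator (fun t => ‖B (S t (S t₁ u₀))‖) t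
      = ∫ t in t₁..t₂, E.indicator (fun t => ‖B (S t u₀)‖) t := by
    have := intervalIntegral.integral_comp_add_right (a := 0) (b := t₂ - t₁)
      (fun t => E.indicator (fun t => ‖B (S t u₀)‖) t) t₁
    rw [zero_add, sub_add_cancel] at this
    rw [← this]
    apply intervalIntegral.integral_congr
    intro t ht'
    rw [uIcc_of_le hL.le] at ht'
    have e3 : S (t + t₁) u₀ = S t (S t₁ u₀) := by rw [hSsemi _ _ ht'.1 ht₁]; rfl
    by_cases hm : t + t₁ ∈ E
    · have hm' : t ∈ (fun x => x + t₁) ⁻¹' E := hm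
      simp only [indicator_of_mem hm, indicator_of_mem hm', e3]
    · have hm' : t ∉ (fun x => x + t₁) ⁻¹' E := hm
      simp only [indicator_of_notMem hm, indicator_of_notMem hm']
  rw [e1, e2] at key
  exact key
end
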